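/- arXiv:2210.11868 — 3 statements merged into one kernel-verified Lean document; each statement's English description precedes it below -/
import Mathlib

section
/- Let d ≥ 3 and let ψ be a d-monotone Archimedean generator with pseudo-inverse φ, and let C = C_ψ be the induced d-dimensional Archimedean copula. Then the function K_C defined in the context is a (d−1)-Markov kernel of C; more precisely: (i) for every fixed x ∈ [0,1]^{d−1} the map y ↦ K_C(x,[0,y]) is non-decreasing, right-continuous and satisfies K_C(x,[0,1]) = 1, hence is the distribution function of a Borel probability measure K_C(x,·) on [0,1]; (ii) for every fixed y ∈ [0,1] the map x ↦ K_C(x,[0,y]) is Borel measurable; and (iii) the disintegration identity ψ(∑_{i=1}^{d−1} φ(x_i) + φ(y)) = ∫_{(0,x_1]×⋯×(0,x_{d−1}]} K_C(s,[0,y]) · c^{1:d−1}(s) dλ_{d−1}(s) holds for all x ∈ [0,1]^{d−1} and all y ∈ [0,1], where λ_{d−1} is Lebesgue measure on [0,1]^{d−1}. -/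
/-!
The kernel property rests on the signed derivatives `g_k = (-1)^k ψ⁽ᵏ⁾` for `k ≤ d-2`, completed by
`g_{d-1} = (-1)^(d-1) D⁻ψ^(d-2)`. All of them are non-negative and non-increasing on `(0,∞)`
(`genFamily_isMonotoneFamily`). The hypothesis gives the signs only for `k = d-2`; they descend
because a derivative bounded away from `0` near infinity would make `ψ` unbounded
(`genFamily_not_eventually`). They also tend to `0` at infinity, so that
`∫_{(a,∞)} g_{k+1}(u+t) du = g_k(a+t)` (`lintegral_Ioi_of_hasLeftDeriv`,
`IsMonotoneFamily.lintegral_shift`). No differentiability of `g_{d-2}` beyond its left derivative is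
needed.

The pseudo-inverse is handled through `φ(y) ≤ z ↔ ψ(z) ≤ y` (`IsGenerator.pseudoInv_le_iff`). The
substitution `u = φ(s)` turns the integral identity above into
`∫_{(0,x]} |φ'(s)| g_{k+1}(φ(s)+t) ds = g_k(φ(x)+t)` (`lintegral_invWeight`), and Tonelli iterates it
to all `d-1` coordinates (`lintegral_pi_invWeight`), descending from `g_{d-1}` to `g_0 = ψ`. Kernel
times density equals `∏ |φ'(sᵢ)| · g_{d-1}(∑ φ(sᵢ) + φ(y))` (`kernel_mul_density`), which gives the
disintegration. For `y = 1` the hyperplane `∑ φ(sᵢ) = φ(0)` needs attention, as the density is `0`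
there while `g_{d-1}(φ(0))` may be positive; `famExt` is therefore allowed to vanish at that point.

Off the trivial cases the kernel is the quotient `g_{d-1}(∑ φ(xᵢ) + φ(y)) / g_{d-1}(∑ φ(xᵢ))`
(`markovKernel_eq`). Monotonicity and left-continuity of `g_{d-1}`, together with `φ` decreasing and
continuous, make it a distribution function in `y`, hence that of a Stieltjes measure. Measurability
in `x` follows from measurability of one-sided derivatives.
-/

open MeasureTheory Set Filter Topology
open scoped ENNReal NNReal Classical

noncomputable section

/-- Extension of a generator `ψ` to `[0,∞]` with the convention `ψ(∞) := 0`. -/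
def psiExt (ψ : ℝ → ℝ) (z : ℝ≥0∞) : ℝ := if z = ∞ then 0 else ψ z.toReal

/-- The pseudo-inverse `φ(y) = inf {z ∈ [0,∞] : ψ(z) = y}` of a generator. -/
def pseudoInv (ψ : ℝ → ℝ) (y : ℝ) : ℝ≥0∞ := sInf {z : ℝ≥0∞ | psiExt ψ z = y}

/-- An Archimedean generator: `ψ : [0,∞) → [0,1]` is continuous, non-increasing,
satisfies `ψ 0 = 1` and `ψ(z) → 0` as `z → ∞`, and is strictly decreasing on
`[0, inf {z ∈ [0,∞] : ψ z = 0}]`. -/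
structure IsGenerator (ψ : ℝ → ℝ) : Prop where
  continuousOn : ContinuousOn ψ (Ici 0)
  mem_Icc : ∀ z : ℝ, 0 ≤ z → ψ z ∈ Icc (0 : ℝ) 1
  map_zero : ψ 0 = 1
  tendsto_atTop : Tendsto ψ atTop (𝓝 0)
  antitoneOn : AntitoneOn ψ (Ici 0)
  strictAnti : ∀ ⦃x y : ℝ⦄, 0 ≤ x → x < y → ENNReal.ofReal y ≤ pseudoInv ψ 0 → ψ y < ψ x

/-- The left-hand derivative `D⁻f`. -/
def leftDeriv (f : ℝ → ℝ) (z : ℝ) : ℝ := derivWithin f (Iio z) z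

/-- The right-hand derivative `D⁺f`. -/
def rightDeriv (f : ℝ → ℝ) (z : ℝ) : ℝ := derivWithin f (Ioi z) z

/-- A `d`-monotone Archimedean generator: the derivatives `ψ⁽ᵏ⁾` exist on `(0,∞)` for
`k = 1,…,d-2`, and `(-1)^(d-2) · ψ^(d-2)` is non-negative, non-increasing and convex
on `(0,∞)`. -/
structure IsdMonotoneGenerator (d : ℕ) (ψ : ℝ → ℝ) : Prop where
  toIsGenerator : IsGenerator ψ
  differentiable : ∀ k : ℕ, k < d - 2 → ∀ z : ℝ, 0 < z → DifferentiableAt ℝ (deriv^[k] ψ) z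
  nonneg : ∀ z : ℝ, 0 < z → 0 ≤ (-1 : ℝ) ^ (d - 2) * deriv^[d - 2] ψ z
  antitoneOn : AntitoneOn (fun z => (-1 : ℝ) ^ (d - 2) * deriv^[d - 2] ψ z) (Ioi 0)
  convexOn : ConvexOn ℝ (Ioi 0) (fun z => (-1 : ℝ) ^ (d - 2) * deriv^[d - 2] ψ z)

/-- The `d`-dimensional Archimedean copula generated by `ψ`:
`C_ψ(x) = ψ(φ(x₁) + ⋯ + φ(x_d))` (with `ψ(∞) := 0`). -/
def archCopula (d : ℕ) (ψ : ℝ → ℝ) (x : Fin d → ℝ) : ℝ :=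
  psiExt ψ (∑ i, pseudoInv ψ (x i))

/-- A generator is strict if `ψ(z) > 0` for all `z ≥ 0`. -/
def IsStrictGenerator (ψ : ℝ → ℝ) : Prop := ∀ z : ℝ, 0 ≤ z → 0 < ψ z

/-- The level set `L_t = {x ∈ [0,1]^d : C_ψ(x) = t}`. -/
def levelSet (d : ℕ) (ψ : ℝ → ℝ) (t : ℝ) : Set (Fin d → ℝ) :=
  {x | (∀ i, x i ∈ Icc (0 : ℝ) 1) ∧ archCopula d ψ x = t}

/-- The zero set `L₀^{1:d-1} = {x ∈ [0,1]^{d-1} : φ(x₁)+⋯+φ(x_{d-1}) ≥ φ(0)}`. -/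
def zeroMarg (d : ℕ) (ψ : ℝ → ℝ) : Set (Fin (d - 1) → ℝ) :=
  {x | pseudoInv ψ 0 ≤ ∑ i, pseudoInv ψ (x i)}

/-- `f⁰(x)`: equals `1` on `L₀^{1:d-1}` and `ψ(φ(0) - ∑ φ(xᵢ))` otherwise. -/
def fZero (d : ℕ) (ψ : ℝ → ℝ) (x : Fin (d - 1) → ℝ) : ℝ :=
  if pseudoInv ψ 0 ≤ ∑ i, pseudoInv ψ (x i) then 1
  else psiExt ψ (pseudoInv ψ 0 - ∑ i, pseudoInv ψ (x i))

/-- Extension of `D⁻ψ^(d-2)` to `[0,∞]` with value `0` at `∞`. -/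
def DpsiExt (d : ℕ) (ψ : ℝ → ℝ) (z : ℝ≥0∞) : ℝ :=
  if z = ∞ then 0 else leftDeriv (deriv^[d - 2] ψ) z.toReal

/-- The `(d-1)`-Markov kernel `K_C(x,[0,y])` of the Archimedean copula `C_ψ`. -/
def markovKernel (d : ℕ) (ψ : ℝ → ℝ) (x : Fin (d - 1) → ℝ) (y : ℝ) : ℝ :=
  if (∀ i, x i = 1) ∨ x ∈ zeroMarg d ψ then 1
  else if y < fZero d ψ x then 0
  else DpsiExt d ψ ((∑ i, pseudoInv ψ (x i)) + pseudoInv ψ y)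
      / DpsiExt d ψ (∑ i, pseudoInv ψ (x i))

/-- The `(d-1)`-marginal density `c^{1:d-1}` of the Archimedean copula `C_ψ`:
`c(x) = ∏ φ'(xᵢ) · D⁻ψ^(d-2)(∑ φ(xᵢ))` for `x ∈ (0,1)^{d-1}` with `∑ φ(xᵢ) < φ(0)`,
and `0` otherwise. -/
def margDensity (d : ℕ) (ψ : ℝ → ℝ) (x : Fin (d - 1) → ℝ) : ℝ :=
  if (∀ i, x i ∈ Ioo (0 : ℝ) 1) ∧ (∑ i, pseudoInv ψ (x i)) < pseudoInv ψ 0 then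
    (∏ i, deriv (fun y => (pseudoInv ψ y).toReal) (x i)) *
      leftDeriv (deriv^[d - 2] ψ) (∑ i, pseudoInv ψ (x i)).toReal
  else 0

/-! ### Families of iterated left derivatives -/

/-- Fundamental theorem of calculus on `(a,∞)` for a continuous function that tends to `0` and has
only a left derivative `-p ≤ 0` at each point; integrability of `p` comes for free from the sign. -/
lemma lintegral_Ioi_of_hasLeftDeriv {f p : ℝ → ℝ} {a : ℝ} (hf : ContinuousOn f (Ici a))
    (hd : ∀ z, a < z → HasDerivWithinAt f (-(p z)) (Iio z) z) (hp : ∀ z, a < z → 0 ≤ p z)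
    (hlim : Tendsto f atTop (𝓝 0)) :
    ∫⁻ u in Ioi a, ENNReal.ofReal (p u) = ENNReal.ofReal (f a) := by
  -- reflecting `u ↦ -u` turns left derivatives into right derivatives
  have hfr : ∀ b, ContinuousOn (fun x => f (-x)) (Icc (-b) (-a)) := fun b =>
    hf.comp continuous_neg.continuousOn (fun x hx => by simp only [mem_Ici]; linarith [hx.2])
  have hdr : ∀ b, ∀ x ∈ Ioo (-b) (-a),
      HasDerivWithinAt (fun x => f (-x)) (p (-x)) (Ioi x) x := by
    intro b x hx
    have h1 := hd (-x) (by linarith [hx.2])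
    have h2 : HasDerivWithinAt (fun x : ℝ => -x) (-1) (Ioi x) x := (hasDerivAt_neg x).hasDerivWithinAt
    have h3 := h1.scomp x h2 (fun y hy => by simp only [mem_Iio, mem_Ioi] at *; linarith)
    simpa [Function.comp_def] using h3
  have hir : ∀ b, a ≤ b → IntervalIntegrable (fun x => p (-x)) volume (-b) (-a) := by
    intro b hab
    rw [intervalIntegrable_iff_integrableOn_Ioc_of_le (by linarith)]
    exact intervalIntegral.integrableOn_deriv_right_of_nonneg (hfr b) (hdr b)
      (fun x hx => hp _ (by linarith [hx.2]))
  have hi : ∀ b, a ≤ b → IntervalIntegrable p volume a b := by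
    intro b hab
    have := (hir b hab).comp_sub_left 0
    simp only [zero_sub, neg_neg] at this
    exact this.symm
  have hint : ∀ b, a ≤ b → ∫ u in a..b, p u = f a - f b := by
    intro b hab
    have h := intervalIntegral.integral_eq_sub_of_hasDeriv_right_of_le (by linarith) (hfr b) (hdr b)
      (hir b hab)
    simpa using h
  have htend : Tendsto (fun b => ∫ u in a..b, p u) atTop (𝓝 (f a)) := by
    have : Tendsto (fun b => f a - f b) atTop (𝓝 (f a - 0)) := hlim.const_sub _
    rw [sub_zero] at this
    refine this.congr' ?_
    filter_upwards [eventually_ge_atTop a] with b hb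
    rw [hint b hb]
  have hI : IntegrableOn p (Ioi a) := by
    refine integrableOn_Ioi_of_intervalIntegral_norm_tendsto (f a) a (fun b => ?_) tendsto_id ?_
    · rcases le_total a b with hb | hb
      · exact (intervalIntegrable_iff_integrableOn_Ioc_of_le hb).1 (hi b hb)
      · simp [Ioc_eq_empty_of_le hb]
    · refine htend.congr' ?_
      filter_upwards [eventually_ge_atTop a] with b hb
      refine intervalIntegral.integral_congr_ae (Eventually.of_forall fun u hu => ?_)
      rw [uIoc_of_le hb] at hu
      rw [Real.norm_of_nonneg (hp u hu.1)]
  have heq : ∫ u in Ioi a, p u = f a :=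
    tendsto_nhds_unique (intervalIntegral_tendsto_integral_Ioi a hI tendsto_id) htend
  rw [← heq, ofReal_integral_eq_lintegral_ofReal hI]
  exact (ae_restrict_iff' measurableSet_Ioi).2 (Eventually.of_forall fun u hu => hp u hu)

/-- An abstraction of the functions `(-1)^k ψ⁽ᵏ⁾`, `k ≤ n`: each `g k` with `k < n` has left
derivative `-g (k+1)` on `(0,∞)`, all of them are non-negative and non-increasing there, and `g 0`
is continuous on `[0,∞)` with limit `0` at infinity. The top member `g n` is merely left-continuous,
because `(-1)^(d-1) D⁻ψ^(d-2)` may jump. -/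
structure IsMonotoneFamily (n : ℕ) (g : ℕ → ℝ → ℝ) : Prop where
  hasDeriv : ∀ k < n, ∀ z, 0 < z → HasDerivWithinAt (g k) (-(g (k + 1) z)) (Iio z) z
  nonneg : ∀ k ≤ n, ∀ z, 0 < z → 0 ≤ g k z
  anti : ∀ k ≤ n, AntitoneOn (g k) (Ioi 0)
  cont : ∀ k < n, ContinuousOn (g k) (Ioi 0)
  cont_zero : ContinuousOn (g 0) (Ici 0)
  lim_zero : Tendsto (g 0) atTop (𝓝 0)
  leftCont : ∀ z, 0 < z → ContinuousWithinAt (g n) (Iic z) z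

namespace IsMonotoneFamily

variable {n : ℕ} {g : ℕ → ℝ → ℝ}

/-- The case `t = 0` is restricted to `k = 0`, since `g k` with `k > 0` may blow up at `0`. -/
lemma lintegral_of_tendsto (hg : IsMonotoneFamily n g) {k : ℕ} (hk : k < n)
    (hlim : Tendsto (g k) atTop (𝓝 0)) {a t : ℝ} (ha : 0 ≤ a) (ht : 0 ≤ t) (h : k = 0 ∨ 0 < t) :
    ∫⁻ u in Ioi a, ENNReal.ofReal (g (k + 1) (u + t)) = ENNReal.ofReal (g k (a + t)) := by
  refine lintegral_Ioi_of_hasLeftDeriv (f := fun u => g k (u + t)) ?_ (fun z hz => ?_)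
    (fun z hz => hg.nonneg _ hk _ (by linarith)) (hlim.comp (tendsto_atTop_add_const_right _ _ tendsto_id))
  · have hc : Continuous fun u : ℝ => u + t := by fun_prop
    rcases h with rfl | h
    · exact hg.cont_zero.comp hc.continuousOn (fun u hu => by simp only [mem_Ici] at *; linarith)
    · exact (hg.cont k hk).comp hc.continuousOn
        (fun u hu => by simp only [mem_Ici, mem_Ioi] at *; linarith)
  · have h1 := hg.hasDeriv k hk (z + t) (by linarith)
    have h2 : HasDerivWithinAt (fun u : ℝ => u + t) 1 (Iio z) z :=
      ((hasDerivAt_id z).add_const t).hasDerivWithinAt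
    have h3 := h1.scomp z h2 (fun y hy => by simp only [mem_Iio] at *; linarith)
    simpa [Function.comp_def] using h3

lemma tendsto_zero (hg : IsMonotoneFamily n g) {k : ℕ} (hk : k ≤ n) :
    Tendsto (g k) atTop (𝓝 0) := by
  induction k with
  | zero => exact hg.lim_zero
  | succ k ih =>
    have ih := ih (by omega)
    -- `g (k+1) z ≤ ∫ g (k+1)` over `(z-1, z]`, which is at most `g k (z-1)`
    have key : ∀ z, 2 < z → g (k + 1) z ≤ g k (z - 1) := by
      intro z hz
      have h1 := hg.lintegral_of_tendsto (a := 0) (t := z - 1) hk ih le_rfl (by linarith)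
        (Or.inr (by linarith))
      have h2 : ENNReal.ofReal (g (k + 1) z) ≤
          ∫⁻ u in Ioi (0 : ℝ), ENNReal.ofReal (g (k + 1) (u + (z - 1))) := by
        calc ENNReal.ofReal (g (k + 1) z)
            = ∫⁻ u in Ioc (0 : ℝ) 1, ENNReal.ofReal (g (k + 1) z) := by simp
          _ ≤ ∫⁻ u in Ioc (0 : ℝ) 1, ENNReal.ofReal (g (k + 1) (u + (z - 1))) := by
            refine setLIntegral_mono' measurableSet_Ioc fun u hu => ENNReal.ofReal_le_ofReal ?_
            exact hg.anti _ hk (by simp only [mem_Ioi]; linarith [hu.1])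
              (by simp only [mem_Ioi]; linarith) (by linarith [hu.2])
          _ ≤ _ := lintegral_mono_set Ioc_subset_Ioi_self
      rw [h1, zero_add] at h2
      exact (ENNReal.ofReal_le_ofReal_iff (hg.nonneg _ (by omega) _ (by linarith))).1 h2
    refine tendsto_of_tendsto_of_tendsto_of_le_of_le' tendsto_const_nhds
      (ih.comp (tendsto_atTop_add_const_right _ (-1) tendsto_id)) ?_ ?_
    · filter_upwards [eventually_gt_atTop 0] with z hz using hg.nonneg _ hk _ hz
    · filter_upwards [eventually_gt_atTop 2] with z hz
      simpa [sub_eq_add_neg] using key z hz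

lemma lintegral_shift (hg : IsMonotoneFamily n g) {k : ℕ} (hk : k < n)
    {a t : ℝ} (ha : 0 ≤ a) (ht : 0 ≤ t) (h : k = 0 ∨ 0 < t) :
    ∫⁻ u in Ioi a, ENNReal.ofReal (g (k + 1) (u + t)) = ENNReal.ofReal (g k (a + t)) :=
  hg.lintegral_of_tendsto hk (hg.tendsto_zero hk.le) ha ht h

/-- A zero of some `g k` is a zero of `g 0`: past that point `g k` vanishes by monotonicity, and
integrating from infinity makes `g (k-1)`, …, `g 0` vanish too. -/
lemma zero_of_eq_zero (hg : IsMonotoneFamily n g) {k : ℕ} (hk : k ≤ n) {z : ℝ} (hz : 0 < z)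
    (h0 : g k z = 0) : g 0 z = 0 := by
  induction k with
  | zero => exact h0
  | succ k ih =>
    refine ih (by omega) ?_
    have h1 := hg.lintegral_shift (a := z / 2) (t := z / 2) hk (by linarith) (by linarith)
      (Or.inr (by linarith))
    have h2 : ∫⁻ u in Ioi (z / 2), ENNReal.ofReal (g (k + 1) (u + z / 2)) = 0 := by
      rw [setLIntegral_congr_fun (g := fun _ => 0) measurableSet_Ioi]
      · simp
      · intro u hu
        simp only [mem_Ioi] at hu
        refine ENNReal.ofReal_eq_zero.2 ?_
        rw [← h0]
        exact hg.anti _ hk hz (by simp only [mem_Ioi]; linarith) (by linarith)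
    rw [h2, add_halves] at h1
    exact le_antisymm (ENNReal.ofReal_eq_zero.1 h1.symm) (hg.nonneg _ (by omega) _ hz)

/-- Past a zero of `g 0` every member vanishes; at the zero itself `g n` may still be positive,
being a left derivative. -/
lemma eq_zero_of_lt (hg : IsMonotoneFamily n g) {k : ℕ} (hk : k ≤ n) {z w : ℝ} (hz : 0 < z)
    (h0 : g 0 z = 0) (hzw : z < w) : g k w = 0 := by
  induction k generalizing w with
  | zero =>
    exact le_antisymm (h0 ▸ hg.anti 0 hk hz (hz.trans hzw) hzw.le) (hg.nonneg _ hk _ (hz.trans hzw))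
  | succ k ih =>
    have h1 := hg.hasDeriv k hk w (hz.trans hzw)
    have h2 : HasDerivWithinAt (g k) 0 (Iio w) w := by
      refine (hasDerivWithinAt_const w (Iio w) (0 : ℝ)).congr_of_eventuallyEq ?_
        (ih (by omega) hzw)
      filter_upwards [mem_nhdsWithin_of_mem_nhds (Ioi_mem_nhds hzw)] with v hv
      exact ih (by omega) hv
    have := (uniqueDiffWithinAt_Iio w).eq_deriv _ h1 h2
    linarith

lemma eq_zero_of_le (hg : IsMonotoneFamily n g) {k : ℕ} (hk : k < n) {z w : ℝ} (hz : 0 < z)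
    (h0 : g 0 z = 0) (hzw : z ≤ w) : g k w = 0 := by
  rcases hzw.lt_or_eq with h | rfl
  · exact hg.eq_zero_of_lt hk.le hz h0 h
  · have hc : ContinuousWithinAt (g k) (Ioi z) z :=
      ((hg.cont k hk).continuousAt (Ioi_mem_nhds hz)).continuousWithinAt
    refine tendsto_nhds_unique hc.tendsto (tendsto_const_nhds.congr' ?_)
    filter_upwards [self_mem_nhdsWithin] with v hv
    exact (hg.eq_zero_of_lt hk.le hz h0 hv).symm

end IsMonotoneFamily

/-! ### The signed derivatives of a `d`-monotone generator -/

/-- The signed derivatives of the generator: `(-1)^k ψ⁽ᵏ⁾` for `k ≤ d-2`, and at `k = d-1` the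
one-sided substitute `(-1)^(d-1) D⁻ψ^(d-2)`. Values at `k ≥ d` are irrelevant. -/
def genFamily (d : ℕ) (ψ : ℝ → ℝ) (k : ℕ) (z : ℝ) : ℝ :=
  if k = d - 1 then (-1) ^ (d - 1) * leftDeriv (deriv^[d - 2] ψ) z else (-1) ^ k * deriv^[k] ψ z

/-- The left derivative of a convex function is left-continuous. It is monotone, and it dominates
backward slopes, which are continuous in their end point. -/
lemma leftDeriv_leftCont {f : ℝ → ℝ} (hf : ConvexOn ℝ (Ioi 0) f) {z : ℝ} (hz : 0 < z) :
    ContinuousWithinAt (leftDeriv f) (Iic z) z := by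
  have hint : ∀ {x : ℝ}, 0 < x → x ∈ interior (Ioi (0 : ℝ)) := fun hx => by simpa using hx
  have hmono : ∀ {x y : ℝ}, 0 < x → x ≤ y → leftDeriv f x ≤ leftDeriv f y := fun hx hxy =>
    hf.monotoneOn_leftDeriv (hint hx) (hint (hx.trans_le hxy)) hxy
  have hcont : ContinuousAt f z :=
    (hf.continuousOn isOpen_Ioi).continuousAt (Ioi_mem_nhds hz)
  refine tendsto_order.2 ⟨fun c hc => ?_, fun c hc => ?_⟩
  · -- a slope over some `[v, z]` exceeds `c`, hence so does the slope over `[v, u]` for `u` near `z`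
    have hslope : Tendsto (slope f z) (𝓝[<] z) (𝓝 (leftDeriv f z)) :=
      (hasDerivWithinAt_iff_tendsto_slope' self_notMem_Iio).1
        (hf.hasDerivWithinAt_leftDeriv_of_mem_interior (hint hz))
    obtain ⟨v, hv1, hv2⟩ := ((hslope.eventually (lt_mem_nhds hc)).and
      (Ioo_mem_nhdsLT hz)).exists
    have hs : ContinuousAt (slope f v) z := by
      have : slope f v = fun b => (b - v)⁻¹ • (f b - f v) := by ext b; simp [slope_def_module]
      rw [this]
      exact ((continuousAt_id.sub continuousAt_const).inv₀ (by simp; linarith [hv2.2])).smul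
        (hcont.sub continuousAt_const)
    rw [slope_comm] at hv1
    filter_upwards [mem_nhdsWithin_of_mem_nhds (hs.eventually (lt_mem_nhds hv1)),
      mem_nhdsWithin_of_mem_nhds (Ioi_mem_nhds hv2.2)] with u hu1 hu2
    exact lt_of_lt_of_le hu1
      (hf.slope_le_leftDeriv_of_mem_interior (mem_Ioi.2 hv2.1) (hint (hv2.1.trans hu2)) hu2)
  · filter_upwards [self_mem_nhdsWithin, mem_nhdsWithin_of_mem_nhds (Ioi_mem_nhds hz)] with u hu hu0
    exact (hmono hu0 hu).trans_lt hc

lemma leftDeriv_const_mul (c : ℝ) (f : ℝ → ℝ) (z : ℝ) :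
    leftDeriv (fun x => c * f x) z = c * leftDeriv f z := by
  simp only [leftDeriv]
  exact derivWithin_const_mul_field c

section family

variable {d : ℕ} {ψ : ℝ → ℝ}

lemma genFamily_lt {k : ℕ} (hk : k < d - 1) :
    genFamily d ψ k = fun z => (-1) ^ k * deriv^[k] ψ z := by
  ext z; simp [genFamily, hk.ne]

lemma genFamily_top (hd : 3 ≤ d) :
    genFamily d ψ (d - 1) = fun z => -leftDeriv (fun x => (-1) ^ (d - 2) * deriv^[d - 2] ψ x) z := by
  obtain ⟨m, rfl⟩ : ∃ m, d = m + 2 := ⟨d - 2, by omega⟩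
  ext z
  rw [leftDeriv_const_mul]
  simp [genFamily, pow_succ]

lemma genFamily_hasDerivAt (hψ : IsdMonotoneGenerator d ψ) {k : ℕ} (hk : k < d - 2) {z : ℝ}
    (hz : 0 < z) : HasDerivAt (genFamily d ψ k) (-(genFamily d ψ (k + 1) z)) z := by
  rw [genFamily_lt (by omega), genFamily_lt (by omega)]
  have := ((hψ.differentiable k hk z hz).hasDerivAt).const_mul ((-1 : ℝ) ^ k)
  refine this.congr_deriv ?_
  rw [Function.iterate_succ_apply']
  ring

lemma genFamily_hasLeftDeriv (hd : 3 ≤ d) (hψ : IsdMonotoneGenerator d ψ) {k : ℕ} (hk : k < d - 1)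
    {z : ℝ} (hz : 0 < z) :
    HasDerivWithinAt (genFamily d ψ k) (-(genFamily d ψ (k + 1) z)) (Iio z) z := by
  rcases Nat.lt_or_ge k (d - 2) with h | h
  · exact (genFamily_hasDerivAt hψ h hz).hasDerivWithinAt
  · obtain rfl : k = d - 2 := by omega
    rw [genFamily_lt hk, show d - 2 + 1 = d - 1 by omega, genFamily_top hd, neg_neg]
    exact hψ.convexOn.hasDerivWithinAt_leftDeriv_of_mem_interior (by simpa using hz)

lemma genFamily_cont (hψ : IsdMonotoneGenerator d ψ) {k : ℕ} (hk : k < d - 1) :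
    ContinuousOn (genFamily d ψ k) (Ioi 0) := by
  rcases Nat.lt_or_ge k (d - 2) with h | h
  · exact fun z hz => (genFamily_hasDerivAt hψ h hz).continuousAt.continuousWithinAt
  · obtain rfl : k = d - 2 := by omega
    rw [genFamily_lt hk]
    exact hψ.convexOn.continuousOn isOpen_Ioi

lemma genFamily_zero (hd : 3 ≤ d) : genFamily d ψ 0 = ψ := by
  rw [genFamily_lt (by omega)]; ext z; simp

/-- No signed derivative can stay below a negative constant or above a positive constant near
infinity: integrating it repeatedly would make `ψ` unbounded. -/
lemma genFamily_not_eventually (hd : 3 ≤ d) (hψ : IsdMonotoneGenerator d ψ) {k : ℕ}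
    (hk : k ≤ d - 2) : ∀ c : ℝ, 0 < c → (¬ ∀ᶠ z in atTop, c ≤ genFamily d ψ k z) ∧
      ¬ ∀ᶠ z in atTop, genFamily d ψ k z ≤ -c := by
  induction k with
  | zero =>
    intro c hc
    rw [genFamily_zero hd]
    have ht := hψ.toIsGenerator.tendsto_atTop
    constructor <;> intro h
    · obtain ⟨z, h1, h2⟩ := (h.and (ht.eventually (gt_mem_nhds hc))).exists
      linarith
    · obtain ⟨z, h1, h2⟩ := (h.and (ht.eventually (lt_mem_nhds (neg_lt_zero.2 hc)))).exists
      linarith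
  | succ k ih =>
    have ih := ih (by omega)
    intro c hc
    have hder : ∀ z, 0 < z → HasDerivAt (genFamily d ψ k) (-(genFamily d ψ (k + 1) z)) z :=
      fun z hz => genFamily_hasDerivAt hψ (by omega) hz
    have hlin : ∀ A B : ℝ, Tendsto (fun z : ℝ => c * (z - A) + B) atTop atTop := fun A B =>
      tendsto_atTop_add_const_right _ _
        ((tendsto_atTop_add_const_right _ (-A) tendsto_id).const_mul_atTop hc)
    constructor <;> intro h
    · obtain ⟨A, hA⟩ := eventually_atTop.1 (h.and (eventually_gt_atTop 0))
      refine (ih 1 one_pos).2 ?_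
      filter_upwards [(hlin A (-genFamily d ψ k A)).eventually (eventually_ge_atTop 1),
        eventually_ge_atTop A] with z hz hAz
      have hB := (convex_Ici A).image_sub_le_mul_sub_of_deriv_le (f := genFamily d ψ k) (C := -c)
        (fun x hx => (hder x (hA x hx).2).continuousAt.continuousWithinAt)
        (fun x hx => (hder x (hA x (interior_subset hx)).2).differentiableAt.differentiableWithinAt)
        (fun x hx => by
          rw [(hder x (hA x (interior_subset hx)).2).deriv]
          linarith [(hA x (interior_subset hx)).1])
        A self_mem_Ici z hAz hAz
      linarith
    · obtain ⟨A, hA⟩ := eventually_atTop.1 (h.and (eventually_gt_atTop 0))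
      refine (ih 1 one_pos).1 ?_
      filter_upwards [(hlin A (genFamily d ψ k A)).eventually (eventually_ge_atTop 1),
        eventually_ge_atTop A] with z hz hAz
      have hB := (convex_Ici A).mul_sub_le_image_sub_of_le_deriv (f := genFamily d ψ k) (C := c)
        (fun x hx => (hder x (hA x hx).2).continuousAt.continuousWithinAt)
        (fun x hx => (hder x (hA x (interior_subset hx)).2).differentiableAt.differentiableWithinAt)
        (fun x hx => by
          rw [(hder x (hA x (interior_subset hx)).2).deriv]
          linarith [(hA x (interior_subset hx)).1])
        A self_mem_Ici z hAz hAz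
      linarith

/-- The hypothesis only gives the signs for `k = d-2`; they descend to all smaller `k`. If
`(-1)^(k+1) ψ^(k+1) ≥ 0`, then `(-1)^k ψ⁽ᵏ⁾` is non-increasing, and a negative value would keep it
below a negative constant near infinity. -/
lemma genFamily_nonneg_anti (hd : 3 ≤ d) (hψ : IsdMonotoneGenerator d ψ) {k : ℕ}
    (hk : k ≤ d - 2) :
    (∀ z, 0 < z → 0 ≤ genFamily d ψ k z) ∧ AntitoneOn (genFamily d ψ k) (Ioi 0) := by
  induction hk using Nat.decreasingInduction with
  | self =>
    rw [genFamily_lt (by omega)]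
    exact ⟨hψ.nonneg, hψ.antitoneOn⟩
  | of_succ k hk ih =>
    have hder : ∀ z, 0 < z → HasDerivAt (genFamily d ψ k) (-(genFamily d ψ (k + 1) z)) z :=
      fun z hz => genFamily_hasDerivAt hψ (by omega) hz
    have hanti : AntitoneOn (genFamily d ψ k) (Ioi 0) := by
      refine antitoneOn_of_deriv_nonpos (convex_Ioi 0) (genFamily_cont hψ (by omega))
        (fun x hx => (hder x (interior_subset hx)).differentiableAt.differentiableWithinAt)
        (fun x hx => ?_)
      rw [(hder x (interior_subset hx)).deriv]
      linarith [ih.1 x (interior_subset hx)]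
    refine ⟨fun z hz => ?_, hanti⟩
    by_contra! hneg
    refine (genFamily_not_eventually hd hψ (k := k) (by omega) _ (neg_pos.2 hneg)).2 ?_
    filter_upwards [eventually_ge_atTop z] with w hw
    rw [neg_neg]
    exact hanti hz (hz.trans_le hw) hw

lemma genFamily_isMonotoneFamily (hd : 3 ≤ d) (hψ : IsdMonotoneGenerator d ψ) :
    IsMonotoneFamily (d - 1) (genFamily d ψ) where
  hasDeriv _ hk _ hz := genFamily_hasLeftDeriv hd hψ hk hz
  nonneg k hk z hz := by
    rcases hk.lt_or_eq with h | rfl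
    · exact (genFamily_nonneg_anti hd hψ (by omega)).1 z hz
    · have h1 := genFamily_hasLeftDeriv hd hψ (k := d - 2) (by omega) hz
      rw [show d - 2 + 1 = d - 1 by omega] at h1
      have ha := (genFamily_nonneg_anti hd hψ (le_refl (d - 2))).2
      have h2 := (hasDerivWithinAt_iff_tendsto_slope' self_notMem_Iio).1 h1
      have h3 : -genFamily d ψ (d - 1) z ≤ 0 := by
        refine le_of_tendsto h2 ?_
        filter_upwards [Ioo_mem_nhdsLT hz] with v hv
        rw [slope_comm, slope_def_field]
        exact div_nonpos_of_nonpos_of_nonneg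
          (sub_nonpos.2 (ha (mem_Ioi.2 hv.1) (mem_Ioi.2 hz) hv.2.le)) (by linarith [hv.2])
      linarith
  anti k hk := by
    rcases hk.lt_or_eq with h | rfl
    · exact (genFamily_nonneg_anti hd hψ (by omega)).2
    · rw [genFamily_top hd]
      have := hψ.convexOn.monotoneOn_leftDeriv
      rw [interior_Ioi] at this
      exact this.neg
  cont _ hk := genFamily_cont hψ hk
  cont_zero := by rw [genFamily_zero hd]; exact hψ.toIsGenerator.continuousOn
  lim_zero := by rw [genFamily_zero hd]; exact hψ.toIsGenerator.tendsto_atTop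
  leftCont z hz := by
    rw [genFamily_top hd]
    exact (leftDeriv_leftCont hψ.convexOn hz).neg

end family

/-! ### The pseudo-inverse of a generator -/

namespace IsGenerator

variable {ψ : ℝ → ℝ}

@[simp] lemma psiExt_top (ψ : ℝ → ℝ) : psiExt ψ ∞ = 0 := by simp [psiExt]

lemma psiExt_of_ne_top (ψ : ℝ → ℝ) {z : ℝ≥0∞} (hz : z ≠ ∞) : psiExt ψ z = ψ z.toReal := by
  simp [psiExt, hz]

lemma psiExt_zero (h : IsGenerator ψ) : psiExt ψ 0 = 1 := by
  simp [psiExt, h.map_zero]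

lemma psiExt_mem (h : IsGenerator ψ) (z : ℝ≥0∞) : psiExt ψ z ∈ Icc (0 : ℝ) 1 := by
  unfold psiExt
  split_ifs
  · simp
  · exact h.mem_Icc _ ENNReal.toReal_nonneg

lemma psiExt_antitone (h : IsGenerator ψ) : Antitone (psiExt ψ) := by
  intro a b hab
  by_cases hb : b = ∞
  · rw [hb, psiExt_top]; exact (h.psiExt_mem a).1
  · have ha : a ≠ ∞ := ne_top_of_le_ne_top hb hab
    rw [psiExt_of_ne_top ψ ha, psiExt_of_ne_top ψ hb]
    exact h.antitoneOn ENNReal.toReal_nonneg ENNReal.toReal_nonneg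
      ((ENNReal.toReal_le_toReal ha hb).2 hab)

lemma psiExt_continuous (h : IsGenerator ψ) : Continuous (psiExt ψ) := by
  refine continuous_iff_continuousAt.2 fun z => ?_
  by_cases hz : z = ∞
  · subst hz
    refine tendsto_order.2 ⟨fun c hc => ?_, fun c hc => ?_⟩
    · rw [psiExt_top] at hc
      exact Eventually.of_forall fun w => hc.trans_le (h.psiExt_mem w).1
    · rw [psiExt_top] at hc
      obtain ⟨N, hN⟩ := eventually_atTop.1 (h.tendsto_atTop.eventually (gt_mem_nhds hc))
      filter_upwards [Ioi_mem_nhds (ENNReal.ofReal_lt_top (r := N))] with w hw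
      by_cases hw' : w = ∞
      · rwa [hw', psiExt_top]
      · rw [psiExt_of_ne_top ψ hw']
        exact hN _ ((ENNReal.ofReal_le_iff_le_toReal hw').1 (le_of_lt hw))
  · have h1 : Tendsto ENNReal.toReal (𝓝 z) (𝓝[Ici 0] z.toReal) :=
      tendsto_nhdsWithin_iff.2 ⟨ENNReal.tendsto_toReal hz,
        Eventually.of_forall fun _ => ENNReal.toReal_nonneg⟩
    have h2 := (h.continuousOn z.toReal ENNReal.toReal_nonneg).tendsto.comp h1
    rw [ContinuousAt, psiExt_of_ne_top ψ hz]
    refine h2.congr' ?_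
    filter_upwards [Iio_mem_nhds (lt_top_iff_ne_top.2 hz)] with w hw
    rw [psiExt_of_ne_top ψ (ne_of_lt hw)]; rfl

lemma exists_psiExt_eq (h : IsGenerator ψ) {y : ℝ} (hy : y ∈ Icc (0 : ℝ) 1) :
    ∃ z, psiExt ψ z = y := by
  have := isPreconnected_univ.intermediate_value (mem_univ (∞ : ℝ≥0∞)) (mem_univ (0 : ℝ≥0∞))
    h.psiExt_continuous.continuousOn
  rw [psiExt_top, h.psiExt_zero] at this
  obtain ⟨z, -, hz⟩ := this hy
  exact ⟨z, hz⟩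

lemma psiExt_pseudoInv (h : IsGenerator ψ) {y : ℝ} (hy : y ∈ Icc (0 : ℝ) 1) :
    psiExt ψ (pseudoInv ψ y) = y := by
  have hc : IsClosed {z : ℝ≥0∞ | psiExt ψ z = y} :=
    isClosed_eq h.psiExt_continuous continuous_const
  exact hc.sInf_mem (h.exists_psiExt_eq hy)

/-- The pseudo-inverse and `ψ` form an antitone Galois connection on `[0,1]` and `[0,∞]`; nearly all
properties of the pseudo-inverse follow from this. -/
lemma pseudoInv_le_iff (h : IsGenerator ψ) {y : ℝ} (hy : y ∈ Icc (0 : ℝ) 1) {z : ℝ≥0∞} :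
    pseudoInv ψ y ≤ z ↔ psiExt ψ z ≤ y := by
  constructor
  · intro hz
    rw [← h.psiExt_pseudoInv hy]
    exact h.psiExt_antitone hz
  · intro hz
    by_contra! hlt
    have h1 : y ≤ psiExt ψ z := by
      rw [← h.psiExt_pseudoInv hy]; exact h.psiExt_antitone hlt.le
    exact absurd (sInf_le (show z ∈ {z : ℝ≥0∞ | psiExt ψ z = y} from le_antisymm hz h1))
      (not_le.2 hlt)

lemma lt_pseudoInv_iff (h : IsGenerator ψ) {y : ℝ} (hy : y ∈ Icc (0 : ℝ) 1) {z : ℝ≥0∞} :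
    z < pseudoInv ψ y ↔ y < psiExt ψ z := by
  rw [← not_le, h.pseudoInv_le_iff hy, not_le]

/-- Outside `[0,1]` the infimum is over the empty set. -/
lemma pseudoInv_of_notMem (h : IsGenerator ψ) {y : ℝ} (hy : y ∉ Icc (0 : ℝ) 1) :
    pseudoInv ψ y = ∞ := by
  have : {z : ℝ≥0∞ | psiExt ψ z = y} = ∅ := by
    ext z
    simp only [mem_ofPred_eq, mem_empty_iff_false, iff_false]
    rintro rfl
    exact hy (h.psiExt_mem z)
  rw [pseudoInv, this, sInf_empty]

lemma zero_mem : (0 : ℝ) ∈ Icc (0 : ℝ) 1 := by simp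
lemma one_mem : (1 : ℝ) ∈ Icc (0 : ℝ) 1 := by simp

lemma pseudoInv_anti (h : IsGenerator ψ) : AntitoneOn (pseudoInv ψ) (Icc 0 1) := by
  intro a ha b hb hab
  rw [h.pseudoInv_le_iff hb, h.psiExt_pseudoInv ha]
  exact hab

lemma pseudoInv_strictAnti (h : IsGenerator ψ) : StrictAntiOn (pseudoInv ψ) (Icc 0 1) := by
  intro a ha b hb hab
  rw [h.lt_pseudoInv_iff ha, h.psiExt_pseudoInv hb]
  exact hab

lemma pseudoInv_le_zero (h : IsGenerator ψ) {y : ℝ} (hy : y ∈ Icc (0 : ℝ) 1) :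
    pseudoInv ψ y ≤ pseudoInv ψ 0 := h.pseudoInv_anti zero_mem hy hy.1

lemma pseudoInv_one (h : IsGenerator ψ) : pseudoInv ψ 1 = 0 :=
  nonpos_iff_eq_zero.1 ((h.pseudoInv_le_iff one_mem).2 (h.psiExt_mem 0).2)

lemma pseudoInv_pos (h : IsGenerator ψ) {y : ℝ} (hy : y ∈ Icc (0 : ℝ) 1) (hy1 : y ≠ 1) :
    0 < pseudoInv ψ y := by
  rw [h.lt_pseudoInv_iff hy, h.psiExt_zero]
  exact lt_of_le_of_ne hy.2 hy1

lemma pseudoInv_ne_top (h : IsGenerator ψ) {y : ℝ} (hy : y ∈ Icc (0 : ℝ) 1) (hy0 : y ≠ 0) :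
    pseudoInv ψ y ≠ ∞ :=
  ((h.pseudoInv_strictAnti zero_mem hy (lt_of_le_of_ne hy.1 (Ne.symm hy0))).trans_le le_top).ne

lemma psiExt_eq_zero_of_le (h : IsGenerator ψ) {z : ℝ≥0∞} (hz : pseudoInv ψ 0 ≤ z) :
    psiExt ψ z = 0 :=
  le_antisymm ((h.pseudoInv_le_iff zero_mem).1 hz) (h.psiExt_mem z).1

lemma psiExt_pos_of_lt (h : IsGenerator ψ) {z : ℝ≥0∞} (hz : z < pseudoInv ψ 0) :
    0 < psiExt ψ z := (h.lt_pseudoInv_iff zero_mem).1 hz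

lemma psiExt_strict (h : IsGenerator ψ) {z w : ℝ≥0∞} (hzw : z < w) (hw : w ≤ pseudoInv ψ 0) :
    psiExt ψ w < psiExt ψ z := by
  by_cases hw' : w = ∞
  · rw [hw', psiExt_top]
    exact h.psiExt_pos_of_lt (hzw.trans_le hw)
  · rw [psiExt_of_ne_top ψ hw', psiExt_of_ne_top ψ hzw.ne_top]
    refine h.strictAnti ENNReal.toReal_nonneg ((ENNReal.toReal_lt_toReal hzw.ne_top hw').2 hzw) ?_
    rwa [ENNReal.ofReal_toReal hw']

lemma pseudoInv_psiExt (h : IsGenerator ψ) {z : ℝ≥0∞} (hz : z ≤ pseudoInv ψ 0) :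
    pseudoInv ψ (psiExt ψ z) = z := by
  refine le_antisymm ((h.pseudoInv_le_iff (h.psiExt_mem z)).2 le_rfl) ?_
  by_contra! hlt
  have := h.psiExt_strict hlt hz
  rw [h.psiExt_pseudoInv (h.psiExt_mem z)] at this
  exact lt_irrefl _ this

lemma pseudoInv_continuousOn (h : IsGenerator ψ) : ContinuousOn (pseudoInv ψ) (Icc 0 1) := by
  intro y hy
  refine tendsto_order.2 ⟨fun c hc => ?_, fun c hc => ?_⟩
  · rw [h.lt_pseudoInv_iff hy] at hc
    filter_upwards [self_mem_nhdsWithin, mem_nhdsWithin_of_mem_nhds (Iio_mem_nhds hc)] with v hv hvc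
    exact (h.lt_pseudoInv_iff hv).2 hvc
  · rcases lt_or_ge (pseudoInv ψ 0) c with h0 | h0
    · filter_upwards [self_mem_nhdsWithin] with v hv
      exact (h.pseudoInv_le_zero hv).trans_lt h0
    · have h1 := h.psiExt_strict hc h0
      rw [h.psiExt_pseudoInv hy] at h1
      filter_upwards [self_mem_nhdsWithin, mem_nhdsWithin_of_mem_nhds (Ioi_mem_nhds h1)] with v hv hvc
      rw [← h.pseudoInv_psiExt h0]
      exact h.pseudoInv_strictAnti (h.psiExt_mem c) hv hvc

lemma pseudoInv_measurable (h : IsGenerator ψ) : Measurable (pseudoInv ψ) := by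
  refine measurable_of_Iic fun z => ?_
  by_cases hz : z = ∞
  · simp [hz]
  · have : pseudoInv ψ ⁻¹' Iic z = Icc 0 1 ∩ Ici (psiExt ψ z) := by
      ext y
      simp only [mem_preimage, mem_Iic, mem_inter_iff, mem_Ici]
      by_cases hy : y ∈ Icc (0 : ℝ) 1
      · simp [h.pseudoInv_le_iff hy, hy]
      · simp only [h.pseudoInv_of_notMem hy, top_le_iff, hz, hy, false_and]
    rw [this]
    exact measurableSet_Icc.inter measurableSet_Ici

end IsGenerator

/-! ### The change of variables `u = φ(s)` -/

section integral

variable {d : ℕ} {ψ : ℝ → ℝ}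

lemma pseudoInv_toReal_pos_lt (h : IsGenerator ψ) {s : ℝ} (hs : s ∈ Ioo (0 : ℝ) 1) :
    0 < pseudoInv ψ s ∧ pseudoInv ψ s < pseudoInv ψ 0 ∧ pseudoInv ψ s ≠ ∞ :=
  ⟨h.pseudoInv_pos (Ioo_subset_Icc_self hs) hs.2.ne,
    h.pseudoInv_strictAnti IsGenerator.zero_mem (Ioo_subset_Icc_self hs) hs.1,
    h.pseudoInv_ne_top (Ioo_subset_Icc_self hs) hs.1.ne'⟩

/-- Strictly between `0` and `φ(0)` all signed derivatives are positive, because `ψ` is. -/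
lemma genFamily_pos (hd : 3 ≤ d) (hψ : IsdMonotoneGenerator d ψ) {k : ℕ} (hk : k ≤ d - 1)
    {z : ℝ≥0∞} (hz : 0 < z) (hz' : z < pseudoInv ψ 0) : 0 < genFamily d ψ k z.toReal := by
  have hg := genFamily_isMonotoneFamily hd hψ
  have hz0 : 0 < z.toReal := ENNReal.toReal_pos hz.ne' hz'.ne_top
  refine lt_of_le_of_ne (hg.nonneg k hk _ hz0) fun h0 => ?_
  have h1 := hg.zero_of_eq_zero hk hz0 h0.symm
  rw [genFamily_zero hd, ← IsGenerator.psiExt_of_ne_top ψ hz'.ne_top] at h1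
  exact (hψ.toIsGenerator.psiExt_pos_of_lt hz').ne' h1

/-- Inverse function rule: `φ'(s) = 1 / ψ'(φ(s))` on `(0,1)`. -/
lemma hasDerivAt_pseudoInv (hd : 3 ≤ d) (hψ : IsdMonotoneGenerator d ψ) {s : ℝ}
    (hs : s ∈ Ioo (0 : ℝ) 1) :
    HasDerivAt (fun y => (pseudoInv ψ y).toReal)
      (-(genFamily d ψ 1 (pseudoInv ψ s).toReal))⁻¹ s := by
  have h := hψ.toIsGenerator
  obtain ⟨h1, h2, h3⟩ := pseudoInv_toReal_pos_lt h hs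
  have hd1 : HasDerivAt ψ (-(genFamily d ψ 1 (pseudoInv ψ s).toReal)) (pseudoInv ψ s).toReal := by
    have := genFamily_hasDerivAt hψ (k := 0) (by omega) (ENNReal.toReal_pos h1.ne' h3)
    rwa [genFamily_zero hd] at this
  refine HasDerivAt.of_local_left_inverse ?_ hd1 ?_ ?_
  · exact (ENNReal.tendsto_toReal h3).comp
      (h.pseudoInv_continuousOn.continuousAt (Icc_mem_nhds hs.1 hs.2))
  · exact neg_ne_zero.2 (genFamily_pos hd hψ (by omega) h1 h2).ne'
  · filter_upwards [Ioo_mem_nhds hs.1 hs.2] with y hy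
    rw [← IsGenerator.psiExt_of_ne_top ψ (pseudoInv_toReal_pos_lt h hy).2.2]
    exact h.psiExt_pseudoInv (Ioo_subset_Icc_self hy)

lemma deriv_pseudoInv_nonpos (hd : 3 ≤ d) (hψ : IsdMonotoneGenerator d ψ) {s : ℝ}
    (hs : s ∈ Ioo (0 : ℝ) 1) : deriv (fun y => (pseudoInv ψ y).toReal) s ≤ 0 := by
  rw [(hasDerivAt_pseudoInv hd hψ hs).deriv]
  obtain ⟨h1, h2, h3⟩ := pseudoInv_toReal_pos_lt hψ.toIsGenerator hs
  exact inv_nonpos.2 (neg_nonpos.2 (genFamily_pos hd hψ (by omega) h1 h2).le)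

/-- The weight `|φ'(s)| = -φ'(s)` on `(0,1)`, extended by `0`. -/
def invWeight (ψ : ℝ → ℝ) (s : ℝ) : ℝ≥0∞ :=
  if s ∈ Ioo (0 : ℝ) 1 then ENNReal.ofReal (-deriv (fun y => (pseudoInv ψ y).toReal) s) else 0

lemma invWeight_measurable (ψ : ℝ → ℝ) : Measurable (invWeight ψ) :=
  Measurable.ite measurableSet_Ioo (measurable_deriv _).neg.ennreal_ofReal measurable_const

/-- The function `(-1)^k ψ⁽ᵏ⁾` (with `D⁻` at `k = d-1`) on `[0,∞]`, with value `0` at `∞` and, when `b`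
holds, also at `φ(0)`. The flag `b` matters only for `k = d-1`: there the left derivative at `φ(0)`
may be nonzero, whereas the marginal density vanishes on the hyperplane `∑ φ(sᵢ) = φ(0)`. A single
point does not affect the integrals. -/
def famExt (d : ℕ) (ψ : ℝ → ℝ) (b : Prop) (k : ℕ) (z : ℝ≥0∞) : ℝ≥0∞ :=
  if z = ∞ ∨ (b ∧ z = pseudoInv ψ 0) then 0 else ENNReal.ofReal (genFamily d ψ k z.toReal)

/-- One-sided derivatives are measurable for every `f`; the left one is the reflection of the right
one. -/
lemma leftDeriv_measurable (f : ℝ → ℝ) : Measurable (leftDeriv f) := by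
  have h : leftDeriv f = fun z => -derivWithin (fun x => f (-x)) (Ioi (-z)) (-z) := by
    ext z
    rw [derivWithin_comp_neg]
    simp [leftDeriv]
  rw [h]
  exact ((measurable_derivWithin_Ioi _).comp measurable_neg).neg

lemma genFamily_measurable {k : ℕ} (hk : k ≠ 0) : Measurable (genFamily d ψ k) := by
  obtain ⟨j, rfl⟩ := Nat.exists_eq_succ_of_ne_zero hk
  by_cases h : j.succ = d - 1
  · have : genFamily d ψ j.succ = fun z => (-1) ^ (d - 1) * leftDeriv (deriv^[d - 2] ψ) z := by
      ext z; simp only [genFamily, if_pos h]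
    rw [this]
    exact (leftDeriv_measurable _).const_mul _
  · have : genFamily d ψ j.succ = fun z => (-1) ^ j.succ * deriv (deriv^[j] ψ) z := by
      ext z; simp only [genFamily, if_neg h, Function.iterate_succ_apply']
    rw [this]
    exact (measurable_deriv _).const_mul _

lemma famExt_measurable (b : Prop) {k : ℕ} (hk : k ≠ 0) : Measurable (famExt d ψ b k) := by
  refine Measurable.ite ?_ measurable_const
    ((genFamily_measurable hk).comp ENNReal.measurable_toReal).ennreal_ofReal
  exact (measurableSet_singleton ∞).union
    ((MeasurableSet.const b).inter (measurableSet_singleton (pseudoInv ψ 0)))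

lemma genFamily_eq_zero_of_lt (hd : 3 ≤ d) (hψ : IsdMonotoneGenerator d ψ) {k : ℕ}
    (hk : k ≤ d - 1) {z : ℝ≥0∞} (hz : z ≠ ∞) (h0 : pseudoInv ψ 0 < z) :
    genFamily d ψ k z.toReal = 0 := by
  have h := hψ.toIsGenerator
  have hp := h.pseudoInv_pos IsGenerator.zero_mem zero_ne_one
  refine (genFamily_isMonotoneFamily hd hψ).eq_zero_of_lt hk
    (ENNReal.toReal_pos hp.ne' h0.ne_top) ?_ ((ENNReal.toReal_lt_toReal h0.ne_top hz).2 h0)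
  rw [genFamily_zero hd, ← IsGenerator.psiExt_of_ne_top ψ h0.ne_top]
  exact h.psiExt_eq_zero_of_le le_rfl

lemma genFamily_eq_zero_of_le (hd : 3 ≤ d) (hψ : IsdMonotoneGenerator d ψ) {k : ℕ}
    (hk : k < d - 1) {z : ℝ≥0∞} (hz : z ≠ ∞) (h0 : pseudoInv ψ 0 ≤ z) :
    genFamily d ψ k z.toReal = 0 := by
  have h := hψ.toIsGenerator
  have hp := h.pseudoInv_pos IsGenerator.zero_mem zero_ne_one
  have ht := ne_top_of_le_ne_top hz h0
  refine (genFamily_isMonotoneFamily hd hψ).eq_zero_of_le hk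
    (ENNReal.toReal_pos hp.ne' ht) ?_ ((ENNReal.toReal_le_toReal ht hz).2 h0)
  rw [genFamily_zero hd, ← IsGenerator.psiExt_of_ne_top ψ ht]
  exact h.psiExt_eq_zero_of_le le_rfl

/-- Below the top order the flag is irrelevant, since continuity forces the value `0` at `φ(0)`. -/
lemma famExt_eq (hd : 3 ≤ d) (hψ : IsdMonotoneGenerator d ψ) (b : Prop) {k : ℕ}
    (hk : k < d - 1) {z : ℝ≥0∞} (hz : z ≠ ∞) :
    famExt d ψ b k z = ENNReal.ofReal (genFamily d ψ k z.toReal) := by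
  unfold famExt
  split_ifs with h
  · rcases h with h | ⟨-, h⟩
    · exact absurd h hz
    · rw [genFamily_eq_zero_of_le hd hψ hk hz h.ge, ENNReal.ofReal_zero]
  · rfl

lemma famExt_eq_zero_of_lt (hd : 3 ≤ d) (hψ : IsdMonotoneGenerator d ψ) (b : Prop) {k : ℕ}
    (hk : k ≤ d - 1) {z : ℝ≥0∞} (h0 : pseudoInv ψ 0 < z) : famExt d ψ b k z = 0 := by
  unfold famExt
  split_ifs with h
  · rfl
  · push Not at h
    rw [genFamily_eq_zero_of_lt hd hψ hk h.1 h0, ENNReal.ofReal_zero]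

lemma famExt_eq_zero_of_le (hd : 3 ≤ d) (hψ : IsdMonotoneGenerator d ψ) (b : Prop) {k : ℕ}
    (hk : k < d - 1) {z : ℝ≥0∞} (h0 : pseudoInv ψ 0 ≤ z) : famExt d ψ b k z = 0 := by
  by_cases hz : z = ∞
  · simp [famExt, hz]
  · rw [famExt_eq hd hψ b hk hz, genFamily_eq_zero_of_le hd hψ hk hz h0, ENNReal.ofReal_zero]

lemma famExt_zero (hd : 3 ≤ d) (hψ : IsdMonotoneGenerator d ψ) (b : Prop) (z : ℝ≥0∞) :
    famExt d ψ b 0 z = ENNReal.ofReal (psiExt ψ z) := by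
  by_cases hz : z = ∞
  · simp [famExt, hz]
  · rw [famExt_eq hd hψ b (by omega) hz, genFamily_zero hd, IsGenerator.psiExt_of_ne_top ψ hz]

lemma image_pseudoInv_Ioo (h : IsGenerator ψ) {x : ℝ} (hx0 : 0 < x) (hx1 : x ≤ 1) :
    (fun y => (pseudoInv ψ y).toReal) '' Ioo 0 x =
      {u | (pseudoInv ψ x).toReal < u ∧ ENNReal.ofReal u < pseudoInv ψ 0} := by
  have hxm : x ∈ Icc (0 : ℝ) 1 := ⟨hx0.le, hx1⟩
  have hxt := h.pseudoInv_ne_top hxm hx0.ne'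
  ext u
  simp only [mem_image, mem_ofPred_eq]
  constructor
  · rintro ⟨s, hs, rfl⟩
    have hs1 : s ∈ Ioo (0 : ℝ) 1 := ⟨hs.1, hs.2.trans_le hx1⟩
    obtain ⟨h1, h2, h3⟩ := pseudoInv_toReal_pos_lt h hs1
    refine ⟨(ENNReal.toReal_lt_toReal hxt h3).2
      (h.pseudoInv_strictAnti (Ioo_subset_Icc_self hs1) hxm hs.2), ?_⟩
    rwa [ENNReal.ofReal_toReal h3]
  · rintro ⟨h1, h2⟩
    have hu : 0 ≤ u := ENNReal.toReal_nonneg.trans h1.le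
    have hm := h.psiExt_mem (ENNReal.ofReal u)
    refine ⟨psiExt ψ (ENNReal.ofReal u), ⟨h.psiExt_pos_of_lt h2, ?_⟩, ?_⟩
    · have := h.psiExt_strict ((ENNReal.lt_ofReal_iff_toReal_lt hxt).2 h1) h2.le
      rwa [h.psiExt_pseudoInv hxm] at this
    · rw [h.pseudoInv_psiExt h2.le, ENNReal.toReal_ofReal hu]

/-- One integration step: `∫_{(0,x]} |φ'(s)| g_{k+1}(φ(s)+t) ds = g_k(φ(x)+t)`. The substitution
`u = φ(s)` maps `(0,x)` onto `(φ(x), φ(0))`, and the integrand vanishes beyond `φ(0)`. -/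
lemma lintegral_invWeight (hd : 3 ≤ d) (hψ : IsdMonotoneGenerator d ψ) (b : Prop) {k : ℕ}
    (hk : k < d - 1) {x : ℝ} (hx : x ∈ Icc (0 : ℝ) 1) {t : ℝ≥0∞} (ht : k = 0 ∨ 0 < t) :
    ∫⁻ s in Ioc 0 x, invWeight ψ s * famExt d ψ b (k + 1) (pseudoInv ψ s + t) =
      famExt d ψ b k (pseudoInv ψ x + t) := by
  have h := hψ.toIsGenerator
  have hg := genFamily_isMonotoneFamily hd hψ
  by_cases htt : t = ∞
  · simp [famExt, htt]
  rcases hx.1.eq_or_lt with rfl | hx0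
  · rw [famExt_eq_zero_of_le hd hψ b hk le_self_add]
    simp
  have hxt := h.pseudoInv_ne_top hx hx0.ne'
  set φR : ℝ → ℝ := fun y => (pseudoInv ψ y).toReal with hφR
  set F : ℝ → ℝ≥0∞ := fun u => famExt d ψ b (k + 1) (ENNReal.ofReal u + t) with hF
  have hsub : ∀ s ∈ Ioo (0 : ℝ) x, s ∈ Ioo (0 : ℝ) 1 := fun s hs => ⟨hs.1, hs.2.trans_le hx.2⟩
  have e1 : ∫⁻ s in Ioc 0 x, invWeight ψ s * famExt d ψ b (k + 1) (pseudoInv ψ s + t) =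
      ∫⁻ s in Ioo 0 x, ENNReal.ofReal |deriv φR s| * F (φR s) := by
    rw [← restrict_Ioo_eq_restrict_Ioc]
    refine setLIntegral_congr_fun measurableSet_Ioo fun s hs => ?_
    have hs1 := hsub s hs
    simp only [invWeight, if_pos hs1, hF, hφR]
    rw [abs_of_nonpos (deriv_pseudoInv_nonpos hd hψ hs1),
      ENNReal.ofReal_toReal (pseudoInv_toReal_pos_lt h hs1).2.2]
  have hinj : InjOn φR (Ioo 0 x) := by
    intro s hs s' hs' hss
    have := (ENNReal.toReal_eq_toReal_iff' (pseudoInv_toReal_pos_lt h (hsub s hs)).2.2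
      (pseudoInv_toReal_pos_lt h (hsub s' hs')).2.2).1 hss
    exact h.pseudoInv_strictAnti.injOn (Ioo_subset_Icc_self (hsub s hs))
      (Ioo_subset_Icc_self (hsub s' hs')) this
  have e2 : ∫⁻ s in Ioo 0 x, ENNReal.ofReal |deriv φR s| * F (φR s) = ∫⁻ u in φR '' Ioo 0 x, F u :=
    (lintegral_image_eq_lintegral_abs_deriv_mul measurableSet_Ioo
      (fun s hs => (hasDerivAt_pseudoInv hd hψ (hsub s hs)).differentiableAt.hasDerivAt.hasDerivWithinAt)
      hinj F).symm
  have e3 : ∫⁻ u in φR '' Ioo 0 x, F u =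
      ∫⁻ u in Ioi (φR x), ENNReal.ofReal (genFamily d ψ (k + 1) (u + t.toReal)) := by
    rw [image_pseudoInv_Ioo h hx0 hx.2]
    have hm : MeasurableSet {u : ℝ | (pseudoInv ψ x).toReal < u ∧ ENNReal.ofReal u < pseudoInv ψ 0} :=
      measurableSet_Ioi.inter (measurableSet_lt ENNReal.measurable_ofReal measurable_const)
    rw [← lintegral_indicator hm, ← lintegral_indicator measurableSet_Ioi]
    -- beyond `φ(0)` the integrand vanishes, so only two exceptional points remain
    refine lintegral_congr_ae ?_
    filter_upwards [compl_mem_ae_iff.2 (measure_singleton (pseudoInv ψ 0).toReal),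
      compl_mem_ae_iff.2 (measure_singleton ((pseudoInv ψ 0).toReal - t.toReal))] with u hu1 hu2
    simp only [mem_compl_iff, mem_singleton_iff] at hu1 hu2
    by_cases hua : (pseudoInv ψ x).toReal < u
    swap
    · rw [indicator_of_notMem (s := Ioi (φR x)) hua, indicator_of_notMem]
      exact fun h' => hua h'.1
    have hu0 : 0 ≤ u := ENNReal.toReal_nonneg.trans hua.le
    have hz : (ENNReal.ofReal u + t) ≠ ∞ := by simp [htt]
    have hzr : (ENNReal.ofReal u + t).toReal = u + t.toReal := by
      rw [ENNReal.toReal_add (by simp) htt, ENNReal.toReal_ofReal hu0]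
    rw [indicator_of_mem (show u ∈ Ioi (φR x) from hua)]
    by_cases hub : ENNReal.ofReal u < pseudoInv ψ 0
    · rw [indicator_of_mem]
      swap
      · exact ⟨hua, hub⟩
      simp only [hF, famExt]
      rw [if_neg, hzr]
      rintro (h' | ⟨-, h'⟩)
      · exact hz h'
      · refine hu2 ?_
        rw [← h', hzr]; ring
    · rw [indicator_of_notMem]
      swap
      · exact fun h' => hub h'.2
      have hlt : pseudoInv ψ 0 < ENNReal.ofReal u := by
        refine lt_of_le_of_ne (not_lt.1 hub) fun he => hu1 ?_
        rw [he, ENNReal.toReal_ofReal hu0]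
      rw [← hzr, genFamily_eq_zero_of_lt hd hψ hk hz (hlt.trans_le le_self_add),
        ENNReal.ofReal_zero]
  rw [e1, e2, e3, famExt_eq hd hψ b hk (by simp [hxt, htt]), ENNReal.toReal_add hxt htt]
  exact hg.lintegral_shift hk ENNReal.toReal_nonneg ENNReal.toReal_nonneg
    (ht.imp id fun h0 => ENNReal.toReal_pos h0.ne' htt)

/-- The one-variable step iterated by Tonelli over `m` coordinates; each integration lowers the order
of the derivative by one and moves one term `φ(sᵢ)` to `φ(xᵢ)`. -/
lemma lintegral_pi_invWeight (hd : 3 ≤ d) (hψ : IsdMonotoneGenerator d ψ) (b : Prop) (m : ℕ) :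
    ∀ k : ℕ, k + m ≤ d - 1 → ∀ x : Fin m → ℝ, (∀ i, x i ∈ Icc (0 : ℝ) 1) → ∀ t : ℝ≥0∞,
      (k = 0 ∨ 0 < t) →
      ∫⁻ s : Fin m → ℝ, (∏ i, (Ioc 0 (x i)).indicator (invWeight ψ) (s i)) *
          famExt d ψ b (k + m) ((∑ i, pseudoInv ψ (s i)) + t) =
        famExt d ψ b k ((∑ i, pseudoInv ψ (x i)) + t) := by
  have h := hψ.toIsGenerator
  induction m with
  | zero =>
    intro k hk x hx t ht
    simp [lintegral_unique, volume_pi]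
  | succ m ih =>
    intro k hk x hx t ht
    have hW : ∀ a : ℝ, Measurable ((Ioc 0 a).indicator (invWeight ψ)) := fun a =>
      (invWeight_measurable ψ).indicator measurableSet_Ioc
    have hmeas : Measurable fun s : Fin (m + 1) → ℝ =>
        (∏ i, (Ioc 0 (x i)).indicator (invWeight ψ) (s i)) *
          famExt d ψ b (k + (m + 1)) ((∑ i, pseudoInv ψ (s i)) + t) := by
      refine Measurable.mul ?_ ?_
      · exact Finset.measurable_prod _ fun i _ => (hW _).comp (measurable_pi_apply i)
      · refine (famExt_measurable b (by omega)).comp (Measurable.add_const ?_ _)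
        exact Finset.measurable_sum _ fun i _ => h.pseudoInv_measurable.comp (measurable_pi_apply i)
    have hmp := (volume_preserving_piFinSuccAbove (fun _ : Fin (m + 1) => ℝ) 0).symm
    rw [← hmp.lintegral_comp hmeas, Measure.volume_eq_prod]
    refine (lintegral_prod _ (hmeas.comp hmp.measurable).aemeasurable).trans ?_
    have hx' : ∀ i : Fin m, x i.succ ∈ Icc (0 : ℝ) 1 := fun i => hx _
    -- for fixed first coordinate the induction hypothesis applies with `t` replaced by `φ(s₀) + t`
    have key : ∀ s₀ : ℝ, ∫⁻ s : Fin m → ℝ,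
        (fun s : Fin (m + 1) → ℝ => (∏ i, (Ioc 0 (x i)).indicator (invWeight ψ) (s i)) *
          famExt d ψ b (k + (m + 1)) ((∑ i, pseudoInv ψ (s i)) + t))
          ((MeasurableEquiv.piFinSuccAbove (fun _ : Fin (m + 1) => ℝ) 0).symm (s₀, s)) =
        (Ioc 0 (x 0)).indicator (fun s₀ => invWeight ψ s₀ *
          famExt d ψ b (k + 1) (pseudoInv ψ s₀ + ((∑ i : Fin m, pseudoInv ψ (x i.succ)) + t))) s₀ := by
      intro s₀
      have e : ∀ s : Fin m → ℝ,
          ((MeasurableEquiv.piFinSuccAbove (fun _ : Fin (m + 1) => ℝ) 0).symm (s₀, s)) =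
            Fin.cons s₀ s := fun s => by
        simp [MeasurableEquiv.piFinSuccAbove, Fin.insertNthEquiv]
      simp only [e, Fin.prod_univ_succ, Fin.sum_univ_succ, Fin.cons_zero, Fin.cons_succ, mul_assoc]
      by_cases hs : s₀ ∈ Ioc 0 (x 0)
      swap
      · simp [indicator_of_notMem hs]
      rw [lintegral_const_mul']
      swap
      · rw [indicator_of_mem hs, invWeight]
        split_ifs <;> simp
      rw [indicator_of_mem hs, indicator_of_mem hs]
      by_cases hs1 : s₀ ∈ Ioo (0 : ℝ) 1
      swap
      · simp [invWeight, hs1]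
      congr 1
      have := ih (k + 1) (by omega) (fun i => x i.succ) hx' (pseudoInv ψ s₀ + t)
        (Or.inr (lt_of_lt_of_le (pseudoInv_toReal_pos_lt h hs1).1 le_self_add))
      rw [add_left_comm (pseudoInv ψ s₀), ← this]
      refine lintegral_congr fun s => ?_
      rw [show k + 1 + m = k + (m + 1) by ring, add_assoc, add_left_comm (pseudoInv ψ s₀)]
    refine (lintegral_congr key).trans ?_
    rw [lintegral_indicator measurableSet_Ioc,
      lintegral_invWeight hd hψ b (by omega) (hx 0), Fin.sum_univ_succ, add_assoc]
    exact ht.imp id fun h0 => lt_of_lt_of_le h0 le_add_self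

end integral

/-! ### The kernel as a distribution function -/

section kernel

variable {d : ℕ} {ψ : ℝ → ℝ}

/-- The non-negative function `(-1)^(d-1) D⁻ψ^(d-2)` on `[0,∞]`, with value `0` at `∞`. -/
def topExt (d : ℕ) (ψ : ℝ → ℝ) (z : ℝ≥0∞) : ℝ := (-1) ^ (d - 1) * DpsiExt d ψ z

lemma topExt_top : topExt d ψ ∞ = 0 := by simp [topExt, DpsiExt]

lemma topExt_of_ne_top {z : ℝ≥0∞} (hz : z ≠ ∞) :
    topExt d ψ z = genFamily d ψ (d - 1) z.toReal := by
  simp [topExt, DpsiExt, hz, genFamily]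

lemma topExt_nonneg (hd : 3 ≤ d) (hψ : IsdMonotoneGenerator d ψ) {z : ℝ≥0∞} (hz : 0 < z) :
    0 ≤ topExt d ψ z := by
  by_cases h : z = ∞
  · rw [h, topExt_top]
  · rw [topExt_of_ne_top h]
    exact (genFamily_isMonotoneFamily hd hψ).nonneg _ le_rfl _ (ENNReal.toReal_pos hz.ne' h)

lemma topExt_anti (hd : 3 ≤ d) (hψ : IsdMonotoneGenerator d ψ) {z w : ℝ≥0∞} (hz : 0 < z)
    (hzw : z ≤ w) : topExt d ψ w ≤ topExt d ψ z := by
  by_cases h : w = ∞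
  · rw [h, topExt_top]; exact topExt_nonneg hd hψ hz
  · have hz' := ne_top_of_le_ne_top h hzw
    rw [topExt_of_ne_top h, topExt_of_ne_top hz']
    exact (genFamily_isMonotoneFamily hd hψ).anti _ le_rfl (ENNReal.toReal_pos hz.ne' hz')
      (ENNReal.toReal_pos (hz.trans_le hzw).ne' h) ((ENNReal.toReal_le_toReal hz' h).2 hzw)

lemma topExt_eq_zero (hd : 3 ≤ d) (hψ : IsdMonotoneGenerator d ψ) {z : ℝ≥0∞}
    (hz : pseudoInv ψ 0 < z) : topExt d ψ z = 0 := by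
  by_cases h : z = ∞
  · rw [h, topExt_top]
  · rw [topExt_of_ne_top h, genFamily_eq_zero_of_lt hd hψ le_rfl h hz]

lemma topExt_pos (hd : 3 ≤ d) (hψ : IsdMonotoneGenerator d ψ) {z : ℝ≥0∞} (hz : 0 < z)
    (hz' : z < pseudoInv ψ 0) : 0 < topExt d ψ z := by
  rw [topExt_of_ne_top hz'.ne_top]
  exact genFamily_pos hd hψ le_rfl hz hz'

lemma topExt_leftCont (hd : 3 ≤ d) (hψ : IsdMonotoneGenerator d ψ) {z : ℝ≥0∞} (hz : 0 < z) :
    ContinuousWithinAt (topExt d ψ) (Iic z) z := by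
  have hg := genFamily_isMonotoneFamily hd hψ
  by_cases h : z = ∞
  · subst h
    rw [Iic_top, continuousWithinAt_univ]
    refine tendsto_order.2 ⟨fun c hc => ?_, fun c hc => ?_⟩
    · rw [topExt_top] at hc
      filter_upwards [Ioi_mem_nhds hz] with w hw
      exact hc.trans_le (topExt_nonneg hd hψ hw)
    · rw [topExt_top] at hc
      obtain ⟨N, hN⟩ := eventually_atTop.1 ((hg.tendsto_zero le_rfl).eventually (gt_mem_nhds hc))
      filter_upwards [Ioi_mem_nhds (ENNReal.ofReal_lt_top (r := N))] with w hw
      by_cases hw' : w = ∞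
      · rwa [hw', topExt_top]
      · rw [topExt_of_ne_top hw']
        exact hN _ ((ENNReal.ofReal_le_iff_le_toReal hw').1 (le_of_lt hw))
  · have h1 : Tendsto ENNReal.toReal (𝓝[Iic z] z) (𝓝[Iic z.toReal] z.toReal) := by
      refine tendsto_nhdsWithin_iff.2
        ⟨(ENNReal.tendsto_toReal h).mono_left nhdsWithin_le_nhds, ?_⟩
      filter_upwards [self_mem_nhdsWithin] with w hw
      exact (ENNReal.toReal_le_toReal (ne_top_of_le_ne_top h hw) h).2 hw
    have h2 := (hg.leftCont z.toReal (ENNReal.toReal_pos hz.ne' h)).tendsto.comp h1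
    rw [ContinuousWithinAt, topExt_of_ne_top h]
    refine h2.congr' ?_
    filter_upwards [self_mem_nhdsWithin] with w hw
    rw [topExt_of_ne_top (ne_top_of_le_ne_top h hw)]; rfl

lemma sum_pseudoInv_pos (h : IsGenerator ψ) {m : ℕ} {x : Fin m → ℝ}
    (hx : ∀ i, x i ∈ Icc (0 : ℝ) 1) (hx1 : ¬ ∀ i, x i = 1) : 0 < ∑ i, pseudoInv ψ (x i) := by
  push Not at hx1
  obtain ⟨i, hi⟩ := hx1
  exact (h.pseudoInv_pos (hx i) hi).trans_le
    (Finset.single_le_sum (f := fun i => pseudoInv ψ (x i)) (fun _ _ => zero_le) (Finset.mem_univ i))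

/-- The cut-off `y < f⁰(x)` in the kernel is invisible: it means `∑ φ(xᵢ) + φ(y) > φ(0)`, where the
numerator vanishes anyway. -/
lemma markovKernel_eq (hd : 3 ≤ d) (hψ : IsdMonotoneGenerator d ψ) {x : Fin (d - 1) → ℝ}
    (hx1 : ¬ ∀ i, x i = 1) (hx0 : (∑ i, pseudoInv ψ (x i)) < pseudoInv ψ 0)
    {y : ℝ} (hy : y ∈ Icc (0 : ℝ) 1) :
    markovKernel d ψ x y = topExt d ψ ((∑ i, pseudoInv ψ (x i)) + pseudoInv ψ y) /
      topExt d ψ (∑ i, pseudoInv ψ (x i)) := by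
  have h := hψ.toIsGenerator
  have hz : ¬ ((∀ i, x i = 1) ∨ x ∈ zeroMarg d ψ) := by
    rintro (h' | h')
    · exact hx1 h'
    · exact absurd hx0 (not_lt.2 h')
  rw [markovKernel, if_neg hz]
  split_ifs with hf
  · rw [fZero, if_neg (not_le.2 hx0), ← h.lt_pseudoInv_iff hy] at hf
    rw [topExt_eq_zero hd hψ, zero_div]
    by_contra! hle
    exact absurd (ENNReal.le_sub_of_add_le_left hx0.ne_top hle) (not_le.2 hf)
  · rw [topExt, topExt, mul_div_mul_left _ _ (pow_ne_zero _ (by norm_num))]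

lemma markovKernel_of_trivial {x : Fin (d - 1) → ℝ}
    (hx : (∀ i, x i = 1) ∨ pseudoInv ψ 0 ≤ ∑ i, pseudoInv ψ (x i)) (y : ℝ) :
    markovKernel d ψ x y = 1 := if_pos hx

lemma markovKernel_one (hd : 3 ≤ d) (hψ : IsdMonotoneGenerator d ψ) {x : Fin (d - 1) → ℝ}
    (hx : ∀ i, x i ∈ Icc (0 : ℝ) 1) : markovKernel d ψ x 1 = 1 := by
  by_cases ht : (∀ i, x i = 1) ∨ pseudoInv ψ 0 ≤ ∑ i, pseudoInv ψ (x i)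
  · exact markovKernel_of_trivial ht 1
  · push Not at ht
    have hx1 : ¬ ∀ i, x i = 1 := by push Not; exact ht.1
    rw [markovKernel_eq hd hψ hx1 ht.2 IsGenerator.one_mem, hψ.toIsGenerator.pseudoInv_one, add_zero]
    exact div_self (topExt_pos hd hψ (sum_pseudoInv_pos hψ.toIsGenerator hx hx1) ht.2).ne'

lemma markovKernel_nonneg (hd : 3 ≤ d) (hψ : IsdMonotoneGenerator d ψ) {x : Fin (d - 1) → ℝ}
    (hx : ∀ i, x i ∈ Icc (0 : ℝ) 1) {y : ℝ} (hy : y ∈ Icc (0 : ℝ) 1) :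
    0 ≤ markovKernel d ψ x y := by
  by_cases ht : (∀ i, x i = 1) ∨ pseudoInv ψ 0 ≤ ∑ i, pseudoInv ψ (x i)
  · rw [markovKernel_of_trivial ht]; exact zero_le_one
  · push Not at ht
    have hx1 : ¬ ∀ i, x i = 1 := by push Not; exact ht.1
    have hS := sum_pseudoInv_pos hψ.toIsGenerator hx hx1
    rw [markovKernel_eq hd hψ hx1 ht.2 hy]
    exact div_nonneg (topExt_nonneg hd hψ (hS.trans_le le_self_add)) (topExt_nonneg hd hψ hS)

lemma markovKernel_monotoneOn (hd : 3 ≤ d) (hψ : IsdMonotoneGenerator d ψ) {x : Fin (d - 1) → ℝ}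
    (hx : ∀ i, x i ∈ Icc (0 : ℝ) 1) : MonotoneOn (fun y => markovKernel d ψ x y) (Icc 0 1) := by
  intro y hy y' hy' hyy
  by_cases ht : (∀ i, x i = 1) ∨ pseudoInv ψ 0 ≤ ∑ i, pseudoInv ψ (x i)
  · simp only [markovKernel_of_trivial ht, le_refl]
  · push Not at ht
    have hx1 : ¬ ∀ i, x i = 1 := by push Not; exact ht.1
    have hS := sum_pseudoInv_pos hψ.toIsGenerator hx hx1
    simp only [markovKernel_eq hd hψ hx1 ht.2 hy, markovKernel_eq hd hψ hx1 ht.2 hy']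
    refine div_le_div_of_nonneg_right (topExt_anti hd hψ (hS.trans_le le_self_add) ?_)
      (topExt_nonneg hd hψ hS)
    gcongr
    exact hψ.toIsGenerator.pseudoInv_anti hy hy' hyy

lemma markovKernel_rightCont (hd : 3 ≤ d) (hψ : IsdMonotoneGenerator d ψ) {x : Fin (d - 1) → ℝ}
    (hx : ∀ i, x i ∈ Icc (0 : ℝ) 1) {y : ℝ} (hy : y ∈ Ico (0 : ℝ) 1) :
    ContinuousWithinAt (fun y' => markovKernel d ψ x y') (Ici y) y := by
  by_cases ht : (∀ i, x i = 1) ∨ pseudoInv ψ 0 ≤ ∑ i, pseudoInv ψ (x i)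
  · simp only [markovKernel_of_trivial ht]
    exact continuousWithinAt_const
  push Not at ht
  have h := hψ.toIsGenerator
  have hx1 : ¬ ∀ i, x i = 1 := by push Not; exact ht.1
  have hS := sum_pseudoInv_pos h hx hx1
  have hy' : y ∈ Icc (0 : ℝ) 1 := Ico_subset_Icc_self hy
  have hsub : Icc y 1 ⊆ Icc 0 1 := Icc_subset_Icc_left hy.1
  refine ContinuousWithinAt.mono_of_mem_nhdsWithin (t := Icc y 1) ?_ (Icc_mem_nhdsGE hy.2)
  refine ContinuousWithinAt.congr (f := fun y' =>
    topExt d ψ ((∑ i, pseudoInv ψ (x i)) + pseudoInv ψ y') / topExt d ψ (∑ i, pseudoInv ψ (x i)))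
    ?_ (fun v hv => markovKernel_eq hd hψ hx1 ht.2 (hsub hv)) (markovKernel_eq hd hψ hx1 ht.2 hy')
  refine ContinuousWithinAt.div_const ?_ _
  -- as `y'` decreases to `y`, the argument increases to its limit
  refine (topExt_leftCont hd hψ (hS.trans_le le_self_add)).comp (f := fun y' =>
    (∑ i, pseudoInv ψ (x i)) + pseudoInv ψ y')
    (((h.pseudoInv_continuousOn y hy').mono hsub).const_add _) (fun v hv => ?_)
  simp only [mem_Iic]
  gcongr
  exact h.pseudoInv_anti hy' (hsub hv) hv.1

/-- A distribution function on `[0,1]` is that of a probability measure. It is extended by `0` to the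
left, so that `F 0` becomes the mass of the point `0`, and by `1` to the right. -/
lemma exists_measure_of_cdf {F : ℝ → ℝ} (hm : MonotoneOn F (Icc 0 1))
    (hc : ∀ y ∈ Ico (0 : ℝ) 1, ContinuousWithinAt F (Ici y) y) (h1 : F 1 = 1) (h0 : 0 ≤ F 0) :
    ∃ κ : Measure ℝ, IsProbabilityMeasure κ ∧ κ ((Icc (0 : ℝ) 1)ᶜ) = 0 ∧
      ∀ y ∈ Icc (0 : ℝ) 1, (κ (Icc 0 y)).toReal = F y := by
  set G : ℝ → ℝ := fun y => if y < 0 then 0 else F (min y 1) with hG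
  have hGneg : ∀ y, y < 0 → G y = 0 := fun y hy => if_pos hy
  have hGmem : ∀ y ∈ Icc (0 : ℝ) 1, G y = F y := fun y hy => by
    simp only [hG, if_neg (not_lt.2 hy.1), min_eq_left hy.2]
  have hGge : ∀ y, 1 ≤ y → G y = 1 := fun y hy => by
    simp only [hG, if_neg (not_lt.2 (zero_le_one.trans hy)), min_eq_right hy, h1]
  have hFnn : ∀ y ∈ Icc (0 : ℝ) 1, 0 ≤ F y := fun y hy =>
    h0.trans (hm ⟨le_rfl, zero_le_one⟩ hy hy.1)
  have hGmono : Monotone G := by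
    intro a b hab
    simp only [hG]
    split_ifs with ha hb hb
    · exact le_rfl
    · exact hFnn _ ⟨le_min (not_lt.1 hb) zero_le_one, min_le_right _ _⟩
    · linarith
    · exact hm ⟨le_min (not_lt.1 ha) zero_le_one, min_le_right _ _⟩
        ⟨le_min (not_lt.1 hb) zero_le_one, min_le_right _ _⟩ (min_le_min_right _ hab)
  have hGcont : ∀ y, ContinuousWithinAt G (Ici y) y := by
    intro y
    rcases lt_or_ge y 0 with hy | hy
    · refine ContinuousAt.continuousWithinAt ?_
      refine (continuousAt_const (y := (0 : ℝ))).congr ?_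
      filter_upwards [Iio_mem_nhds hy] with v hv using (hGneg v hv).symm
    rcases lt_or_ge y 1 with hy1 | hy1
    · refine ContinuousWithinAt.mono_of_mem_nhdsWithin (t := Icc y 1) ?_ (Icc_mem_nhdsGE hy1)
      exact ((hc y ⟨hy, hy1⟩).mono Icc_subset_Ici_self).congr
        (fun v hv => hGmem v ⟨hy.trans hv.1, hv.2⟩) (hGmem y ⟨hy, hy1.le⟩)
    · exact (continuousWithinAt_const (b := (1 : ℝ))).congr
        (fun v hv => hGge v (hy1.trans hv)) (hGge y hy1)
  let S : StieltjesFunction ℝ := ⟨G, hGmono, hGcont⟩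
  have hSG : ∀ y, S y = G y := fun _ => rfl
  have hbot : Tendsto S atBot (𝓝 0) := by
    refine tendsto_const_nhds.congr' ?_
    filter_upwards [eventually_lt_atBot 0] with v hv
    rw [hSG, hGneg v hv]
  have htop : Tendsto S atTop (𝓝 1) := by
    refine tendsto_const_nhds.congr' ?_
    filter_upwards [eventually_ge_atTop 1] with v hv
    rw [hSG, hGge v hv]
  have hll : Function.leftLim S 0 = 0 := by
    refine leftLim_eq_of_tendsto ?_
    refine tendsto_const_nhds.congr' ?_
    filter_upwards [self_mem_nhdsWithin] with v hv
    rw [hSG, hGneg v hv]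
  have hIcc : ∀ y ∈ Icc (0 : ℝ) 1, S.measure (Icc 0 y) = ENNReal.ofReal (F y) := by
    intro y hy
    rw [S.measure_Icc, hll, sub_zero, hSG, hGmem y hy]
  have hprob : IsProbabilityMeasure S.measure := S.isProbabilityMeasure hbot htop
  refine ⟨S.measure, hprob, ?_, fun y hy => ?_⟩
  · rw [prob_compl_eq_zero_iff measurableSet_Icc, hIcc 1 ⟨zero_le_one, le_rfl⟩, h1,
      ENNReal.ofReal_one]
  · rw [hIcc y hy, ENNReal.toReal_ofReal (hFnn y hy)]

/-! ### Measurability and disintegration -/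

lemma sum_pseudoInv_measurable (h : IsGenerator ψ) (m : ℕ) :
    Measurable fun x : Fin m → ℝ => ∑ i, pseudoInv ψ (x i) :=
  Finset.measurable_sum _ fun i _ => h.pseudoInv_measurable.comp (measurable_pi_apply i)

lemma DpsiExt_measurable : Measurable (DpsiExt d ψ) :=
  Measurable.ite (measurableSet_singleton ∞) measurable_const
    ((leftDeriv_measurable _).comp ENNReal.measurable_toReal)

lemma markovKernel_measurable (h : IsGenerator ψ) (y : ℝ) :
    Measurable (fun x : Fin (d - 1) → ℝ => markovKernel d ψ x y) := by
  have hS := sum_pseudoInv_measurable h (d - 1)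
  have hz : MeasurableSet {x : Fin (d - 1) → ℝ | pseudoInv ψ 0 ≤ ∑ i, pseudoInv ψ (x i)} :=
    measurableSet_le measurable_const hS
  have hf : Measurable (fZero d ψ) :=
    Measurable.ite hz measurable_const
      (h.psiExt_continuous.measurable.comp (measurable_const.sub hS))
  have h1 : MeasurableSet {x : Fin (d - 1) → ℝ | ∀ i, x i = 1} := by
    have : {x : Fin (d - 1) → ℝ | ∀ i, x i = 1} = {fun _ => 1} := by
      ext x; simp [funext_iff]
    rw [this]; exact measurableSet_singleton _
  exact Measurable.ite (h1.union hz) measurable_const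
    (Measurable.ite (measurableSet_lt measurable_const hf) measurable_const
      ((DpsiExt_measurable.comp (hS.add_const _)).div (DpsiExt_measurable.comp hS)))

lemma margDensity_measurable (h : IsGenerator ψ) : Measurable (margDensity d ψ) := by
  have hS := sum_pseudoInv_measurable h (d - 1)
  refine Measurable.ite ?_ ?_ measurable_const
  · refine MeasurableSet.inter ?_ (measurableSet_lt hS measurable_const)
    have : {x : Fin (d - 1) → ℝ | ∀ i, x i ∈ Ioo (0 : ℝ) 1} = univ.pi fun _ => Ioo 0 1 := by
      ext x; simp
    have hm : MeasurableSet {x : Fin (d - 1) → ℝ | ∀ i, x i ∈ Ioo (0 : ℝ) 1} := by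
      rw [this]; exact MeasurableSet.univ_pi fun _ => measurableSet_Ioo
    exact hm
  · refine Measurable.mul ?_ ((leftDeriv_measurable _).comp (ENNReal.measurable_toReal.comp hS))
    exact Finset.measurable_prod _ fun i _ => (measurable_deriv _).comp (measurable_pi_apply i)

/-- The denominator of the kernel cancels against the density, which leaves
`∏ |φ'(sᵢ)| · (-1)^(d-1) D⁻ψ^(d-2)(∑ φ(sᵢ) + φ(y))`. Where `∑ φ(sᵢ) ≥ φ(0)` the density is `0`,
and the right-hand side vanishes as well: for `y ≠ 1` because `∑ φ(sᵢ) + φ(y) > φ(0)`, and for `y = 1` on the hyperplane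
`∑ φ(sᵢ) = φ(0)` thanks to the flag of `famExt`. -/
lemma kernel_mul_density (hd : 3 ≤ d) (hψ : IsdMonotoneGenerator d ψ) {s : Fin (d - 1) → ℝ}
    (hs : ∀ i, s i ∈ Icc (0 : ℝ) 1) {y : ℝ} (hy : y ∈ Icc (0 : ℝ) 1) :
    0 ≤ markovKernel d ψ s y * margDensity d ψ s ∧
    ENNReal.ofReal (markovKernel d ψ s y * margDensity d ψ s) =
      (∏ i, invWeight ψ (s i)) *
        famExt d ψ (y = 1) (d - 1) ((∑ i, pseudoInv ψ (s i)) + pseudoInv ψ y) := by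
  have h := hψ.toIsGenerator
  by_cases hI : ∀ i, s i ∈ Ioo (0 : ℝ) 1
  swap
  · have hc : margDensity d ψ s = 0 := if_neg fun h' => hI h'.1
    push Not at hI
    obtain ⟨i, hi⟩ := hI
    rw [hc, mul_zero, Finset.prod_eq_zero (Finset.mem_univ i) (if_neg hi)]
    simp
  rcases lt_or_ge (∑ i, pseudoInv ψ (s i)) (pseudoInv ψ 0) with hS0 | hS0
  swap
  · have hc : margDensity d ψ s = 0 := if_neg fun h' => absurd h'.2 (not_lt.2 hS0)
    have hz : famExt d ψ (y = 1) (d - 1) ((∑ i, pseudoInv ψ (s i)) + pseudoInv ψ y) = 0 := by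
      have hSt : (∑ i, pseudoInv ψ (s i)) ≠ ∞ :=
        (ENNReal.sum_lt_top.2 fun i _ => lt_top_iff_ne_top.2 (pseudoInv_toReal_pos_lt h (hI i)).2.2).ne
      by_cases hy1 : y = 1
      · subst hy1
        rw [h.pseudoInv_one, add_zero]
        rcases hS0.lt_or_eq with hlt | heq
        · exact famExt_eq_zero_of_lt hd hψ _ le_rfl hlt
        · rw [famExt, if_pos (Or.inr ⟨rfl, heq.symm⟩)]
      · exact famExt_eq_zero_of_lt hd hψ _ le_rfl
          (hS0.trans_lt (ENNReal.lt_add_right hSt (h.pseudoInv_pos hy hy1).ne'))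
    rw [hc, hz]
    simp
  have hx1 : ¬ ∀ i, s i = 1 := fun h' => (hI ⟨0, by omega⟩).2.ne (h' _)
  have hSpos := sum_pseudoInv_pos h hs hx1
  have htop := topExt_pos hd hψ hSpos hS0
  set z := (∑ i, pseudoInv ψ (s i)) + pseudoInv ψ y with hz
  have hcd : margDensity d ψ s = (∏ i, -deriv (fun y => (pseudoInv ψ y).toReal) (s i)) *
      topExt d ψ (∑ i, pseudoInv ψ (s i)) := by
    rw [margDensity, if_pos ⟨hI, hS0⟩, topExt, DpsiExt, if_neg hS0.ne_top, Finset.prod_neg,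
      Finset.card_univ, Fintype.card_fin]
    have : ((-1 : ℝ) ^ (d - 1)) * (-1) ^ (d - 1) = 1 := by rw [← mul_pow]; simp
    linear_combination (-(∏ i, deriv (fun y => (pseudoInv ψ y).toReal) (s i)) *
      leftDeriv (deriv^[d - 2] ψ) (∑ i, pseudoInv ψ (s i)).toReal) * this
  have hprod : markovKernel d ψ s y * margDensity d ψ s =
      (∏ i, -deriv (fun y => (pseudoInv ψ y).toReal) (s i)) * topExt d ψ z := by
    rw [markovKernel_eq hd hψ hx1 hS0 hy, hcd]
    field_simp
    rw [← hz, mul_comm]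
  have hnn : ∀ i ∈ (Finset.univ : Finset (Fin (d - 1))),
      0 ≤ -deriv (fun y => (pseudoInv ψ y).toReal) (s i) := fun i _ =>
    neg_nonneg.2 (deriv_pseudoInv_nonpos hd hψ (hI i))
  have hznn := topExt_nonneg hd hψ (z := z) (hSpos.trans_le le_self_add)
  have hfam : famExt d ψ (y = 1) (d - 1) z = ENNReal.ofReal (topExt d ψ z) := by
    unfold famExt
    split_ifs with h'
    · rcases h' with h' | ⟨h1, h2⟩
      · rw [h', topExt_top, ENNReal.ofReal_zero]
      · subst h1
        rw [hz, h.pseudoInv_one, add_zero] at h2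
        exact absurd h2 hS0.ne
    · push Not at h'
      rw [topExt_of_ne_top h'.1]
  rw [hprod, hfam, ENNReal.ofReal_mul (Finset.prod_nonneg hnn), ENNReal.ofReal_prod_of_nonneg hnn]
  refine ⟨mul_nonneg (Finset.prod_nonneg hnn) hznn, ?_⟩
  congr 1
  exact Finset.prod_congr rfl fun i _ => (if_pos (hI i)).symm

lemma disintegration (hd : 3 ≤ d) (hψ : IsdMonotoneGenerator d ψ) {x : Fin (d - 1) → ℝ}
    (hx : ∀ i, x i ∈ Icc (0 : ℝ) 1) {y : ℝ} (hy : y ∈ Icc (0 : ℝ) 1) :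
    psiExt ψ ((∑ i, pseudoInv ψ (x i)) + pseudoInv ψ y) =
      ∫ s in Set.univ.pi (fun i => Ioc (0 : ℝ) (x i)),
        markovKernel d ψ s y * margDensity d ψ s := by
  have h := hψ.toIsGenerator
  have hms : MeasurableSet (Set.univ.pi (fun i => Ioc (0 : ℝ) (x i))) :=
    MeasurableSet.univ_pi fun _ => measurableSet_Ioc
  have hmem : ∀ s ∈ Set.univ.pi (fun i => Ioc (0 : ℝ) (x i)), ∀ i, s i ∈ Icc (0 : ℝ) 1 :=
    fun s hs i => ⟨(hs i (mem_univ i)).1.le, (hs i (mem_univ i)).2.trans (hx i).2⟩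
  rw [integral_eq_lintegral_of_nonneg_ae
    ((ae_restrict_iff' hms).2 (Eventually.of_forall fun s hs =>
      (kernel_mul_density hd hψ (hmem s hs) hy).1))
    ((markovKernel_measurable h y).mul (margDensity_measurable h)).aestronglyMeasurable]
  have hL : ∫⁻ s in Set.univ.pi (fun i => Ioc (0 : ℝ) (x i)),
      ENNReal.ofReal (markovKernel d ψ s y * margDensity d ψ s) =
      ∫⁻ s : Fin (d - 1) → ℝ, (∏ i, (Ioc 0 (x i)).indicator (invWeight ψ) (s i)) *
        famExt d ψ (y = 1) (0 + (d - 1)) ((∑ i, pseudoInv ψ (s i)) + pseudoInv ψ y) := by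
    rw [← lintegral_indicator hms]
    refine lintegral_congr fun s => ?_
    by_cases hs : s ∈ Set.univ.pi (fun i => Ioc (0 : ℝ) (x i))
    · rw [indicator_of_mem hs, (kernel_mul_density hd hψ (hmem s hs) hy).2, zero_add]
      congr 1
      exact Finset.prod_congr rfl fun i _ => (indicator_of_mem (hs i (mem_univ i)) _).symm
    · rw [indicator_of_notMem hs]
      simp only [mem_univ_pi, not_forall] at hs
      obtain ⟨i, hi⟩ := hs
      rw [Finset.prod_eq_zero (Finset.mem_univ i) (indicator_of_notMem hi _), zero_mul]
  rw [hL, lintegral_pi_invWeight hd hψ _ (d - 1) 0 (by omega) x hx _ (Or.inl rfl),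
    famExt_zero hd hψ, ENNReal.toReal_ofReal (h.psiExt_mem _).1]

end kernel

/-- `K_C` is a `(d-1)`-Markov kernel of the Archimedean copula `C_ψ`. -/
theorem markovKernel_is_kernel_of_archCopula
    (d : ℕ) (hd : 3 ≤ d) (ψ : ℝ → ℝ) (hψ : IsdMonotoneGenerator d ψ) :
    (∀ x : Fin (d - 1) → ℝ, (∀ i, x i ∈ Icc (0 : ℝ) 1) →
      MonotoneOn (fun y => markovKernel d ψ x y) (Icc 0 1) ∧
      (∀ y ∈ Ico (0 : ℝ) 1,
        ContinuousWithinAt (fun y' => markovKernel d ψ x y') (Ici y) y) ∧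
      markovKernel d ψ x 1 = 1 ∧
      (∃ κ : Measure ℝ, IsProbabilityMeasure κ ∧ κ ((Icc (0 : ℝ) 1)ᶜ) = 0 ∧
        ∀ y ∈ Icc (0 : ℝ) 1, (κ (Icc 0 y)).toReal = markovKernel d ψ x y)) ∧
    (∀ y ∈ Icc (0 : ℝ) 1,
      Measurable (fun x : Fin (d - 1) → ℝ => markovKernel d ψ x y)) ∧
    (∀ x : Fin (d - 1) → ℝ, (∀ i, x i ∈ Icc (0 : ℝ) 1) → ∀ y ∈ Icc (0 : ℝ) 1,
      psiExt ψ ((∑ i, pseudoInv ψ (x i)) + pseudoInv ψ y) =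
        ∫ s in Set.univ.pi (fun i => Ioc (0 : ℝ) (x i)),
          markovKernel d ψ s y * margDensity d ψ s) := by
  have h := hψ.toIsGenerator
  refine ⟨fun x hx => ⟨markovKernel_monotoneOn hd hψ hx,
    fun y hy => markovKernel_rightCont hd hψ hx hy, markovKernel_one hd hψ hx, ?_⟩,
    fun y _ => markovKernel_measurable h y, fun x hx y hy => disintegration hd hψ hx hy⟩
  exact exists_measure_of_cdf (markovKernel_monotoneOn hd hψ hx)
    (fun y hy => markovKernel_rightCont hd hψ hx hy) (markovKernel_one hd hψ hx)
    (markovKernel_nonneg hd hψ hx IsGenerator.zero_mem)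
end
end

section
/- Let d ≥ 3, let ψ be a d-monotone Archimedean generator with pseudo-inverse φ, C = C_ψ, and let μ_C be the associated d-stochastic measure. Then for every t ∈ (0,1): μ_C(L_t) = ((−φ(t))^{d−1}/(d−1)!) · (D^−ψ^{(d−2)}(φ(t)) − D^+ψ^{(d−2)}(φ(t))), where D^+ψ^{(d−2)}(φ(t)) denotes the right-hand derivative of ψ^{(d−2)} at φ(t) (equivalently, the right-hand limit of D^−ψ^{(d−2)} at φ(t)). Moreover, if ψ is strict then μ_C(L_0) = 0, and if ψ is non-strict (i.e. φ(0) < ∞) then μ_C(L_0) = ((−φ(0))^{d−1}/(d−1)!) · D^−ψ^{(d−2)}(φ(0)). -/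
/-!
In the coordinates `z i = φ(x i)` the copula measure becomes a probability measure `ν` on the positive
orthant with joint survival function `ν {z ≥ a} = ψ(∑ a)` (`survival`), and the level set `L_t` with
`t > 0` becomes the simplex `∑ z = φ(t)`, up to a null set (`measure_levelSet`). It remains to find
`ν {∑ z = r}` for `r = φ(t)`.

Cut the orthant into cubes of side `h`. By inclusion–exclusion the cube with corner `a` has mass
`((-Δ_h)^d ψ)(∑ a)` (`measure_box`), which depends only on `∑ a`, so the mass of the cubes whose corners
have integer coordinate sum `m` is `((-Δ_h)^d ψ)(h m)` times the binomial coefficient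
`(m + d - 1).choose (d - 1)` (`measure_slab`). Choose `h` so that `r` is a multiple of `h`. The simplex
`∑ z = r` is then covered by `d` consecutive such families, whose union shrinks to the simplex as
`h → 0`. The masses of single cubes telescope to a difference of `(-Δ_h)^(d-1) ψ` across `r`, which,
divided by `h^(d-1)`, tends to the jump of the one-sided derivatives of `(-1)^(d-2) ψ^(d-2)` at `r`
(`tendsto_jump`, from the mean value theorem). The binomial coefficients times `h^(d-1)` all tend to
`r^(d-1) / (d-1)!`, and a squeeze gives the mass (`measure_simplex`).

For `t = 0` in the non-strict case the level set becomes `∑ z ≥ φ(0)`. The part `∑ z > φ(0)` is null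
(`measure_gt_zero`), and the right derivative at `φ(0)` vanishes (`rightDeriv_eq_zero`). In the strict
case the level set lies in the null set where some coordinate is `0`.
-/

open MeasureTheory Set Filter Topology
open scoped ENNReal NNReal Classical

noncomputable section

namespace LevelSetMass

/-! ### Finite differences -/

/-- The negated forward difference `(-Δ_h g)(x) = g x - g (x + h)`. -/
def negDiff (h : ℝ) (g : ℝ → ℝ) : ℝ → ℝ := fun x => g x - g (x + h)

/-- Mean value theorem for iterated differences: `(-Δ_h)^k G₀ (y) = (-h)^k G₀⁽ᵏ⁾(ξ)`. The derivatives
are given as a family `G`, since the induction replaces `G` by `-Δ_h G`. -/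
lemma exists_negDiff_iterate_eq (k : ℕ) : ∀ (G : ℕ → ℝ → ℝ),
    (∀ i < k, ∀ y > 0, HasDerivAt (G i) (G (i + 1) y) y) → ∀ y : ℝ, 0 < y → ∀ h : ℝ, 0 < h →
    ∃ ξ ∈ Icc y (y + k * h), (negDiff h)^[k] (G 0) y = (-h) ^ k * G k ξ := by
  induction k with
  | zero => intro G _ y _ h _; exact ⟨y, by simp, by simp⟩
  | succ k ih =>
    intro G hG y hy h hh
    obtain ⟨ξ, hξ, e⟩ := ih (fun i => negDiff h (G i)) (fun i hi z hz => by
      have h1 := hG i (by omega) z hz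
      have h2 := hG i (by omega) (z + h) (by positivity)
      exact h1.sub (h2.comp_add_const z h)) y hy h hh
    have hξ0 : 0 < ξ := hy.trans_le hξ.1
    obtain ⟨η, hη, e2⟩ := exists_hasDerivAt_eq_slope (G k) (G (k + 1)) (show ξ < ξ + h by linarith)
      (fun z hz => (hG k (by omega) z (hξ0.trans_le hz.1)).continuousAt.continuousWithinAt)
      (fun z hz => hG k (by omega) z (hξ0.trans hz.1))
    refine ⟨η, ⟨hξ.1.trans hη.1.le, ?_⟩, ?_⟩
    · have := hξ.2; have := hη.2; push_cast; linarith
    · rw [add_sub_cancel_left, eq_div_iff hh.ne'] at e2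
      rw [Function.iterate_succ_apply, e, pow_succ]
      simp only [negDiff]
      linear_combination (-h) ^ k * e2

/-- Straddle lemma on one side of `r`: secants of step `h → 0` whose endpoints stay in `s`, within
`O(h)` of `r`, have slopes converging to the derivative within `s`. -/
lemma tendsto_secant {f : ℝ → ℝ} {D r C : ℝ} {s : Set ℝ} (hf : HasDerivWithinAt f D s r)
    {u v h : ℕ → ℝ} (hpos : ∀ n, 0 < h n) (hh : Tendsto h atTop (𝓝 0))
    (huv : ∀ n, u n - v n = h n) (hu : ∀ n, u n ∈ s) (hv : ∀ n, v n ∈ s)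
    (hur : ∀ n, |u n - r| ≤ C * h n) (hvr : ∀ n, |v n - r| ≤ C * h n) :
    Tendsto (fun n => (f (u n) - f (v n)) / h n) atTop (𝓝 D) := by
  have key : ∀ w : ℕ → ℝ, (∀ n, w n ∈ s) → (∀ n, |w n - r| ≤ C * h n) →
      (fun n => f (w n) - f r - (w n - r) * D) =o[atTop] h := by
    intro w hw hwr
    have hO : (fun n => w n - r) =O[atTop] h :=
      Asymptotics.IsBigO.of_bound C (Eventually.of_forall fun n => by
        simpa [abs_of_pos (hpos n)] using hwr n)
    have hlim : Tendsto w atTop (𝓝[s] r) := by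
      rw [tendsto_nhdsWithin_iff]
      refine ⟨?_, Eventually.of_forall hw⟩
      have := hO.trans_tendsto hh
      simpa using this.add_const r
    have := hf.isLittleO.comp_tendsto hlim
    exact (this.congr_left (fun n => by simp)).trans_isBigO hO
  have h0 := ((key u hu hur).sub (key v hv hvr)).tendsto_div_nhds_zero
  have := h0.add_const D
  rw [zero_add] at this
  refine this.congr fun n => ?_
  have hn := (hpos n).ne'
  field_simp
  linear_combination (-D) * huv n

lemma tendsto_choose_mul_pow (c k : ℕ) (a r : ℝ) :
    Tendsto (fun K : ℕ => ((K + c).choose k : ℝ) * (r / (K + a)) ^ k) atTop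
      (𝓝 (r ^ k / k.factorial)) := by
  have h1 : Tendsto (fun n : ℕ => (n.choose k : ℝ) / n ^ k) atTop (𝓝 (1 / k.factorial)) := by
    have := (isEquivalent_choose k)
    have h2 : Tendsto (fun n : ℕ => ((n.choose k : ℝ) / (n ^ k / k.factorial))) atTop (𝓝 1) := by
      refine (Asymptotics.isEquivalent_iff_tendsto_one ?_).1 this
      filter_upwards [eventually_gt_atTop 0] with n hn
      positivity
    refine (h2.div_const (k.factorial : ℝ)).congr fun n => ?_
    field_simp
  have h2 := h1.comp (tendsto_add_atTop_nat c)
  have h3 : Tendsto (fun K : ℕ => ((K : ℝ) + c) / (K + a)) atTop (𝓝 1) := by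
    have e : Tendsto (fun K : ℕ => 1 + ((c : ℝ) - a) / (K + a)) atTop (𝓝 (1 + 0)) :=
      tendsto_const_nhds.add (tendsto_const_nhds.div_atTop
        (tendsto_atTop_add_const_right _ _ tendsto_natCast_atTop_atTop))
    rw [add_zero] at e
    refine e.congr' ?_
    filter_upwards [(tendsto_atTop_add_const_right atTop a
      tendsto_natCast_atTop_atTop).eventually_gt_atTop (0 : ℝ)] with K hK
    field_simp
    ring
  have h4 := h2.mul ((h3.pow k).mul_const (r ^ k))
  have e : 1 / (k.factorial : ℝ) * (1 ^ k * r ^ k) = r ^ k / k.factorial := by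
    rw [one_pow]; ring
  rw [e] at h4
  refine h4.congr' ?_
  filter_upwards [eventually_gt_atTop 0] with K hK
  have : (0 : ℝ) < (K : ℝ) + c := by positivity
  simp only [Function.comp_apply, Nat.cast_add, div_pow]
  field_simp

/-! ### Cells -/

section Cells

variable {d : ℕ} {ψ : ℝ → ℝ} {ν : Measure (Fin d → ℝ)}

/-- Inclusion–exclusion for boxes, one coordinate at a time. -/
lemma measure_box [IsProbabilityMeasure ν]
    (hν : ∀ a : Fin d → ℝ, (∀ i, 0 ≤ a i) → ν.real {z | ∀ i, a i ≤ z i} = ψ (∑ i, a i))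
    {h : ℝ} (hh : 0 < h) (s : Finset (Fin d)) : ∀ a : Fin d → ℝ, (∀ i, 0 ≤ a i) →
    ν.real {z | (∀ i, a i ≤ z i) ∧ ∀ i ∈ s, z i < a i + h} =
      (negDiff h)^[s.card] ψ (∑ i, a i) := by
  induction s using Finset.induction_on with
  | empty => intro a ha; simpa using hν a ha
  | insert j s hj ih =>
    intro a ha
    have hb : ∀ i, 0 ≤ Function.update a j (a j + h) i := by
      intro i
      by_cases hi : i = j
      · subst hi; simpa using add_nonneg (ha i) hh.le
      · simpa [hi] using ha i
    have hsum : ∑ i, Function.update a j (a j + h) i = ∑ i, a i + h := by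
      rw [Finset.sum_update_of_mem (Finset.mem_univ j),
        ← Finset.add_sum_erase _ _ (Finset.mem_univ j), Finset.sdiff_singleton_eq_erase]
      ring
    rw [Finset.card_insert_of_notMem hj, Function.iterate_succ_apply']
    have h1 := ih a ha
    have h2 := ih _ hb
    rw [hsum] at h2
    unfold negDiff at h1 h2 ⊢
    rw [← h1, ← h2, ← measureReal_sdiff]
    · congr 1
      ext z
      simp only [mem_ofPred_eq, Set.mem_sdiff, Finset.mem_insert, forall_eq_or_imp]
      constructor
      · rintro ⟨h3, h4, h5⟩
        refine ⟨⟨h3, h5⟩, fun h6 => ?_⟩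
        have := h6.1 j
        simp at this
        linarith
      · rintro ⟨⟨h3, h5⟩, h6⟩
        refine ⟨h3, ?_, h5⟩
        by_contra h7
        refine h6 ⟨fun i => ?_, fun i hi => ?_⟩
        · by_cases hi : i = j
          · subst hi; simpa using h7
          · simpa [hi] using h3 i
        · have : i ≠ j := fun e => hj (e ▸ hi)
          simpa [this] using h5 i hi
    · rintro z ⟨h3, h5⟩
      refine ⟨fun i => ?_, fun i hi => ?_⟩
      · by_cases hi : i = j
        · subst hi; have := h3 i; simp at this; linarith
        · simpa [hi] using h3 i
      · have : i ≠ j := fun e => hj (e ▸ hi)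
        simpa [this] using h5 i hi
    · measurability

/-- The points of the orthant whose grid cell of mesh `h` has integer corner of coordinate sum
`m`. -/
def slab (d : ℕ) (h : ℝ) (m : ℕ) : Set (Fin d → ℝ) :=
  {z | (∀ i, 0 ≤ z i) ∧ ∑ i, ⌊z i / h⌋₊ = m}

lemma measurableSet_slab (h : ℝ) (m : ℕ) : MeasurableSet (slab d h m) := by
  have h1 : MeasurableSet {z : Fin d → ℝ | ∀ i, 0 ≤ z i} := by measurability
  have h2 : Measurable fun z : Fin d → ℝ => ∑ i, ⌊z i / h⌋₊ :=
    Finset.measurable_sum _ fun i _ => by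
      have : Measurable fun z : Fin d → ℝ => z i / h := by fun_prop
      exact Nat.measurable_floor.comp this
  exact h1.inter (h2 (measurableSet_singleton m))

/-- All cells of a slab have the same mass, and stars and bars counts them. -/
lemma measure_slab [IsProbabilityMeasure ν] (hd : 1 ≤ d)
    (hν : ∀ a : Fin d → ℝ, (∀ i, 0 ≤ a i) → ν.real {z | ∀ i, a i ≤ z i} = ψ (∑ i, a i))
    {h : ℝ} (hh : 0 < h) (m : ℕ) :
    ν.real (slab d h m) = ((m + (d - 1)).choose (d - 1) : ℝ) * (negDiff h)^[d] ψ (h * m) := by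
  let cell : (Fin d →₀ ℕ) → Set (Fin d → ℝ) := fun n =>
    {z | (∀ i, h * n i ≤ z i) ∧ ∀ i ∈ Finset.univ, z i < h * n i + h}
  have hcell : ∀ n z, z ∈ cell n ↔ (∀ i, 0 ≤ z i) ∧ ∀ i, ⌊z i / h⌋₊ = n i := by
    intro n z
    constructor
    · rintro ⟨h1, h2⟩
      have h0 : ∀ i, 0 ≤ z i := fun i => le_trans (by positivity) (h1 i)
      refine ⟨h0, fun i => ?_⟩
      rw [Nat.floor_eq_iff (div_nonneg (h0 i) hh.le), le_div_iff₀ hh, div_lt_iff₀ hh]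
      have := h1 i
      have := h2 i (Finset.mem_univ i)
      constructor <;> linarith
    · rintro ⟨h0, h1⟩
      have h2 : ∀ i, h * n i ≤ z i ∧ z i < h * n i + h := fun i => by
        have := h1 i
        rw [Nat.floor_eq_iff (div_nonneg (h0 i) hh.le), le_div_iff₀ hh, div_lt_iff₀ hh] at this
        constructor <;> linarith [this.1, this.2]
      exact ⟨fun i => (h2 i).1, fun i _ => (h2 i).2⟩
  have hU : slab d h m = ⋃ n ∈ Finset.finsuppAntidiag (Finset.univ : Finset (Fin d)) m, cell n := by
    ext z
    simp only [slab, mem_ofPred_eq, mem_iUnion, Finset.mem_finsuppAntidiag, exists_prop, hcell]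
    constructor
    · rintro ⟨h0, h1⟩
      exact ⟨Finsupp.equivFunOnFinite.symm fun i => ⌊z i / h⌋₊, ⟨by simpa using h1, by simp⟩, h0,
        fun i => by simp⟩
    · rintro ⟨n, ⟨h1, _⟩, h0, h2⟩
      exact ⟨h0, by simpa [h2] using h1⟩
  rw [hU, measureReal_biUnion_finset]
  · have : ∀ n ∈ Finset.finsuppAntidiag (Finset.univ : Finset (Fin d)) m,
        ν.real (cell n) = (negDiff h)^[d] ψ (h * m) := by
      intro n hn
      have h1 := measure_box hν hh Finset.univ (fun i => h * n i) (fun i => by positivity)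
      simp only [Finset.mem_finsuppAntidiag] at hn
      rw [← Finset.mul_sum, ← Nat.cast_sum, hn.1, Finset.card_univ, Fintype.card_fin] at h1
      exact h1
    rw [Finset.sum_congr rfl this, Finset.sum_const, nsmul_eq_mul,
      Finset.card_finsuppAntidiag_nat_eq_choose, Finset.card_univ, Fintype.card_fin,
      Nat.choose_symm_of_eq_add (show d + m - 1 = m + (d - 1) by omega)]
    congr 3
    omega
  · intro n _ n' _ hne
    refine Set.disjoint_left.2 fun z h1 h2 => hne ?_
    rw [hcell] at h1 h2
    ext i
    rw [← h1.2 i, h2.2 i]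
  · intro n _
    simp only [cell]
    measurability
/-! ### The atom of the radial part -/

/-- The second-order difference of `G₀⁽ⁿ⁾` straddling `r` isolates the jump of its one-sided
derivatives. -/
lemma tendsto_jump {n : ℕ} {G : ℕ → ℝ → ℝ} {r DL DR : ℝ} (hr : 0 < r)
    (hG : ∀ i < n, ∀ y > 0, HasDerivAt (G i) (G (i + 1) y) y)
    (hL : HasDerivWithinAt (G n) DL (Iic r) r) (hR : HasDerivWithinAt (G n) DR (Ici r) r)
    {h : ℕ → ℝ} (hpos : ∀ K, 0 < h K) (hh : Tendsto h atTop (𝓝 0))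
    (hlt : ∀ K, (n + 1) * h K < r) :
    Tendsto (fun K => ((negDiff (h K))^[n + 1] (G 0) (r - (n + 1) * h K)
      - (negDiff (h K))^[n + 1] (G 0) (r + h K)) / h K ^ (n + 1)) atTop
      (𝓝 ((-1) ^ n * (DR - DL))) := by
  have mvt : ∀ K, ∀ y > 0, ∃ ξ ∈ Icc y (y + n * h K), (negDiff (h K))^[n + 1] (G 0) y =
      (-h K) ^ n * (G n ξ - G n (ξ + h K)) := fun K y hy =>
    exists_negDiff_iterate_eq n (fun i => negDiff (h K) (G i)) (fun i hi z hz => by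
      have h1 := hG i hi z hz
      have h2 := hG i hi (z + h K) (add_pos hz (hpos K))
      exact h1.sub (h2.comp_add_const z (h K))) y hy (h K) (hpos K)
  choose ξ hξ eξ using fun K => mvt K (r - (n + 1) * h K) (by have := hlt K; linarith)
  choose η hη eη using fun K => mvt K (r + h K) (by have := hpos K; linarith)
  have nn : (0 : ℝ) ≤ n := by positivity
  have bξ : ∀ K, r - (n + 1) * h K ≤ ξ K ∧ ξ K + h K ≤ r := fun K => by
    have := hξ K; exact ⟨this.1, by linarith [this.2]⟩
  have bη : ∀ K, r + h K ≤ η K ∧ η K + h K ≤ r + (n + 2) * h K := fun K => by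
    have := hη K; exact ⟨this.1, by linarith [this.2]⟩
  have np : ∀ K, 0 ≤ n * h K := fun K => mul_nonneg nn (hpos K).le
  have t1 := tendsto_secant (C := n + 2) hL (u := fun K => ξ K + h K) (v := ξ) hpos hh
    (fun K => by ring) (fun K => (bξ K).2)
    (fun K => by have := bξ K; have := hpos K; simp only [mem_Iic]; linarith)
    (fun K => by
      have := bξ K; have := hpos K; have := np K
      rw [abs_le]; constructor <;> linarith)
    (fun K => by
      have := bξ K; have := hpos K; have := np K
      rw [abs_le]; constructor <;> linarith)
  have t2 := tendsto_secant (C := n + 2) hR (u := fun K => η K + h K) (v := η) hpos hh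
    (fun K => by ring)
    (fun K => by have := bη K; have := hpos K; simp only [mem_Ici]; linarith)
    (fun K => by have := bη K; have := hpos K; simp only [mem_Ici]; linarith)
    (fun K => by
      have := bη K; have := hpos K; have := np K
      rw [abs_le]; constructor <;> linarith)
    (fun K => by
      have := bη K; have := hpos K; have := np K
      rw [abs_le]; constructor <;> linarith)
  refine ((t2.sub t1).const_mul ((-1 : ℝ) ^ n)).congr fun K => ?_
  have hn := (hpos K).ne'
  rw [eξ, eη, neg_pow, pow_succ]
  field_simp
  ring

/-- Mass of the simplex `∑ z = r`: for mesh `h = r / (K + n + 2)` it lies in `n + 2` consecutive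
slabs, which in turn lie within `O(h)` of it. -/
lemma measure_simplex {n : ℕ} {G : ℕ → ℝ → ℝ} {ν : Measure (Fin (n + 2) → ℝ)}
    [IsProbabilityMeasure ν] {r DL DR : ℝ} (hr : 0 < r)
    (hν : ∀ a : Fin (n + 2) → ℝ, (∀ i, 0 ≤ a i) → ν.real {z | ∀ i, a i ≤ z i} = G 0 (∑ i, a i))
    (hG : ∀ i < n, ∀ y > 0, HasDerivAt (G i) (G (i + 1) y) y)
    (hL : HasDerivWithinAt (G n) DL (Iic r) r) (hR : HasDerivWithinAt (G n) DR (Ici r) r) :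
    ν.real {z | (∀ i, 0 ≤ z i) ∧ ∑ i, z i = r} =
      r ^ (n + 1) / (n + 1).factorial * ((-1) ^ n * (DR - DL)) := by
  set h : ℕ → ℝ := fun K => r / (K + (n + 2 : ℝ)) with hdef
  have hpos : ∀ K, 0 < h K := fun K => by simp only [hdef]; positivity
  have hmul : ∀ K, h K * (K + (n + 2 : ℝ)) = r := fun K => by
    simp only [hdef]; field_simp
  have hh : Tendsto h atTop (𝓝 0) :=
    tendsto_const_nhds.div_atTop
      (tendsto_atTop_add_const_right _ _ tendsto_natCast_atTop_atTop)
  have hlt : ∀ K, (n + 1) * h K < r := fun K => by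
    have h1 := hmul K
    have h2 := hpos K
    have h3 : 0 ≤ h K * K := by positivity
    nlinarith
  set S : Set (Fin (n + 2) → ℝ) := {z | (∀ i, 0 ≤ z i) ∧ ∑ i, z i = r} with hS
  set A : ℕ → ℝ := fun K => (negDiff (h K))^[n + 1] (G 0) (r - (n + 1) * h K)
      - (negDiff (h K))^[n + 1] (G 0) (r + h K) with hA
  have hjump : Tendsto (fun K => A K / h K ^ (n + 1)) atTop (𝓝 ((-1) ^ n * (DR - DL))) :=
    tendsto_jump hr hG hL hR hpos hh hlt
  let E : ℕ → Set (Fin (n + 2) → ℝ) := fun K =>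
    ⋃ j ∈ Finset.range (n + 2), slab (n + 2) (h K) (K + 1 + j)
  let N : ℕ → Set (Fin (n + 2) → ℝ) := fun K =>
    {z | (∀ i, 0 ≤ z i) ∧ |∑ i, z i - r| ≤ (n + 2) * h K}
  have floor_bd : ∀ K (z : Fin (n + 2) → ℝ), (∀ i, 0 ≤ z i) →
      h K * (∑ i, ⌊z i / h K⌋₊ : ℕ) ≤ ∑ i, z i ∧
      ∑ i, z i < h K * (∑ i, ⌊z i / h K⌋₊ : ℕ) + (n + 2) * h K := by
    intro K z hz
    have hp := hpos K
    rw [Nat.cast_sum, Finset.mul_sum]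
    constructor
    · refine Finset.sum_le_sum fun i _ => ?_
      have := Nat.floor_le (div_nonneg (hz i) hp.le)
      rw [le_div_iff₀ hp] at this
      linarith
    · have : ((n : ℝ) + 2) * h K = ∑ _i : Fin (n + 2), h K := by simp
      rw [this, ← Finset.sum_add_distrib]
      refine Finset.sum_lt_sum_of_nonempty Finset.univ_nonempty fun i _ => ?_
      have := Nat.lt_floor_add_one (z i / h K)
      rw [div_lt_iff₀ hp] at this
      linarith
  have hSE : ∀ K, S ⊆ E K := by
    rintro K z ⟨hz, hzr⟩
    obtain ⟨h1, h2⟩ := floor_bd K z hz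
    rw [hzr, ← hmul K] at h1 h2
    have hp := hpos K
    set m := ∑ i, ⌊z i / h K⌋₊ with hm
    have h3 : (m : ℝ) ≤ K + (n + 2) := le_of_mul_le_mul_left h1 hp
    have h4 : (K : ℝ) < m := by
      by_contra! hc
      have := mul_le_mul_of_nonneg_left hc hp.le
      linarith
    have h3' : m ≤ K + (n + 2) := by exact_mod_cast h3
    have h4' : K < m := by exact_mod_cast h4
    simp only [E, mem_iUnion, Finset.mem_range]
    exact ⟨m - (K + 1), by omega, hz, by rw [← hm]; omega⟩
  have hEN : ∀ K, E K ⊆ N K := by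
    intro K z hz
    simp only [E, mem_iUnion, Finset.mem_range] at hz
    obtain ⟨j, hj, hz, hs⟩ := hz
    refine ⟨hz, ?_⟩
    obtain ⟨h1, h2⟩ := floor_bd K z hz
    rw [hs] at h1 h2
    push_cast at h1 h2
    have hp := hpos K
    have hr' := hmul K
    have hj' : (j : ℝ) ≤ n + 1 := by exact_mod_cast Nat.lt_succ_iff.1 hj
    have h5 := mul_le_mul_of_nonneg_left hj' hp.le
    have h6 : 0 ≤ h K * j := by positivity
    have h7 : 0 ≤ h K * n := by positivity
    rw [abs_le]
    constructor <;> nlinarith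
  have hNS : Tendsto (fun K => ν.real (N K)) atTop (𝓝 (ν.real S)) := by
    have hmeas : ∀ K, MeasurableSet (N K) := fun K => by
      have h1 : MeasurableSet {z : Fin (n + 2) → ℝ | ∀ i, 0 ≤ z i} := by measurability
      exact h1.inter (measurableSet_le ((Finset.measurable_sum _ fun i _ =>
        measurable_pi_apply i).sub_const r).abs measurable_const)
    have hanti : Antitone N := by
      rintro K L hKL z ⟨hz, h1⟩
      refine ⟨hz, h1.trans ?_⟩
      have : (K : ℝ) ≤ L := by exact_mod_cast hKL
      simp only [hdef]
      gcongr
    have hI : ⋂ K, N K = S := by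
      ext z
      simp only [N, hS, mem_iInter, mem_ofPred_eq]
      constructor
      · intro hz
        refine ⟨(hz 0).1, ?_⟩
        have := ge_of_tendsto' (hh.const_mul ((n : ℝ) + 2)) fun K => (hz K).2
        rw [mul_zero] at this
        exact sub_eq_zero.1 (abs_nonpos_iff.1 this)
      · rintro ⟨hz, h1⟩ K
        refine ⟨hz, ?_⟩
        have := hpos K
        rw [h1, sub_self, abs_zero]
        positivity
    have := tendsto_measure_iInter_atTop (μ := ν) (fun K => (hmeas K).nullMeasurableSet) hanti
      ⟨0, measure_ne_top _ _⟩
    rw [hI] at this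
    exact (ENNReal.tendsto_toReal (measure_ne_top _ _)).comp this
  have hE_S : Tendsto (fun K => ν.real (E K)) atTop (𝓝 (ν.real S)) :=
    tendsto_of_tendsto_of_tendsto_of_le_of_le tendsto_const_nhds hNS
      (fun K => measureReal_mono (hSE K) (measure_ne_top _ _)) (fun K => measureReal_mono (hEN K) (measure_ne_top _ _))
  have hE : ∀ K, ν.real (E K) = ∑ j ∈ Finset.range (n + 2),
      ((K + 1 + j + (n + 1)).choose (n + 1) : ℝ) *
        (negDiff (h K))^[n + 2] (G 0) (h K * (K + 1 + j : ℕ)) := by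
    intro K
    simp only [E]
    rw [measureReal_biUnion_finset]
    · exact Finset.sum_congr rfl fun j _ => measure_slab (by omega) hν (hpos K) _
    · intro j _ j' _ hne
      refine Set.disjoint_left.2 fun z h1 h2 => hne ?_
      have := h1.2.symm.trans h2.2
      omega
    · exact fun j _ => measurableSet_slab _ _
  have hterm : ∀ K j, 0 ≤ (negDiff (h K))^[n + 2] (G 0) (h K * (K + 1 + j : ℕ)) := by
    intro K j
    have h1 := measure_slab (by omega) hν (hpos K) (K + 1 + j)
    refine nonneg_of_mul_nonneg_right (h1 ▸ measureReal_nonneg) ?_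
    exact_mod_cast Nat.choose_pos (by omega)
  -- The masses of single cells telescope along the `n + 2` slabs.
  have htel : ∀ K, ∑ j ∈ Finset.range (n + 2),
      (negDiff (h K))^[n + 2] (G 0) (h K * (K + 1 + j : ℕ)) = A K := by
    intro K
    have h1 : ∀ j : ℕ, (negDiff (h K))^[n + 2] (G 0) (h K * (K + 1 + j : ℕ)) =
        (negDiff (h K))^[n + 1] (G 0) (h K * (K + 1 + j : ℕ)) -
        (negDiff (h K))^[n + 1] (G 0) (h K * (K + 1 + (j + 1) : ℕ)) := by
      intro j
      rw [Function.iterate_succ_apply']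
      have e : h K * (K + 1 + j : ℕ) + h K = h K * (K + 1 + (j + 1) : ℕ) := by
        push_cast; ring
      rw [← e]
      rfl
    rw [Finset.sum_congr rfl fun j _ => h1 j,
      Finset.sum_range_sub' (fun j => (negDiff (h K))^[n + 1] (G 0) (h K * (K + 1 + j : ℕ)))]
    simp only [hA]
    have e1 : h K * (K + 1 + 0 : ℕ) = r - (n + 1) * h K := by
      push_cast; linear_combination hmul K
    have e2 : h K * (K + 1 + (n + 2) : ℕ) = r + h K := by
      push_cast; linear_combination hmul K
    rw [e1, e2]
  have lo : ∀ K, ((K + (n + 1)).choose (n + 1) : ℝ) * A K ≤ ν.real (E K) := by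
    intro K
    rw [hE, ← htel, Finset.mul_sum]
    refine Finset.sum_le_sum fun j _ => mul_le_mul_of_nonneg_right ?_ (hterm K j)
    exact_mod_cast Nat.choose_le_choose _ (by omega)
  have hi : ∀ K, ν.real (E K) ≤ ((K + (2 * n + 3)).choose (n + 1) : ℝ) * A K := by
    intro K
    rw [hE, ← htel, Finset.mul_sum]
    refine Finset.sum_le_sum fun j hj => mul_le_mul_of_nonneg_right ?_ (hterm K j)
    rw [Finset.mem_range] at hj
    exact_mod_cast Nat.choose_le_choose _ (by omega)
  have lim : ∀ c : ℕ, Tendsto (fun K => ((K + c).choose (n + 1) : ℝ) * A K) atTop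
      (𝓝 (r ^ (n + 1) / (n + 1).factorial * ((-1) ^ n * (DR - DL)))) := by
    intro c
    refine ((tendsto_choose_mul_pow c (n + 1) (n + 2) r).mul hjump).congr fun K => ?_
    have := (hpos K).ne'
    change _ * h K ^ (n + 1) * _ = _
    field_simp
  exact tendsto_nhds_unique hE_S
    (tendsto_of_tendsto_of_tendsto_of_le_of_le (lim _) (lim _) lo hi)

/-- No mass lies beyond a zero of `ψ`: the orthants `z ≥ q` with rational corner `q`, `∑ q > r`,
are null. -/
lemma measure_gt_zero [IsProbabilityMeasure ν]
    (hν : ∀ a : Fin d → ℝ, (∀ i, 0 ≤ a i) → ν.real {z | ∀ i, a i ≤ z i} = ψ (∑ i, a i))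
    {r : ℝ} (hψ : ∀ y, r < y → ψ y = 0) :
    ν {z | (∀ i, 0 ≤ z i) ∧ r < ∑ i, z i} = 0 := by
  have hsub : {z : Fin d → ℝ | (∀ i, 0 ≤ z i) ∧ r < ∑ i, z i} ⊆
      ⋃ p : ℕ × (Fin d → ℕ), ⋃ _ : r < ∑ i, (p.2 i : ℝ) / (p.1 + 1),
        {z | ∀ i, (p.2 i : ℝ) / (p.1 + 1) ≤ z i} := by
    rintro z ⟨hz, hr⟩
    have ht : Tendsto (fun M : ℕ => ∑ i, (⌊z i * ((M : ℝ) + 1)⌋₊ : ℝ) / (M + 1)) atTop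
        (𝓝 (∑ i, z i)) := by
      refine tendsto_finsetSum _ fun i _ => ?_
      exact (tendsto_nat_floor_mul_div_atTop (hz i)).comp
        (tendsto_atTop_add_const_right _ 1 tendsto_natCast_atTop_atTop)
    obtain ⟨M, hM⟩ := (ht.eventually_const_lt hr).exists
    simp only [mem_iUnion]
    refine ⟨(M, fun i => ⌊z i * ((M : ℝ) + 1)⌋₊), hM, fun i => ?_⟩
    have hp : (0 : ℝ) < M + 1 := by positivity
    rw [div_le_iff₀ hp]
    exact Nat.floor_le (mul_nonneg (hz i) hp.le)
  refine measure_mono_null hsub ?_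
  simp only [measure_iUnion_null_iff]
  intro p hp
  have := hν (fun i => (p.2 i : ℝ) / (p.1 + 1)) (fun i => by positivity)
  rw [hψ _ hp] at this
  exact (measureReal_eq_zero_iff).1 this

end Cells
/-! ### Generators and pseudo-inverses -/

section Generator

variable {ψ : ℝ → ℝ}

/-- A generator is strictly decreasing as long as it is positive. -/
lemma generator_lt (hψ : IsGenerator ψ) {z a : ℝ} (hz : 0 ≤ z) (hza : z < a) (hpos : 0 < ψ z) :
    ψ a < ψ z := by
  refine lt_of_le_of_ne (hψ.antitoneOn hz (hz.trans hza.le) hza.le) fun e => ?_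
  refine (hψ.strictAnti hz hza (le_sInf fun w hw => ?_)).ne e
  by_cases hw' : w = ∞
  · simp [hw']
  · rw [← ENNReal.ofReal_toReal hw']
    refine ENNReal.ofReal_le_ofReal ?_
    by_contra! hlt
    have h0 : ψ w.toReal = 0 := by simpa [psiExt, hw'] using hw
    have := hψ.antitoneOn (show w.toReal ∈ Ici 0 from ENNReal.toReal_nonneg)
      (hz.trans hza.le) hlt.le
    rw [e, h0] at this
    exact this.not_gt hpos

lemma pseudoInv_apply (hψ : IsGenerator ψ) {z : ℝ} (hz : 0 ≤ z) (hpos : 0 < ψ z) :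
    pseudoInv ψ (ψ z) = ENNReal.ofReal z := by
  refine le_antisymm (sInf_le ?_) (le_sInf fun w hw => ?_)
  · simp [psiExt, ENNReal.toReal_ofReal hz]
  · by_cases hw' : w = ∞
    · simp [hw']
    · rw [← ENNReal.ofReal_toReal hw']
      refine ENNReal.ofReal_le_ofReal ?_
      by_contra! hlt
      have h0 : ψ w.toReal = ψ z := by simpa [psiExt, hw'] using hw
      exact (generator_lt hψ ENNReal.toReal_nonneg hlt (h0 ▸ hpos)).ne h0.symm

lemma exists_preimage (hψ : IsGenerator ψ) {y : ℝ} (hy : y ∈ Ioc (0 : ℝ) 1) :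
    ∃ z, 0 ≤ z ∧ ψ z = y := by
  obtain ⟨b, hb, hb0⟩ := ((hψ.tendsto_atTop.eventually_lt_const hy.1).and
    (eventually_ge_atTop 0)).exists
  obtain ⟨z, hz, e⟩ := intermediate_value_Icc' hb0
    (hψ.continuousOn.mono Icc_subset_Ici_self) ⟨hb.le, hψ.map_zero ▸ hy.2⟩
  exact ⟨z, hz.1, e⟩

lemma apply_pseudoInv (hψ : IsGenerator ψ) {y : ℝ} (hy : y ∈ Ioc (0 : ℝ) 1) :
    ψ (pseudoInv ψ y).toReal = y ∧ pseudoInv ψ y = ENNReal.ofReal (pseudoInv ψ y).toReal := by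
  obtain ⟨z, hz, rfl⟩ := exists_preimage hψ hy
  rw [pseudoInv_apply hψ hz hy.1, ENNReal.toReal_ofReal hz]
  exact ⟨rfl, rfl⟩

lemma psi_eq_zero_of_lt (hψ : IsGenerator ψ) {y : ℝ} (h : pseudoInv ψ 0 < ENNReal.ofReal y) :
    ψ y = 0 := by
  obtain ⟨w, hw, hwy⟩ := sInf_lt_iff.1 h
  have hw' : w ≠ ∞ := (hwy.trans ENNReal.ofReal_lt_top).ne
  have h0 : ψ w.toReal = 0 := by simpa [psiExt, hw'] using hw
  have hy : w.toReal < y := by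
    have := (ENNReal.toReal_lt_toReal hw' ENNReal.ofReal_ne_top).2 hwy
    rcases le_total 0 y with hy | hy
    · rwa [ENNReal.toReal_ofReal hy] at this
    · rw [ENNReal.ofReal_of_nonpos hy] at hwy
      exact absurd hwy (by simp)
  have hw0 : (0 : ℝ) ≤ w.toReal := ENNReal.toReal_nonneg
  have := hψ.antitoneOn (show w.toReal ∈ Ici 0 from hw0) (hw0.trans hy.le) hy.le
  exact le_antisymm (this.trans h0.le) (hψ.mem_Icc _ (hw0.trans hy.le)).1

/-- The infimum defining `φ 0` is attained, by right-continuity of `ψ`. -/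
lemma psi_pseudoInv_zero (hψ : IsGenerator ψ) (h : pseudoInv ψ 0 ≠ ∞) :
    ψ (pseudoInv ψ 0).toReal = 0 := by
  set r := (pseudoInv ψ 0).toReal with hr
  have hr0 : 0 ≤ r := ENNReal.toReal_nonneg
  have h1 : Tendsto ψ (𝓝[>] r) (𝓝 (ψ r)) :=
    (hψ.continuousOn r hr0).mono_left (nhdsWithin_mono _ fun y hy => hr0.trans (le_of_lt hy))
  refine tendsto_nhds_unique (h1.congr' ?_) tendsto_const_nhds
  filter_upwards [self_mem_nhdsWithin] with y hy
  refine psi_eq_zero_of_lt hψ ?_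
  rw [← ENNReal.ofReal_toReal h]
  exact (ENNReal.ofReal_lt_ofReal_iff (hr0.trans_lt hy)).2 hy

lemma psiExt_eq_zero (hψ : IsGenerator ψ) {z : ℝ≥0∞} (h : pseudoInv ψ 0 ≤ z) :
    psiExt ψ z = 0 := by
  by_cases hz : z = ∞
  · simp [psiExt, hz]
  · have h0 : pseudoInv ψ 0 ≠ ∞ := (h.trans_lt (lt_top_iff_ne_top.2 hz)).ne
    rw [psiExt, if_neg hz]
    refine le_antisymm ?_ (hψ.mem_Icc _ ENNReal.toReal_nonneg).1
    rw [← psi_pseudoInv_zero hψ h0]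
    exact hψ.antitoneOn (show _ ∈ Ici _ from ENNReal.toReal_nonneg)
      (show _ ∈ Ici _ from ENNReal.toReal_nonneg) (ENNReal.toReal_mono hz h)

lemma archCopula_comp {d : ℕ} (hψ : IsGenerator ψ) {a : Fin d → ℝ} (ha : ∀ i, 0 ≤ a i) :
    archCopula d ψ (fun i => ψ (a i)) = ψ (∑ i, a i) := by
  have hs : 0 ≤ ∑ i, a i := Finset.sum_nonneg fun i _ => ha i
  unfold archCopula
  by_cases h : ∀ i, 0 < ψ (a i)
  · rw [Finset.sum_congr rfl fun i _ => pseudoInv_apply hψ (ha i) (h i),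
      ← ENNReal.ofReal_sum_of_nonneg fun i _ => ha i, psiExt, if_neg ENNReal.ofReal_ne_top,
      ENNReal.toReal_ofReal hs]
  · push Not at h
    obtain ⟨i, hi⟩ := h
    have h0 : ψ (a i) = 0 := le_antisymm hi (hψ.mem_Icc _ (ha i)).1
    rw [psiExt_eq_zero hψ]
    · refine le_antisymm (hψ.mem_Icc _ hs).1 ?_
      rw [← h0]
      exact hψ.antitoneOn (ha i) hs (Finset.single_le_sum (fun i _ => ha i) (Finset.mem_univ i))
    · rw [← h0]
      exact Finset.single_le_sum (f := fun i => pseudoInv ψ (ψ (a i)))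
        (fun i _ => zero_le) (Finset.mem_univ i)

/-- The coordinate change `y ↦ φ y` as a real-valued function: on `(0,1]` the value `φ y` is finite,
and outside, where `φ` may be infinite, the function is set to `0`. -/
def invCoord (ψ : ℝ → ℝ) (y : ℝ) : ℝ := if y ∈ Ioc (0 : ℝ) 1 then (pseudoInv ψ y).toReal else 0

lemma invCoord_nonneg (y : ℝ) : 0 ≤ invCoord ψ y := by
  unfold invCoord; split_ifs <;> simp

lemma psi_invCoord (hψ : IsGenerator ψ) {y : ℝ} (hy : y ∈ Ioc (0 : ℝ) 1) :
    ψ (invCoord ψ y) = y ∧ pseudoInv ψ y = ENNReal.ofReal (invCoord ψ y) := by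
  rw [invCoord, if_pos hy]; exact apply_pseudoInv hψ hy

lemma le_invCoord_iff (hψ : IsGenerator ψ) {y a : ℝ} (ha : 0 ≤ a) (hy : y ∈ Ioc (0 : ℝ) 1) :
    a ≤ invCoord ψ y ↔ y ≤ ψ a := by
  have h1 := (psi_invCoord hψ hy).1
  constructor
  · intro h
    rw [← h1]
    exact hψ.antitoneOn ha (invCoord_nonneg y) h
  · intro h
    by_contra! hlt
    have := generator_lt hψ (invCoord_nonneg y) hlt (h1.symm ▸ hy.1)
    linarith

lemma measurable_invCoord (hψ : IsGenerator ψ) : Measurable (invCoord ψ) := by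
  refine measurable_of_Ici fun a => ?_
  rcases le_or_gt a 0 with ha | ha
  · convert MeasurableSet.univ
    ext y
    simp [ha.trans (invCoord_nonneg y)]
  · convert (measurableSet_Ioc (a := (0 : ℝ)) (b := 1)).inter (measurableSet_Iic (a := ψ a))
    ext y
    simp only [mem_preimage, mem_Ici, mem_inter_iff, mem_Iic]
    by_cases hy : y ∈ Ioc (0 : ℝ) 1
    · simp [le_invCoord_iff hψ ha.le hy, hy]
    · simp [invCoord, hy, ha]

lemma archCopula_eq {d : ℕ} (hψ : IsGenerator ψ) {x : Fin d → ℝ}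
    (hx : ∀ i, x i ∈ Ioc (0 : ℝ) 1) :
    archCopula d ψ x = ψ (∑ i, invCoord ψ (x i)) := by
  rw [← archCopula_comp hψ fun i => invCoord_nonneg _]
  congr 1
  ext i
  exact (psi_invCoord hψ (hx i)).1.symm

variable {d : ℕ} {μ : Measure (Fin d → ℝ)}

/-- Almost surely no coordinate is `0`, since `C(1, …, 1, 0, 1, …, 1) = 0`. -/
lemma ae_mem_Ioc (hψ : IsGenerator ψ) [IsProbabilityMeasure μ]
    (hμ : ∀ x : Fin d → ℝ, (∀ i, x i ∈ Icc (0 : ℝ) 1) →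
      μ (Set.univ.pi fun i => Icc 0 (x i)) = ENNReal.ofReal (archCopula d ψ x)) :
    ∀ᵐ x ∂μ, ∀ i, x i ∈ Ioc (0 : ℝ) 1 := by
  have h1 : ∀ᵐ x ∂μ, x ∈ Set.univ.pi fun _ : Fin d => Icc (0 : ℝ) 1 := by
    refine (mem_ae_iff_prob_eq_one₀ ?_).2 ?_
    · exact (MeasurableSet.univ_pi fun _ => measurableSet_Icc).nullMeasurableSet
    · have h2 := archCopula_comp (d := d) hψ (a := fun _ => 0) fun _ => le_rfl
      have h3 := hμ (fun _ => 1) fun _ => ⟨zero_le_one, le_rfl⟩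
      simp only [hψ.map_zero, Finset.sum_const_zero] at h2
      rw [h2, ENNReal.ofReal_one] at h3
      exact h3
  have h2 : ∀ j : Fin d, ∀ᵐ x ∂μ, x ∉ Set.univ.pi fun i =>
      Icc (0 : ℝ) (Function.update (fun _ => (1 : ℝ)) j 0 i) := by
    intro j
    rw [← measure_eq_zero_iff_ae_notMem, hμ, archCopula, psiExt_eq_zero hψ, ENNReal.ofReal_zero]
    · simpa using Finset.single_le_sum
        (f := fun i => pseudoInv ψ (Function.update (fun _ => (1 : ℝ)) j 0 i))
        (fun i _ => zero_le) (Finset.mem_univ j)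
    · intro i
      by_cases hi : i = j
      · subst hi; simp
      · simp [hi]
  filter_upwards [h1, ae_all_iff.2 h2] with x hx hx' j
  have hj := hx j (mem_univ j)
  refine ⟨lt_of_le_of_ne hj.1 fun e => hx' j fun i _ => ?_, hj.2⟩
  by_cases hi : i = j
  · subst hi; simp [← e]
  · simpa [hi] using hx i (mem_univ i)

/-- In the coordinates `z = φ(x)` the measure has joint survival function `a ↦ ψ (∑ a)`. -/
lemma survival (hψ : IsGenerator ψ) [IsProbabilityMeasure μ]
    (hμ : ∀ x : Fin d → ℝ, (∀ i, x i ∈ Icc (0 : ℝ) 1) →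
      μ (Set.univ.pi fun i => Icc 0 (x i)) = ENNReal.ofReal (archCopula d ψ x))
    (a : Fin d → ℝ) (ha : ∀ i, 0 ≤ a i) :
    (μ.map fun x i => invCoord ψ (x i)).real {z | ∀ i, a i ≤ z i} = ψ (∑ i, a i) := by
  have hm : Measurable fun (x : Fin d → ℝ) i => invCoord ψ (x i) :=
    measurable_pi_lambda _ fun i => (measurable_invCoord hψ).comp (measurable_pi_apply i)
  rw [map_measureReal_apply hm (by measurability)]
  have h1 := hμ (fun i => ψ (a i)) fun i => hψ.mem_Icc _ (ha i)
  rw [archCopula_comp hψ ha] at h1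
  have h2 : μ ((fun x i => invCoord ψ (x i)) ⁻¹' {z | ∀ i, a i ≤ z i}) =
      μ (Set.univ.pi fun i => Icc 0 (ψ (a i))) := by
    refine measure_congr ?_
    filter_upwards [ae_mem_Ioc hψ hμ] with x hx
    refine propext ?_
    change (∀ i, a i ≤ invCoord ψ (x i)) ↔ ∀ i, i ∈ univ → x i ∈ Icc 0 (ψ (a i))
    simp only [le_invCoord_iff hψ (ha _) (hx _), mem_univ, true_imp_iff, mem_Icc, (hx _).1.le,
      true_and]
  rw [measureReal_def, h2, h1, ENNReal.toReal_ofReal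
    (hψ.mem_Icc _ (Finset.sum_nonneg fun i _ => ha i)).1]

/-- Level sets become radial sets in the coordinates `z = φ(x)`. -/
lemma measure_levelSet (hψ : IsGenerator ψ) [IsProbabilityMeasure μ]
    (hμ : ∀ x : Fin d → ℝ, (∀ i, x i ∈ Icc (0 : ℝ) 1) →
      μ (Set.univ.pi fun i => Icc 0 (x i)) = ENNReal.ofReal (archCopula d ψ x))
    {t : ℝ} {B : Set ℝ} (hB : MeasurableSet B) (ht : ∀ s, 0 ≤ s → (ψ s = t ↔ s ∈ B)) :
    μ (levelSet d ψ t) = (μ.map fun x i => invCoord ψ (x i))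
      {z | (∀ i, 0 ≤ z i) ∧ ∑ i, z i ∈ B} := by
  have hm : Measurable fun (x : Fin d → ℝ) i => invCoord ψ (x i) :=
    measurable_pi_lambda _ fun i => (measurable_invCoord hψ).comp (measurable_pi_apply i)
  have hS : MeasurableSet {z : Fin d → ℝ | (∀ i, 0 ≤ z i) ∧ ∑ i, z i ∈ B} := by
    have h1 : MeasurableSet {z : Fin d → ℝ | ∀ i, 0 ≤ z i} := by measurability
    exact h1.inter (Finset.measurable_sum _ (fun i _ => measurable_pi_apply i) hB)
  rw [Measure.map_apply hm hS]
  refine measure_congr ?_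
  filter_upwards [ae_mem_Ioc hψ hμ] with x hx
  refine propext ?_
  change ((∀ i, x i ∈ Icc (0 : ℝ) 1) ∧ archCopula d ψ x = t) ↔
    (∀ i, 0 ≤ invCoord ψ (x i)) ∧ ∑ i, invCoord ψ (x i) ∈ B
  rw [archCopula_eq hψ hx, ht _ (Finset.sum_nonneg fun i _ => invCoord_nonneg _)]
  simp [invCoord_nonneg, (hx _).1.le, (hx _).2]

end Generator
/-! ### Mass of the level sets -/

section Mass

variable {n : ℕ} {ψ : ℝ → ℝ} {μ : Measure (Fin (n + 2) → ℝ)}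

lemma hasDerivAt_iterate (hψ : IsdMonotoneGenerator (n + 2) ψ) :
    ∀ i < n, ∀ y > 0, HasDerivAt (deriv^[i] ψ) (deriv^[i + 1] ψ y) y := by
  intro i hi y hy
  rw [Function.iterate_succ_apply']
  exact (hψ.differentiable i (by simpa using hi) y hy).hasDerivAt

lemma hasDerivWithinAt_sides (hψ : IsdMonotoneGenerator (n + 2) ψ) {r : ℝ} (hr : 0 < r) :
    HasDerivWithinAt (deriv^[n] ψ) (leftDeriv (deriv^[n] ψ) r) (Iic r) r ∧
      HasDerivWithinAt (deriv^[n] ψ) (rightDeriv (deriv^[n] ψ) r) (Ici r) r := by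
  have hc : ConvexOn ℝ (Ioi 0) (fun z => (-1 : ℝ) ^ n * deriv^[n] ψ z) := hψ.convexOn
  have hr' : r ∈ interior (Ioi (0 : ℝ)) := by simpa using hr
  have e : (fun z => (-1 : ℝ) ^ n * ((-1 : ℝ) ^ n * deriv^[n] ψ z)) = deriv^[n] ψ := by
    ext z
    rw [← mul_assoc, ← mul_pow]
    simp
  have hl := (hc.differentiableWithinAt_Iio_of_mem_interior hr').const_mul ((-1 : ℝ) ^ n)
  have hrt := (hc.differentiableWithinAt_Ioi_of_mem_interior hr').const_mul ((-1 : ℝ) ^ n)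
  rw [e] at hl hrt
  exact ⟨hl.hasDerivWithinAt.Iic_of_Iio, hrt.hasDerivWithinAt.Ici_of_Ioi⟩

/-- The radial part `∑ φ(xᵢ)` has an atom at `r` given by the jump of the one-sided derivatives of
`ψ⁽ⁿ⁾`, where `n = d - 2`. -/
lemma measure_simplex_generator (hψ : IsdMonotoneGenerator (n + 2) ψ) [IsProbabilityMeasure μ]
    (hμ : ∀ x : Fin (n + 2) → ℝ, (∀ i, x i ∈ Icc (0 : ℝ) 1) →
      μ (Set.univ.pi fun i => Icc 0 (x i)) = ENNReal.ofReal (archCopula (n + 2) ψ x))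
    {r : ℝ} (hr : 0 < r) :
    (μ.map fun x i => invCoord ψ (x i)).real {z | (∀ i, 0 ≤ z i) ∧ ∑ i, z i = r} =
      (-r) ^ (n + 1) / (n + 1).factorial *
        (leftDeriv (deriv^[n] ψ) r - rightDeriv (deriv^[n] ψ) r) := by
  have hψ' := hψ.toIsGenerator
  have hm : Measurable fun (x : Fin (n + 2) → ℝ) i => invCoord ψ (x i) :=
    measurable_pi_lambda _ fun i => (measurable_invCoord hψ').comp (measurable_pi_apply i)
  have := Measure.isProbabilityMeasure_map (μ := μ) hm.aemeasurable
  obtain ⟨hL, hR⟩ := hasDerivWithinAt_sides hψ hr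
  have h1 := measure_simplex (G := fun i => deriv^[i] ψ) hr
    (ν := μ.map fun x i => invCoord ψ (x i)) (survival hψ' hμ) (hasDerivAt_iterate hψ) hL hR
  rw [h1, neg_pow r, pow_succ (-1 : ℝ) n]
  ring

/-- If `ψ` vanishes on `(r, ∞)`, so do all its derivatives there, and `ψ⁽ⁿ⁾`, having a
right derivative at `r`, vanishes at `r` too. -/
lemma rightDeriv_eq_zero (hψ : IsdMonotoneGenerator (n + 2) ψ) {r : ℝ} (hr : 0 < r)
    (h0 : ∀ y, r < y → ψ y = 0) : rightDeriv (deriv^[n] ψ) r = 0 := by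
  have hk : ∀ k, ∀ y, r < y → deriv^[k] ψ y = 0 := by
    intro k
    induction k with
    | zero => exact h0
    | succ k ih =>
      intro y hy
      rw [Function.iterate_succ_apply']
      have : deriv^[k] ψ =ᶠ[𝓝 y] fun _ => 0 := by
        filter_upwards [lt_mem_nhds hy] with z hz using ih z hz
      rw [this.deriv_eq, deriv_const]
  have hR := (hasDerivWithinAt_sides hψ hr).2
  have hr0 : deriv^[n] ψ r = 0 := by
    have h1 : Tendsto (deriv^[n] ψ) (𝓝[>] r) (𝓝 (deriv^[n] ψ r)) :=
      hR.continuousWithinAt.mono_left (nhdsWithin_mono _ Ioi_subset_Ici_self)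
    refine tendsto_nhds_unique (h1.congr' ?_) tendsto_const_nhds
    filter_upwards [self_mem_nhdsWithin] with y hy using hk n y hy
  unfold rightDeriv
  rw [derivWithin_congr (f := fun _ => (0 : ℝ)) (s := Ioi r) (fun y hy => hk n y hy) hr0]
  simp

end Mass

end LevelSetMass

/-- For a `d`-monotone generator `ψ` with copula `C = C_ψ` and associated
`d`-stochastic measure `μ_C`, for every `t ∈ (0,1)`:
`μ_C(L_t) = ((-φ(t))^(d-1)/(d-1)!) · (D⁻ψ^(d-2)(φ(t)) - D⁺ψ^(d-2)(φ(t)))`.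
Moreover if `ψ` is strict then `μ_C(L₀) = 0`, and if `ψ` is non-strict then
`μ_C(L₀) = ((-φ(0))^(d-1)/(d-1)!) · D⁻ψ^(d-2)(φ(0))`. -/
theorem archCopula_levelSet_mass
    (d : ℕ) (hd : 3 ≤ d) (ψ : ℝ → ℝ) (hψ : IsdMonotoneGenerator d ψ)
    (μ : Measure (Fin d → ℝ)) (hprob : IsProbabilityMeasure μ)
    (hμ : ∀ x : Fin d → ℝ, (∀ i, x i ∈ Icc (0 : ℝ) 1) →
      μ (Set.univ.pi fun i => Icc 0 (x i)) = ENNReal.ofReal (archCopula d ψ x)) :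
    (∀ t ∈ Ioo (0 : ℝ) 1,
      (μ (levelSet d ψ t)).toReal =
        (-(pseudoInv ψ t).toReal) ^ (d - 1) / (Nat.factorial (d - 1)) *
          (leftDeriv (deriv^[d - 2] ψ) (pseudoInv ψ t).toReal -
            rightDeriv (deriv^[d - 2] ψ) (pseudoInv ψ t).toReal)) ∧
    (IsStrictGenerator ψ → μ (levelSet d ψ 0) = 0) ∧
    (pseudoInv ψ 0 ≠ ∞ →
      (μ (levelSet d ψ 0)).toReal =
        (-(pseudoInv ψ 0).toReal) ^ (d - 1) / (Nat.factorial (d - 1)) *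
          leftDeriv (deriv^[d - 2] ψ) (pseudoInv ψ 0).toReal) := by
  obtain ⟨n, rfl⟩ : ∃ n, d = n + 2 := ⟨d - 2, by omega⟩
  have hψ' := hψ.toIsGenerator
  simp only [Nat.add_sub_cancel, show n + 2 - 1 = n + 1 from rfl]
  refine ⟨fun t ht => ?_, fun hs => ?_, fun hfin => ?_⟩
  · obtain ⟨r, hr, rfl⟩ := LevelSetMass.exists_preimage hψ' ⟨ht.1, ht.2.le⟩
    rw [LevelSetMass.pseudoInv_apply hψ' hr ht.1, ENNReal.toReal_ofReal hr]
    have hr0 : 0 < r := lt_of_le_of_ne hr fun e => by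
      rw [← e, hψ'.map_zero] at ht
      exact lt_irrefl _ ht.2
    rw [LevelSetMass.measure_levelSet (B := {r}) hψ' hμ (measurableSet_singleton r)]
    · exact LevelSetMass.measure_simplex_generator hψ hμ hr0
    · intro s hs
      refine ⟨fun e => ?_, fun e => by rw [mem_singleton_iff.1 e]⟩
      rcases lt_trichotomy s r with h | h | h
      · exact absurd e (LevelSetMass.generator_lt hψ' hs h (e ▸ ht.1)).ne'
      · exact h
      · exact absurd e (LevelSetMass.generator_lt hψ' hr h ht.1).ne
  · rw [LevelSetMass.measure_levelSet (B := ∅) hψ' hμ MeasurableSet.empty]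
    · simp
    · intro s h
      simpa using (hs s h).ne'
  · set r := (pseudoInv ψ 0).toReal with hr
    have hψr : ψ r = 0 := LevelSetMass.psi_pseudoInv_zero hψ' hfin
    have hr0 : 0 < r := lt_of_le_of_ne ENNReal.toReal_nonneg fun e => by
      rw [← e, hψ'.map_zero] at hψr
      exact one_ne_zero hψr
    have hgt : ∀ y, r < y → ψ y = 0 := fun y hy =>
      le_antisymm ((hψ'.antitoneOn hr0.le (hr0.trans hy).le hy.le).trans hψr.le)
        (hψ'.mem_Icc _ (hr0.trans hy).le).1
    rw [LevelSetMass.measure_levelSet (B := Ici r) hψ' hμ measurableSet_Ici]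
    · have hm : Measurable fun (x : Fin (n + 2) → ℝ) i => LevelSetMass.invCoord ψ (x i) :=
        measurable_pi_lambda _ fun i =>
          (LevelSetMass.measurable_invCoord hψ').comp (measurable_pi_apply i)
      have := Measure.isProbabilityMeasure_map (μ := μ) hm.aemeasurable
      have hnull := LevelSetMass.measure_gt_zero (LevelSetMass.survival hψ' hμ) hgt
      have h1 := LevelSetMass.measure_simplex_generator hψ hμ hr0
      rw [LevelSetMass.rightDeriv_eq_zero hψ hr0 hgt, sub_zero] at h1
      rw [← h1, measureReal_def]
      congr 1
      refine measure_congr ?_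
      filter_upwards [measure_eq_zero_iff_ae_notMem.1 hnull] with z hz
      refine propext ?_
      change ((∀ i, 0 ≤ z i) ∧ r ≤ ∑ i, z i) ↔ ((∀ i, 0 ≤ z i) ∧ ∑ i, z i = r)
      refine and_congr_right fun h0 => ⟨fun h => ?_, fun h => h.ge⟩
      exact le_antisymm (not_lt.1 fun h2 => hz ⟨h0, h2⟩) h
    · intro s hs
      refine ⟨fun e => ?_, fun e => ?_⟩
      · by_contra h
        have := LevelSetMass.generator_lt hψ' hs (not_le.1 h)
          (lt_of_le_of_ne (hψ'.mem_Icc s hs).1 fun e0 => h ?_)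
        · rw [hψr, e] at this
          exact lt_irrefl _ this
        ·
          -- A zero `s` of `ψ` competes in the infimum defining `φ 0 = r`.
          have h2 : pseudoInv ψ 0 ≤ ENNReal.ofReal s :=
            sInf_le (by simp [psiExt, ENNReal.toReal_ofReal hs, e])
          have h3 := ENNReal.toReal_mono ENNReal.ofReal_ne_top h2
          rwa [ENNReal.toReal_ofReal hs] at h3
      · rcases (mem_Ici.1 e).eq_or_lt with h | h
        · rw [← h, hψr]
        · exact hgt s h
end
end

section
/- Let d ≥ 3 and let ψ, ψ_1, ψ_2, … be normalized d-monotone Archimedean generators. Consider the statements: (a) (ψ_n)_{n∈ℕ} converges to ψ uniformly on [0,∞) (equivalently, the induced copulas C_{ψ_n} converge pointwise to C_ψ on [0,1]^d); (b) for every m ∈ {1,…,d−2} and every z ∈ (0,∞), ψ_n^{(m)}(z) → ψ^{(m)}(z), and D^−ψ_n^{(d−2)}(z) → D^−ψ^{(d−2)}(z) for every continuity point z of D^−ψ^{(d−2)}; (c) there exists m ∈ {1,…,d−2} with ψ_n^{(m)} → ψ^{(m)} pointwise on (0,∞); (d) D^−ψ_n^{(d−2)}(z) → D^−ψ^{(d−2)}(z)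 for every continuity point z of D^−ψ^{(d−2)}. Then (a) implies (b), and moreover the convergence in (b) is continuous: for every sequence (z_n) in (0,∞) converging to a continuity point z of D^−ψ^{(d−2)} one has lim_{n→∞} D^−ψ_n^{(d−2)}(z_n) = D^−ψ^{(d−2)}(z). Conversely, each of (c) and (d) implies (a). -/
/-!
The functions `(-1)^k ψ⁽ᵏ⁾`, `k ≤ d - 2`, of a `d`-monotone generator are all non-negative,
non-increasing and convex on `(0,∞)`, and minus each is the derivative of the preceding one. So the
claims reduce to facts about convex functions on a half-line, applied one order at a time.

*From `ψ` to its derivatives.* If convex functions converge pointwise, difference quotients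
converge, and they squeeze the left derivatives near any continuity point of the limiting left
derivative (`tendsto_leftDeriv_of_tendsto`). Below order `d - 2` the left derivative is a genuine
derivative and is continuous, so convergence holds at every point.

*From derivatives to `ψ`.* A convex function is the integral of its left derivative, so by
dominated convergence its increments converge when left derivatives converge at continuity points
(`tendsto_sub_of_tendsto_leftDeriv`). At orders `k ≥ 1` the constant of integration is controlled by
the bound `|ψ⁽ᵏ⁾(z)| ≤ C z⁻ᵏ`, with `C` common to all `d`-monotone generators
(`exists_altDeriv_mul_pow_le`), which prevents escape of mass to infinity; at order `0` it is
controlled by the normalization `ψ 1 = 1 / 2`. Finally, pointwise convergence of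
monotone functions to a continuous limit vanishing at infinity is uniform.
-/

open MeasureTheory Set Filter Topology
open scoped ENNReal NNReal Classical

noncomputable section

/-! ### One-sided derivatives of convex functions on the half-line -/

theorem ConvexOn.slope_le_leftDeriv_Ioi {f : ℝ → ℝ} (hf : ConvexOn ℝ (Ioi 0) f) {x y : ℝ}
    (hx : 0 < x) (hxy : x < y) : slope f x y ≤ leftDeriv f y :=
  hf.slope_le_leftDeriv_of_mem_interior hx (by rw [interior_Ioi]; exact hx.trans hxy) hxy

theorem ConvexOn.leftDeriv_le_slope_Ioi {f : ℝ → ℝ} (hf : ConvexOn ℝ (Ioi 0) f) {x y : ℝ}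
    (hx : 0 < x) (hxy : x < y) : leftDeriv f x ≤ slope f x y := by
  have hi : x ∈ interior (Ioi (0 : ℝ)) := by rw [interior_Ioi]; exact hx
  exact (hf.leftDeriv_le_rightDeriv_of_mem_interior hi).trans
    (hf.rightDeriv_le_slope_of_mem_interior hi (hx.trans hxy) hxy)

theorem ConvexOn.monotoneOn_leftDeriv_Ioi {f : ℝ → ℝ} (hf : ConvexOn ℝ (Ioi 0) f) :
    MonotoneOn (leftDeriv f) (Ioi 0) := by
  have := hf.monotoneOn_leftDeriv
  rwa [interior_Ioi] at this

/-- A convex function is differentiable wherever its left derivative is continuous: the right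
derivative at `x` is at most the left derivative at any `y > x`. -/
theorem ConvexOn.hasDerivAt_of_continuousWithinAt_leftDeriv {f : ℝ → ℝ}
    (hf : ConvexOn ℝ (Ioi 0) f) {x : ℝ} (hx : 0 < x)
    (hc : ContinuousWithinAt (leftDeriv f) (Ioi 0) x) : HasDerivAt f (leftDeriv f x) x := by
  have hi : x ∈ interior (Ioi (0 : ℝ)) := by rw [interior_Ioi]; exact hx
  have hl : HasDerivWithinAt f (leftDeriv f x) (Iio x) x :=
    hf.hasDerivWithinAt_leftDeriv_of_mem_interior hi
  have hr : HasDerivWithinAt f (derivWithin f (Ioi x) x) (Ioi x) x :=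
    hf.hasDerivWithinAt_rightDeriv_of_mem_interior hi
  have heq : derivWithin f (Ioi x) x = leftDeriv f x := by
    refine le_antisymm ?_ (hf.leftDeriv_le_rightDeriv_of_mem_interior hi)
    have ht : Tendsto (leftDeriv f) (𝓝[>] x) (𝓝 (leftDeriv f x)) :=
      hc.mono (Ioi_subset_Ioi hx.le)
    refine ge_of_tendsto ht ?_
    filter_upwards [self_mem_nhdsWithin] with y hy
    exact (hf.rightDeriv_le_slope_of_mem_interior hi (hx.trans hy) hy).trans
      (hf.slope_le_leftDeriv_Ioi hx hy)
  rw [heq] at hr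
  have hu := hl.Iic_of_Iio.union hr.Ici_of_Ioi
  rwa [Iic_union_Ici, hasDerivWithinAt_univ] at hu

/-- The fundamental theorem of calculus for convex functions. -/
theorem ConvexOn.integral_leftDeriv {f : ℝ → ℝ} (hf : ConvexOn ℝ (Ioi 0) f) {x y : ℝ}
    (hx : 0 < x) (hxy : x ≤ y) : ∫ t in x..y, leftDeriv f t = f y - f x := by
  refine integral_eq_of_hasDerivAt_off_countable_of_le f (leftDeriv f) hxy
    hf.monotoneOn_leftDeriv_Ioi.countable_not_continuousWithinAt
    ((hf.continuousOn isOpen_Ioi).mono fun t ht => hx.trans_le ht.1) ?_ ?_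
  · rintro t ⟨ht, hts⟩
    have ht0 : 0 < t := hx.trans ht.1
    refine hf.hasDerivAt_of_continuousWithinAt_leftDeriv ht0 ?_
    by_contra h
    exact hts ⟨ht0, h⟩
  · refine (hf.monotoneOn_leftDeriv_Ioi.mono fun t ht => ?_).intervalIntegrable
    rw [uIcc_of_le hxy] at ht
    exact hx.trans_le ht.1

/-! ### Convergence of convex functions and of their derivatives -/

/-- If convex functions converge pointwise, their left derivatives converge continuously at every
continuity point of the limiting left derivative: near `z`, left derivatives are squeezed between
difference quotients over intervals close to `z`, and these converge. -/
theorem tendsto_leftDeriv_of_tendsto {F : ℕ → ℝ → ℝ} {f : ℝ → ℝ}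
    (hF : ∀ n, ConvexOn ℝ (Ioi 0) (F n)) (hf : ConvexOn ℝ (Ioi 0) f)
    (hlim : ∀ z : ℝ, 0 < z → Tendsto (fun n => F n z) atTop (𝓝 (f z)))
    {z : ℝ} {zs : ℕ → ℝ} (hz : 0 < z) (hzs0 : ∀ n, 0 < zs n)
    (hc : ContinuousWithinAt (leftDeriv f) (Ioi 0) z) (hzs : Tendsto zs atTop (𝓝 z)) :
    Tendsto (fun n => leftDeriv (F n) (zs n)) atTop (𝓝 (leftDeriv f z)) := by
  have hslope : ∀ a b : ℝ, 0 < a → 0 < b →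
      Tendsto (fun n => slope (F n) a b) atTop (𝓝 (slope f a b)) := by
    intro a b ha hb
    simp only [slope_def_field]
    exact ((hlim b hb).sub (hlim a ha)).div_const _
  have hca : ContinuousAt (leftDeriv f) z := hc.continuousAt (Ioi_mem_nhds hz)
  rw [tendsto_order]
  constructor
  · intro c hcz
    obtain ⟨δ, hδ, hball⟩ := Metric.eventually_nhds_iff.1
      ((hca.eventually_const_lt hcz).and (eventually_gt_nhds hz))
    obtain ⟨h1, h0⟩ := hball (y := z - δ / 2)
      (by rw [Real.dist_eq, sub_sub_cancel_left, abs_neg, abs_of_pos] <;> linarith)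
    have h2 := h1.trans_le (hf.leftDeriv_le_slope_Ioi h0 (by linarith : z - δ / 2 < z - δ / 4))
    filter_upwards [(hslope _ _ h0 (by linarith)).eventually_const_lt h2,
      hzs.eventually_const_lt (by linarith : z - δ / 4 < z)] with n hn hzn
    exact hn.trans_le (((hF n).slope_le_leftDeriv_Ioi h0 (by linarith)).trans
      ((hF n).monotoneOn_leftDeriv_Ioi (mem_Ioi.2 (by linarith)) (hzs0 n) hzn.le))
  · intro c hcz
    obtain ⟨δ, hδ, hball⟩ := Metric.eventually_nhds_iff.1 (hca.eventually_lt_const hcz)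
    have h1 := hball (y := z + δ / 2)
      (by rw [Real.dist_eq, add_sub_cancel_left, abs_of_pos] <;> linarith)
    have hb : 0 < z + δ / 4 := by linarith
    have h2 := (hf.slope_le_leftDeriv_Ioi hb (by linarith : z + δ / 4 < z + δ / 2)).trans_lt h1
    filter_upwards [(hslope _ _ hb (by linarith)).eventually_lt_const h2,
      hzs.eventually_lt_const (by linarith : z < z + δ / 4)] with n hn hzn
    exact (((hF n).monotoneOn_leftDeriv_Ioi (hzs0 n) hb hzn.le).trans
      ((hF n).leftDeriv_le_slope_Ioi hb (by linarith))).trans_lt hn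

/-- If the left derivatives of convex functions converge at the continuity points of the limiting
left derivative, then increments converge, by dominated convergence. The domination comes from
monotonicity of the left derivatives and two continuity points outside `[x, y]`. -/
theorem tendsto_sub_of_tendsto_leftDeriv {F : ℕ → ℝ → ℝ} {f : ℝ → ℝ}
    (hF : ∀ n, ConvexOn ℝ (Ioi 0) (F n)) (hf : ConvexOn ℝ (Ioi 0) f)
    (hlim : ∀ z : ℝ, 0 < z → ContinuousWithinAt (leftDeriv f) (Ioi 0) z →
      Tendsto (fun n => leftDeriv (F n) z) atTop (𝓝 (leftDeriv f z)))
    {x y : ℝ} (hx : 0 < x) (hxy : x ≤ y) :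
    Tendsto (fun n => F n y - F n x) atTop (𝓝 (f y - f x)) := by
  simp only [← (hF _).integral_leftDeriv hx hxy, ← hf.integral_leftDeriv hx hxy]
  set s : Set ℝ := {t ∈ Ioi (0 : ℝ) | ¬ContinuousWithinAt (leftDeriv f) (Ioi 0) t}
  have hs : s.Countable := hf.monotoneOn_leftDeriv_Ioi.countable_not_continuousWithinAt
  have hlim' : ∀ t, 0 < t → t ∉ s →
      Tendsto (fun n => leftDeriv (F n) t) atTop (𝓝 (leftDeriv f t)) := by
    intro t ht hts
    refine hlim t ht ?_
    by_contra h
    exact hts ⟨ht, h⟩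
  obtain ⟨a, has, ha0, hax⟩ := (hs.dense_compl ℝ).exists_between hx
  obtain ⟨b, hbs, hyb, -⟩ := (hs.dense_compl ℝ).exists_between (lt_add_one y)
  have hb0 : 0 < b := (hx.trans_le hxy).trans hyb
  have hpos : ∀ t ∈ uIcc x y, 0 < t := fun t ht => by
    rw [uIcc_of_le hxy] at ht
    exact hx.trans_le ht.1
  refine intervalIntegral.tendsto_integral_filter_of_dominated_convergence
    (fun _ => max (-(leftDeriv f a - 1)) (leftDeriv f b + 1)) ?_ ?_ (by simp) ?_
  · refine Eventually.of_forall fun n => ?_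
    have := ((hF n).monotoneOn_leftDeriv_Ioi.mono hpos).intervalIntegrable (μ := volume)
    exact (intervalIntegrable_iff.1 this).aestronglyMeasurable
  · filter_upwards [(hlim' a ha0 has).eventually_const_lt (sub_one_lt _),
      (hlim' b hb0 hbs).eventually_lt_const (lt_add_one _)] with n hna hnb
    refine Eventually.of_forall fun t ht => ?_
    rw [uIoc_of_le hxy] at ht
    have ht0 : 0 < t := hx.trans ht.1
    have h1 := (hF n).monotoneOn_leftDeriv_Ioi ha0 ht0 (hax.trans ht.1).le
    have h2 := (hF n).monotoneOn_leftDeriv_Ioi ht0 hb0 (ht.2.trans hyb.le)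
    rw [Real.norm_eq_abs, abs_le]
    constructor
    · have := le_max_left (-(leftDeriv f a - 1)) (leftDeriv f b + 1)
      linarith
    · exact (by linarith : leftDeriv (F n) t ≤ leftDeriv f b + 1).trans (le_max_right _ _)
  · filter_upwards [hs.ae_notMem volume] with t hts ht
    rw [uIoc_of_le hxy] at ht
    exact hlim' t (hx.trans ht.1) hts

/-! ### Sign-adjusted derivatives of generators -/

/-- The sign-adjusted derivative `(-1)^k ψ⁽ᵏ⁾`, which for a `d`-monotone generator is non-negative,
non-increasing and convex on `(0,∞)` for every `k ≤ d - 2`. -/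
def altDeriv (ψ : ℝ → ℝ) (k : ℕ) (z : ℝ) : ℝ := (-1 : ℝ) ^ k * deriv^[k] ψ z

theorem deriv_eq_altDeriv (ψ : ℝ → ℝ) (k : ℕ) (z : ℝ) :
    deriv^[k] ψ z = (-1 : ℝ) ^ k * altDeriv ψ k z := by
  rw [altDeriv, ← mul_assoc, ← mul_pow]
  simp

theorem altDeriv_zero (ψ : ℝ → ℝ) (z : ℝ) : altDeriv ψ 0 z = ψ z := by
  simp [altDeriv]

theorem leftDeriv_altDeriv (ψ : ℝ → ℝ) (k : ℕ) (z : ℝ) :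
    leftDeriv (altDeriv ψ k) z = (-1 : ℝ) ^ k * leftDeriv (deriv^[k] ψ) z := by
  unfold leftDeriv altDeriv
  exact derivWithin_const_mul_field _

namespace IsdMonotoneGenerator

variable {d : ℕ} {ψ : ℝ → ℝ}

theorem hasDerivAt_altDeriv (h : IsdMonotoneGenerator d ψ) {k : ℕ} (hk : k < d - 2) {z : ℝ}
    (hz : 0 < z) : HasDerivAt (altDeriv ψ k) (-altDeriv ψ (k + 1) z) z := by
  have h1 := (h.differentiable k hk z hz).hasDerivAt.const_mul ((-1 : ℝ) ^ k)
  refine h1.congr_deriv ?_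
  simp only [altDeriv, Function.iterate_succ_apply', pow_succ]
  ring

theorem leftDeriv_altDeriv_eq (h : IsdMonotoneGenerator d ψ) {k : ℕ} (hk : k < d - 2) {z : ℝ}
    (hz : 0 < z) : leftDeriv (altDeriv ψ k) z = -altDeriv ψ (k + 1) z :=
  (h.hasDerivAt_altDeriv hk hz).hasDerivWithinAt.derivWithin (uniqueDiffWithinAt_Iio z)

/-- No multiple of a derivative is eventually bounded below by a positive constant: integrating
such a bound gives one for the opposite multiple of the derivative of one order less, and `ψ`
itself tends to `0`. -/
theorem not_le_mul_altDeriv (h : IsdMonotoneGenerator d ψ) {k : ℕ} (hk : k ≤ d - 2) (s : ℝ)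
    {c z₀ : ℝ} (hc : 0 < c) (hz₀ : 0 < z₀) : ¬ ∀ z, z₀ ≤ z → c ≤ s * altDeriv ψ k z := by
  induction k generalizing s c z₀ with
  | zero =>
    intro hle
    have ht : Tendsto (fun z => s * ψ z) atTop (𝓝 (s * 0)) :=
      h.toIsGenerator.tendsto_atTop.const_mul s
    rw [mul_zero] at ht
    refine absurd (ge_of_tendsto ht ?_) hc.not_ge
    filter_upwards [eventually_ge_atTop z₀] with z hz
    simpa only [altDeriv_zero] using hle z hz
  | succ k ih =>
    intro hle
    have hd : ∀ z ∈ Ici z₀, HasDerivAt (fun z => (-s) * altDeriv ψ k z)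
        (s * altDeriv ψ (k + 1) z) z := by
      intro z hz
      exact ((h.hasDerivAt_altDeriv hk (hz₀.trans_le hz)).const_mul (-s)).congr_deriv (by ring)
    -- beyond this point the linear lower bound with slope `c` for `-s * altDeriv ψ k` exceeds `1`
    refine ih (by omega) (-s) one_pos (z₀ := z₀ + |1 - (-s) * altDeriv ψ k z₀| / c)
      (by positivity) fun z hz => ?_
    have hz' : z₀ ≤ z := le_trans (le_add_of_nonneg_right (by positivity)) hz
    have hm := (convex_Ici z₀).mul_sub_le_image_sub_of_le_deriv
      (fun t ht => (hd t ht).continuousAt.continuousWithinAt)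
      (fun t ht => (hd t (interior_subset ht)).differentiableAt.differentiableWithinAt)
      (fun t ht => by
        rw [(hd t (interior_subset ht)).deriv]
        exact hle t (interior_subset ht)) z₀ self_mem_Ici z hz' hz'
    have h1 : |1 - (-s) * altDeriv ψ k z₀| ≤ c * (z - z₀) := by
      rw [← div_le_iff₀' hc]
      linarith
    have h2 := le_abs_self (1 - (-s) * altDeriv ψ k z₀)
    linarith

/-- Each `(-1)^k ψ⁽ᵏ⁾` with `k ≤ d - 2` is non-negative, non-increasing and convex, by descending
induction on `k`. A negative value at order `k` would persist by monotonicity, contradicting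
`not_le_mul_altDeriv`. -/
theorem altDeriv_properties (h : IsdMonotoneGenerator d ψ) {k : ℕ} (hk : k ≤ d - 2) :
    (∀ z, 0 < z → 0 ≤ altDeriv ψ k z) ∧ AntitoneOn (altDeriv ψ k) (Ioi 0) ∧
      ConvexOn ℝ (Ioi 0) (altDeriv ψ k) := by
  induction hk using Nat.decreasingInduction with
  | self => exact ⟨h.nonneg, h.antitoneOn, h.convexOn⟩
  | of_succ k hk ih =>
    obtain ⟨hnn, hanti, -⟩ := ih
    have hd : ∀ z ∈ Ioi (0 : ℝ), HasDerivAt (altDeriv ψ k) (-altDeriv ψ (k + 1) z) z :=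
      fun z hz => h.hasDerivAt_altDeriv hk hz
    have hcont : ContinuousOn (altDeriv ψ k) (Ioi 0) :=
      fun z hz => (hd z hz).continuousAt.continuousWithinAt
    have hdiff : DifferentiableOn ℝ (altDeriv ψ k) (interior (Ioi 0)) :=
      fun z hz => (hd z (interior_subset hz)).differentiableAt.differentiableWithinAt
    have hA : AntitoneOn (altDeriv ψ k) (Ioi 0) := by
      refine antitoneOn_of_deriv_nonpos (convex_Ioi 0) hcont hdiff fun z hz => ?_
      rw [(hd z (interior_subset hz)).deriv]
      exact neg_nonpos.2 (hnn z (interior_subset hz))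
    refine ⟨fun z hz => ?_, hA, ?_⟩
    · by_contra hneg
      refine h.not_le_mul_altDeriv hk.le (-1) (neg_pos.2 (not_le.1 hneg)) hz fun w hw => ?_
      have := hA hz (hz.trans_le hw) hw
      linarith
    · refine MonotoneOn.convexOn_of_deriv (convex_Ioi 0) hcont hdiff fun x hx y hy hxy => ?_
      rw [(hd x (interior_subset hx)).deriv, (hd y (interior_subset hy)).deriv]
      exact neg_le_neg (hanti (interior_subset hx) (interior_subset hy) hxy)

end IsdMonotoneGenerator

/-- The derivatives of all `d`-monotone generators obey a common bound `|ψ⁽ᵏ⁾(z)| ≤ C z⁻ᵏ`. -/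
theorem exists_altDeriv_mul_pow_le (d k : ℕ) (hk : k ≤ d - 2) :
    ∃ C : ℝ, ∀ ψ, IsdMonotoneGenerator d ψ → ∀ z, 0 < z → altDeriv ψ k z * z ^ k ≤ C := by
  induction k with
  | zero =>
    refine ⟨1, fun ψ h z hz => ?_⟩
    simpa [altDeriv_zero] using (h.toIsGenerator.mem_Icc z hz.le).2
  | succ k ih =>
    obtain ⟨C, hC⟩ := ih (by omega)
    refine ⟨2 ^ (k + 1) * C, fun ψ h z hz => ?_⟩
    have hz2 : 0 < z / 2 := half_pos hz
    -- convexity: the slope at `z` is at least the slope of the chord over `[z / 2, z]`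
    have h1 := (h.altDeriv_properties (k := k) (by omega)).2.2.slope_le_leftDeriv_Ioi hz2
      (half_lt_self hz)
    rw [h.leftDeriv_altDeriv_eq (by omega) hz, slope_def_field, div_le_iff₀ (by linarith)] at h1
    have h2 := (h.altDeriv_properties (k := k) (by omega)).1 z hz
    have h3 : altDeriv ψ (k + 1) z * (z / 2) ≤ altDeriv ψ k (z / 2) := by linarith
    calc altDeriv ψ (k + 1) z * z ^ (k + 1)
        = 2 ^ (k + 1) * (altDeriv ψ (k + 1) z * (z / 2) * (z / 2) ^ k) := by
          rw [div_pow]; field_simp; ring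
      _ ≤ 2 ^ (k + 1) * (altDeriv ψ k (z / 2) * (z / 2) ^ k) := by gcongr
      _ ≤ 2 ^ (k + 1) * C := by gcongr; exact hC ψ h _ hz2

/-! ### Passing between consecutive orders -/

section Convergence

variable {d : ℕ} {ψ : ℝ → ℝ} {Ψ : ℕ → ℝ → ℝ}

theorem continuousOn_altDeriv (h : IsdMonotoneGenerator d ψ) {k : ℕ} (hk : k ≤ d - 2) :
    ContinuousOn (altDeriv ψ k) (Ioi 0) :=
  (h.altDeriv_properties hk).2.2.continuousOn isOpen_Ioi

theorem tendsto_altDeriv_succ (hψ : IsdMonotoneGenerator d ψ)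
    (hΨ : ∀ n, IsdMonotoneGenerator d (Ψ n)) {k : ℕ} (hk : k < d - 2)
    (hlim : ∀ z : ℝ, 0 < z → Tendsto (fun n => altDeriv (Ψ n) k z) atTop (𝓝 (altDeriv ψ k z)))
    {z : ℝ} (hz : 0 < z) :
    Tendsto (fun n => altDeriv (Ψ n) (k + 1) z) atTop (𝓝 (altDeriv ψ (k + 1) z)) := by
  have hc : ContinuousWithinAt (leftDeriv (altDeriv ψ k)) (Ioi 0) z :=
    ((continuousOn_altDeriv hψ hk).neg z hz).congr
      (fun y hy => hψ.leftDeriv_altDeriv_eq hk hy) (hψ.leftDeriv_altDeriv_eq hk hz)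
  have := tendsto_leftDeriv_of_tendsto (fun n => ((hΨ n).altDeriv_properties hk.le).2.2)
    (hψ.altDeriv_properties hk.le).2.2 hlim hz (fun _ => hz) hc tendsto_const_nhds
  simp only [(hΨ _).leftDeriv_altDeriv_eq hk hz, hψ.leftDeriv_altDeriv_eq hk hz] at this
  simpa using this.neg

/-- For `k ≥ 1`, convergence of the left derivatives of `(-1)^k Ψₙ⁽ᵏ⁾` implies convergence of the
functions themselves: increments converge, and the bound `C z⁻ᵏ` makes the values at a large
argument uniformly small. -/
theorem tendsto_altDeriv_of_leftDeriv (hψ : IsdMonotoneGenerator d ψ)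
    (hΨ : ∀ n, IsdMonotoneGenerator d (Ψ n)) {k : ℕ} (hk1 : 1 ≤ k) (hk : k ≤ d - 2)
    (hlim : ∀ z : ℝ, 0 < z → ContinuousWithinAt (leftDeriv (altDeriv ψ k)) (Ioi 0) z →
      Tendsto (fun n => leftDeriv (altDeriv (Ψ n) k) z) atTop (𝓝 (leftDeriv (altDeriv ψ k) z)))
    {z : ℝ} (hz : 0 < z) :
    Tendsto (fun n => altDeriv (Ψ n) k z) atTop (𝓝 (altDeriv ψ k z)) := by
  obtain ⟨C, hC⟩ := exists_altDeriv_mul_pow_le d k hk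
  rw [Metric.tendsto_atTop']
  intro ε hε
  have hsmall : Tendsto (fun y : ℝ => C / y ^ k) atTop (𝓝 0) :=
    tendsto_const_nhds.div_atTop (tendsto_pow_atTop (by omega))
  obtain ⟨y, hyε, hzy⟩ := ((hsmall.eventually_lt_const (by linarith : (0 : ℝ) < ε / 2)).and
    (eventually_ge_atTop z)).exists
  have hy : 0 < y := hz.trans_le hzy
  have hval : ∀ χ, IsdMonotoneGenerator d χ → 0 ≤ altDeriv χ k y ∧ altDeriv χ k y < ε / 2 :=
    fun χ hχ => ⟨(hχ.altDeriv_properties hk).1 y hy,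
      ((le_div_iff₀ (pow_pos hy k)).2 (hC χ hχ y hy)).trans_lt hyε⟩
  have hinc := tendsto_sub_of_tendsto_leftDeriv
    (fun n => ((hΨ n).altDeriv_properties hk).2.2) (hψ.altDeriv_properties hk).2.2 hlim hz hzy
  obtain ⟨N, hN⟩ := Metric.tendsto_atTop'.1 hinc (ε / 2) (half_pos hε)
  refine ⟨N, fun n hn => ?_⟩
  have h1 := hN n hn
  have h2 := hval ψ hψ
  have h3 := hval _ (hΨ n)
  rw [Real.dist_eq, abs_lt] at h1 ⊢
  constructor <;> linarith

theorem tendsto_leftDeriv_altDeriv (hψ : IsdMonotoneGenerator d ψ)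
    (hΨ : ∀ n, IsdMonotoneGenerator d (Ψ n)) {k : ℕ} (hk : k < d - 2)
    (hlim : ∀ z : ℝ, 0 < z →
      Tendsto (fun n => altDeriv (Ψ n) (k + 1) z) atTop (𝓝 (altDeriv ψ (k + 1) z)))
    {z : ℝ} (hz : 0 < z) :
    Tendsto (fun n => leftDeriv (altDeriv (Ψ n) k) z) atTop (𝓝 (leftDeriv (altDeriv ψ k) z)) := by
  simp only [(hΨ _).leftDeriv_altDeriv_eq hk hz, hψ.leftDeriv_altDeriv_eq hk hz]
  exact (hlim z hz).neg

/-- Convergence at any order descends to order `1`, and from there to order `0` by the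
normalization at `1`. -/
theorem tendsto_of_tendsto_altDeriv (hψ : IsdMonotoneGenerator d ψ)
    (hΨ : ∀ n, IsdMonotoneGenerator d (Ψ n)) (hnorm : ∀ n, Ψ n 1 = ψ 1) {m : ℕ} (hm : m ≤ d - 2)
    (hlim : ∀ z : ℝ, 0 < z → Tendsto (fun n => altDeriv (Ψ n) m z) atTop (𝓝 (altDeriv ψ m z)))
    {z : ℝ} (hz : 0 < z) : Tendsto (fun n => Ψ n z) atTop (𝓝 (ψ z)) := by
  induction m generalizing z with
  | zero => simpa only [altDeriv_zero] using hlim z hz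
  | succ k ih =>
    refine ih (by omega) (fun y hy => ?_) hz
    have hl := fun (z : ℝ) (hz : 0 < z) (_ : ContinuousWithinAt (leftDeriv (altDeriv ψ k)) (Ioi 0) z)
      => tendsto_leftDeriv_altDeriv hψ hΨ hm hlim hz
    rcases Nat.eq_zero_or_pos k with rfl | hk
    · have hinc := fun (x y : ℝ) (hx : 0 < x) (hxy : x ≤ y) => tendsto_sub_of_tendsto_leftDeriv
        (fun n => ((hΨ n).altDeriv_properties (Nat.zero_le _)).2.2)
        (hψ.altDeriv_properties (Nat.zero_le _)).2.2 hl hx hxy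
      simp only [altDeriv_zero] at hinc ⊢
      rcases le_total y 1 with hy1 | hy1
      · simpa [hnorm] using (hinc y 1 hy hy1).const_sub (ψ 1)
      · simpa [hnorm] using (hinc 1 y one_pos hy1).add_const (ψ 1)
    · exact tendsto_altDeriv_of_leftDeriv hψ hΨ hk (by omega) hl hy

end Convergence

/-! ### Uniform convergence of generators -/

/-- Pointwise convergence of generators on `(0,∞)` is uniform on `[0,∞)`, since generators are
monotone and the limit is continuous and vanishes at infinity. -/
theorem IsGenerator.tendstoUniformlyOn {ψ : ℝ → ℝ} {Ψ : ℕ → ℝ → ℝ} (hψ : IsGenerator ψ)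
    (hΨ : ∀ n, IsGenerator (Ψ n))
    (hlim : ∀ z : ℝ, 0 < z → Tendsto (fun n => Ψ n z) atTop (𝓝 (ψ z))) :
    TendstoUniformlyOn Ψ ψ atTop (Ici 0) := by
  have hlim0 : ∀ z : ℝ, 0 ≤ z → Tendsto (fun n => Ψ n z) atTop (𝓝 (ψ z)) := by
    intro z hz
    rcases hz.eq_or_lt with rfl | hz
    · simp [hψ.map_zero, (hΨ _).map_zero]
    · exact hlim z hz
  rw [Metric.tendstoUniformlyOn_iff]
  intro ε hε
  obtain ⟨R, hRε, hR⟩ := ((hψ.tendsto_atTop.eventually_lt_const (half_pos hε)).and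
    (eventually_ge_atTop 0)).exists
  have hcompact : TendstoUniformlyOn Ψ ψ atTop (Icc 0 R) := by
    rw [← tendstoLocallyUniformlyOn_iff_tendstoUniformlyOn_of_compact isCompact_Icc,
      Metric.tendstoLocallyUniformlyOn_iff]
    intro η hη x hx
    obtain ⟨δ, hδ, hball⟩ := Metric.continuousWithinAt_iff.1 (hψ.continuousOn x hx.1) (η / 2)
      (half_pos hη)
    have ha0 : 0 ≤ max (x - δ / 2) 0 := le_max_right _ _
    have hb0 : 0 ≤ x + δ / 2 := by linarith [hx.1]
    have ha := hball (x := max (x - δ / 2) 0) ha0 (by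
      rw [Real.dist_eq, abs_lt]
      have := le_max_left (x - δ / 2) 0
      have := max_le (by linarith : x - δ / 2 ≤ x) hx.1
      constructor <;> linarith)
    have hb := hball (x := x + δ / 2) hb0 (by
      rw [Real.dist_eq, abs_lt]; constructor <;> linarith)
    rw [Real.dist_eq, abs_lt] at ha hb
    refine ⟨Ioo (x - δ / 2) (x + δ / 2) ∩ Icc 0 R, inter_mem (mem_nhdsWithin_of_mem_nhds
      (Ioo_mem_nhds (by linarith) (by linarith))) self_mem_nhdsWithin, ?_⟩
    have hη2 : ψ x - η / 2 < ψ (x + δ / 2) := by linarith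
    filter_upwards [(hlim0 _ hb0).eventually_const_lt hη2,
      (hlim0 _ ha0).eventually_lt_const (by linarith : _ < ψ x + η / 2)]
      with n hnb hna y hy
    obtain ⟨⟨hy1, hy2⟩, hy0, -⟩ := hy
    have hay : max (x - δ / 2) 0 ≤ y := max_le hy1.le hy0
    have h1 := (hΨ n).antitoneOn ha0 hy0 hay
    have h2 := (hΨ n).antitoneOn hy0 hb0 hy2.le
    have h3 := hψ.antitoneOn ha0 hy0 hay
    have h4 := hψ.antitoneOn hy0 hb0 hy2.le
    rw [Real.dist_eq, abs_lt]
    constructor <;> linarith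
  filter_upwards [Metric.tendstoUniformlyOn_iff.1 hcompact ε hε,
    (hlim0 R hR).eventually_lt_const hRε] with n hn hnR y hy
  rcases le_total y R with hyR | hRy
  · exact hn y ⟨hy, hyR⟩
  · have h1 := (hΨ n).antitoneOn hR hy hRy
    have h2 := hψ.antitoneOn hR hy hRy
    have h3 := ((hΨ n).mem_Icc y hy).1
    have h4 := (hψ.mem_Icc y hy).1
    rw [Real.dist_eq, abs_lt]
    constructor <;> linarith

/-- Let `ψ, ψ₁, ψ₂, …` be normalized `d`-monotone generators. Then
uniform convergence `ψₙ → ψ` on `[0,∞)` (i.e. pointwise convergence of the copulas)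
implies pointwise convergence of all derivatives `ψₙ^(m) → ψ^(m)` on `(0,∞)` for
`1 ≤ m ≤ d-2` and of `D⁻ψₙ^(d-2) → D⁻ψ^(d-2)` at continuity points, and in fact
continuous convergence of `D⁻ψₙ^(d-2)`; conversely, pointwise convergence of `ψₙ^(m)`
for some `1 ≤ m ≤ d-2`, as well as convergence of `D⁻ψₙ^(d-2)` at continuity points,
each imply uniform convergence `ψₙ → ψ`. -/
theorem generator_deriv_convergence
    (d : ℕ) (hd : 3 ≤ d) (ψ : ℝ → ℝ) (Ψ : ℕ → ℝ → ℝ)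
    (hψ : IsdMonotoneGenerator d ψ) (hψnorm : ψ 1 = 1 / 2)
    (hΨ : ∀ n, IsdMonotoneGenerator d (Ψ n)) (hΨnorm : ∀ n, Ψ n 1 = 1 / 2) :
    (TendstoUniformlyOn (fun n => Ψ n) ψ atTop (Ici 0) →
      (∀ m : ℕ, 1 ≤ m → m ≤ d - 2 → ∀ z : ℝ, 0 < z →
          Tendsto (fun n => deriv^[m] (Ψ n) z) atTop (𝓝 (deriv^[m] ψ z))) ∧
      (∀ z : ℝ, 0 < z →
          ContinuousWithinAt (leftDeriv (deriv^[d - 2] ψ)) (Ioi 0) z →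
          Tendsto (fun n => leftDeriv (deriv^[d - 2] (Ψ n)) z) atTop
            (𝓝 (leftDeriv (deriv^[d - 2] ψ) z))) ∧
      (∀ (z : ℝ) (zs : ℕ → ℝ), 0 < z → (∀ n, 0 < zs n) →
          ContinuousWithinAt (leftDeriv (deriv^[d - 2] ψ)) (Ioi 0) z →
          Tendsto zs atTop (𝓝 z) →
          Tendsto (fun n => leftDeriv (deriv^[d - 2] (Ψ n)) (zs n)) atTop
            (𝓝 (leftDeriv (deriv^[d - 2] ψ) z)))) ∧
    ((∃ m : ℕ, 1 ≤ m ∧ m ≤ d - 2 ∧ ∀ z : ℝ, 0 < z →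
        Tendsto (fun n => deriv^[m] (Ψ n) z) atTop (𝓝 (deriv^[m] ψ z))) →
      TendstoUniformlyOn (fun n => Ψ n) ψ atTop (Ici 0)) ∧
    ((∀ z : ℝ, 0 < z →
        ContinuousWithinAt (leftDeriv (deriv^[d - 2] ψ)) (Ioi 0) z →
        Tendsto (fun n => leftDeriv (deriv^[d - 2] (Ψ n)) z) atTop
          (𝓝 (leftDeriv (deriv^[d - 2] ψ) z))) →
      TendstoUniformlyOn (fun n => Ψ n) ψ atTop (Ici 0)) := by
  have hunif : (∀ z : ℝ, 0 < z → Tendsto (fun n => Ψ n z) atTop (𝓝 (ψ z))) →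
      TendstoUniformlyOn (fun n => Ψ n) ψ atTop (Ici 0) :=
    hψ.toIsGenerator.tendstoUniformlyOn fun n => (hΨ n).toIsGenerator
  have hnorm : ∀ n, Ψ n 1 = ψ 1 := fun n => (hΨnorm n).trans hψnorm.symm
  have hleft : ∀ (χ : ℝ → ℝ) (z : ℝ), leftDeriv (deriv^[d - 2] χ) z =
      (-1 : ℝ) ^ (d - 2) * leftDeriv (altDeriv χ (d - 2)) z := by
    intro χ z
    rw [leftDeriv_altDeriv, ← mul_assoc, ← mul_pow]
    simp
  have hcont : ∀ z : ℝ, ContinuousWithinAt (leftDeriv (deriv^[d - 2] ψ)) (Ioi 0) z ↔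
      ContinuousWithinAt (leftDeriv (altDeriv ψ (d - 2))) (Ioi 0) z := by
    intro z
    have e1 : leftDeriv (altDeriv ψ (d - 2)) =
        fun z => (-1 : ℝ) ^ (d - 2) * leftDeriv (deriv^[d - 2] ψ) z :=
      funext (leftDeriv_altDeriv ψ (d - 2))
    constructor
    · intro h
      rw [e1]
      exact h.const_mul _
    · intro h
      rw [funext (hleft ψ)]
      exact h.const_mul _
  refine ⟨fun hU => ?_, ?_, ?_⟩
  · have hall : ∀ m : ℕ, m ≤ d - 2 → ∀ z : ℝ, 0 < z →
        Tendsto (fun n => altDeriv (Ψ n) m z) atTop (𝓝 (altDeriv ψ m z)) := by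
      intro m
      induction m with
      | zero =>
        intro _ z hz
        simpa only [altDeriv_zero] using hU.tendsto_at hz.le
      | succ k ih =>
        intro hk z hz
        exact tendsto_altDeriv_succ hψ hΨ hk (ih (by omega)) hz
    have hcc : ∀ (z : ℝ) (zs : ℕ → ℝ), 0 < z → (∀ n, 0 < zs n) →
          ContinuousWithinAt (leftDeriv (deriv^[d - 2] ψ)) (Ioi 0) z →
          Tendsto zs atTop (𝓝 z) →
          Tendsto (fun n => leftDeriv (deriv^[d - 2] (Ψ n)) (zs n)) atTop
            (𝓝 (leftDeriv (deriv^[d - 2] ψ) z)) := by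
      intro z zs hz hzs0 hc hzs
      simp only [hleft]
      exact (tendsto_leftDeriv_of_tendsto (fun n => ((hΨ n).altDeriv_properties le_rfl).2.2)
        (hψ.altDeriv_properties le_rfl).2.2 (hall _ le_rfl) hz hzs0 ((hcont z).1 hc) hzs).const_mul _
    refine ⟨fun m _ hm z hz => ?_, fun z hz hc => ?_, hcc⟩
    · simp only [deriv_eq_altDeriv]
      exact (hall m hm z hz).const_mul _
    · exact hcc z (fun _ => z) hz (fun _ => hz) hc tendsto_const_nhds
  · rintro ⟨m, -, hm, hlim⟩
    exact hunif fun z hz => tendsto_of_tendsto_altDeriv hψ hΨ hnorm hm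
      (fun y hy => (hlim y hy).const_mul _) hz
  · intro hlim
    refine hunif fun z hz => tendsto_of_tendsto_altDeriv hψ hΨ hnorm le_rfl (fun y hy => ?_) hz
    refine tendsto_altDeriv_of_leftDeriv hψ hΨ (by omega) le_rfl (fun w hw hc => ?_) hy
    simp only [leftDeriv_altDeriv]
    exact (hlim w hw ((hcont w).2 hc)).const_mul _
end
end
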